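/- arXiv:2502.00084 — 3 statements merged into one kernel-verified Lean document; each statement's English description precedes it below -/
import Mathlib

section
/- Suppose μ and ν are probability measures on ℝ^d satisfying assumption (A1) with constants α, β > 0, and let φ_0 be a Brenier potential from μ to ν. Then the Brenier map ∇φ_0 is globally Lipschitz with Lipschitz constant at most √(α/β); equivalently, wherever φ_0 is twice differentiable, 0 ≼ ∇²φ_0(x) ≼ √(α/β) I_d. -/
open MeasureTheory Real
open scoped RealInnerProductSpace

/-- The entropic potential associated to a dual function `f`: `φ = ‖·‖²/2 - f`. -/
noncomputable def entPot {d : ℕ} (f : EuclideanSpace ℝ (Fin d) → ℝ) :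
    EuclideanSpace ℝ (Fin d) → ℝ :=
  fun x => ‖x‖ ^ 2 / 2 - f x

/-- `(f, g)` is a Schrödinger pair for `(μ, ν, ε)`: both Schrödinger equations hold, with all
the integrals involved finite (integrable nonnegative integrands) and positive. -/
def IsSchrodingerPair {d : ℕ} (μ ν : Measure (EuclideanSpace ℝ (Fin d))) (ε : ℝ)
    (f g : EuclideanSpace ℝ (Fin d) → ℝ) : Prop :=
  Measurable f ∧ Measurable g ∧
  (∀ x, Integrable (fun y => Real.exp ((g y - ‖x - y‖ ^ 2 / 2) / ε)) ν ∧
    0 < ∫ y, Real.exp ((g y - ‖x - y‖ ^ 2 / 2) / ε) ∂ν ∧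
    f x = -ε * Real.log (∫ y, Real.exp ((g y - ‖x - y‖ ^ 2 / 2) / ε) ∂ν)) ∧
  (∀ y, Integrable (fun x => Real.exp ((f x - ‖y - x‖ ^ 2 / 2) / ε)) μ ∧
    0 < ∫ x, Real.exp ((f x - ‖y - x‖ ^ 2 / 2) / ε) ∂μ ∧
    g y = -ε * Real.log (∫ x, Real.exp ((f x - ‖y - x‖ ^ 2 / 2) / ε) ∂μ))

/-- Assumption (A1): `μ = e^{-V} dx`, `ν = e^{-W} dy` with `V, W` smooth,
`∇²V ≼ α I` and `∇²W ≽ β I` for some `α, β > 0`. -/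
def AssumptionA1 {d : ℕ} (μ ν : Measure (EuclideanSpace ℝ (Fin d)))
    (V W : EuclideanSpace ℝ (Fin d) → ℝ) (α β : ℝ) : Prop :=
  IsProbabilityMeasure μ ∧ IsProbabilityMeasure ν ∧
  μ = volume.withDensity (fun x => ENNReal.ofReal (Real.exp (-V x))) ∧
  ν = volume.withDensity (fun y => ENNReal.ofReal (Real.exp (-W y))) ∧
  ContDiff ℝ (⊤ : ℕ∞) V ∧ ContDiff ℝ (⊤ : ℕ∞) W ∧ 0 < α ∧ 0 < β ∧
  (∀ x v, ⟪fderiv ℝ (fun z => gradient V z) x v, v⟫ ≤ α * ‖v‖ ^ 2) ∧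
  (∀ y v, β * ‖v‖ ^ 2 ≤ ⟪fderiv ℝ (fun z => gradient W z) y v, v⟫)

/-- Assumption (A2): `μ` satisfies a Poincaré inequality. -/
def AssumptionA2 {d : ℕ} (μ : Measure (EuclideanSpace ℝ (Fin d))) : Prop :=
  ∃ CP > (0 : ℝ), ∀ h : EuclideanSpace ℝ (Fin d) → ℝ, ContDiff ℝ (⊤ : ℕ∞) h →
    (∫ x, h x ∂μ) = 0 →
    (∫ x, (h x) ^ 2 ∂μ) ≤ CP * ∫ x, ‖gradient h x‖ ^ 2 ∂μ

/-- Assumption (A3): `μ = e^{-V} dx` has finite differential entropy. -/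
def AssumptionA3 {d : ℕ} (V : EuclideanSpace ℝ (Fin d) → ℝ) : Prop :=
  Integrable (fun x => V x * Real.exp (-V x)) (volume : Measure (EuclideanSpace ℝ (Fin d)))

/-- `φ` is a Brenier potential from `μ` to `ν`: convex, differentiable, and its gradient
pushes `μ` forward to `ν`. -/
def IsBrenierPotential {d : ℕ} (μ ν : Measure (EuclideanSpace ℝ (Fin d)))
    (φ : EuclideanSpace ℝ (Fin d) → ℝ) : Prop :=
  ConvexOn ℝ Set.univ φ ∧ Differentiable ℝ φ ∧
  Measure.map (fun x => gradient φ x) μ = ν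

set_option linter.unusedSectionVars false

namespace Caff
section basic
variable {E : Type*} [NormedAddCommGroup E] [InnerProductSpace ℝ E] [FiniteDimensional ℝ E]

/-- `T` is the gradient of the convex function `φ`. -/
structure IsGrad (φ : E → ℝ) (T : E → E) : Prop where
  grad : ∀ x, HasGradientAt φ (T x) x
  sub : ∀ x z, φ x + ⟪T x, z - x⟫ ≤ φ z

/-- Derivative along a line. -/
lemma hasDerivAt_line {φ : E → ℝ} {T : E → E} (hg : ∀ x, HasGradientAt φ (T x) x) (x u : E)
    (t : ℝ) : HasDerivAt (fun s : ℝ => φ (x + s • u)) ⟪T (x + t • u), u⟫ t := by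
  have h1 : HasDerivAt (fun s : ℝ => x + s • u) u t := by
    simpa using ((hasDerivAt_id t).smul_const u).const_add x
  have := ((hg (x + t • u)).hasFDerivAt).comp_hasDerivAt t h1
  exact this

lemma isGrad_of_convex {φ : E → ℝ} (hc : ConvexOn ℝ Set.univ φ) (hd : Differentiable ℝ φ) :
    IsGrad φ (fun x => gradient φ x) := by
  have hg : ∀ x, HasGradientAt φ (gradient φ x) x := fun x => (hd x).hasGradientAt
  refine ⟨hg, fun x z => ?_⟩
  have hcl : ConvexOn ℝ Set.univ (fun s : ℝ => φ (x + s • (z - x))) := by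
    have := hc.comp_affineMap (AffineMap.lineMap x z)
    have e : (fun s : ℝ => φ (x + s • (z - x))) = φ ∘ (AffineMap.lineMap x z) := by
      funext s
      simp [AffineMap.lineMap_apply, add_comm]
    rw [e]
    exact this
  have hd0 := hasDerivAt_line hg x (z - x) 0
  have := hcl.le_slope_of_hasDerivAt (Set.mem_univ 0) (Set.mem_univ 1) zero_lt_one hd0
  simp only [slope_def_field, zero_smul, add_zero, one_smul, sub_zero, div_one,
    add_sub_cancel] at this
  linarith

lemma IsGrad.mono {φ : E → ℝ} {T : E → E} (h : IsGrad φ T) (x z : E) :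
    0 ≤ ⟪T x - T z, x - z⟫ := by
  have h1 := h.sub x z
  have h2 := h.sub z x
  have h3 : z - x = -(x - z) := by abel
  rw [h3, inner_neg_right] at h1
  rw [inner_sub_left]
  linarith

lemma IsGrad.cont_fun {φ : E → ℝ} {T : E → E} (h : IsGrad φ T) : Continuous φ :=
  continuous_iff_continuousAt.2 fun x => (h.grad x).continuousAt

lemma IsGrad.cont {φ : E → ℝ} {T : E → E} (h : IsGrad φ T) : Continuous T := by
  rw [continuous_iff_continuousAt]
  intro x
  rw [Metric.continuousAt_iff]
  intro ε hε
  have h1 := (hasGradientAt_iff_isLittleO.1 (h.grad x))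
  have h2 := h1.def (c := ε / 4) (by positivity)
  rw [Metric.eventually_nhds_iff] at h2
  obtain ⟨r, hr, h2⟩ := h2
  refine ⟨r / 4, by positivity, fun {x'} hx' => ?_⟩
  by_contra hcon
  push Not at hcon
  set q := T x' - T x with hq
  have hqn : ε ≤ ‖q‖ := by rwa [dist_eq_norm] at hcon
  have hq0 : 0 < ‖q‖ := lt_of_lt_of_le hε hqn
  set u := (r / (2 * ‖q‖)) • q with hu
  have hun : ‖u‖ = r / 2 := by
    rw [hu, norm_smul, Real.norm_of_nonneg (by positivity)]; field_simp
  have hA := h2 (y := x + u) (by simp [hun]; linarith)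
  have hB := h.sub x' (x + u)
  have hC := h.sub x x'
  simp only [add_sub_cancel_left, hun, Real.norm_eq_abs] at hA
  have hA' := (abs_le.1 hA).2
  have hqu : ⟪q, u⟫ = r / 2 * ‖q‖ := by
    rw [hu, inner_smul_right, real_inner_self_eq_norm_sq]; field_simp
  have hcs : ⟪q, x' - x⟫ ≤ ‖q‖ * (r / 4) := by
    refine (real_inner_le_norm _ _).trans ?_
    gcongr
    rw [dist_eq_norm] at hx'; exact hx'.le
  have e1 : ⟪T x', x + u - x'⟫ = ⟪T x, u⟫ - ⟪T x, x' - x⟫ + ⟪q, u⟫ - ⟪q, x' - x⟫ := by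
    rw [hq]; simp only [inner_sub_left, inner_sub_right, inner_add_right]; ring
  nlinarith

/-- Superlinear growth. -/
def SuperLin (φ : E → ℝ) : Prop := ∀ K : ℝ, ∃ C : ℝ, ∀ x, K * ‖x‖ - C ≤ φ x

lemma exists_min_of_superlin {φ : E → ℝ} (hφ : Continuous φ) (hs : SuperLin φ) (c : ℝ)
    (hc : 0 < c) (p : E) :
    ∃ z, ∀ y, c * φ z - ⟪p, z⟫ ≤ c * φ y - ⟪p, y⟫ := by
  have hco : Continuous (fun z => c * φ z - ⟪p, z⟫) := by fun_prop
  obtain ⟨C, hC⟩ := hs ((‖p‖ + 1) / c)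
  have ht : Filter.Tendsto (fun z => c * φ z - ⟪p, z⟫) (Filter.cocompact E) Filter.atTop := by
    have h0 : Filter.Tendsto (fun z : E => ‖z‖ + (- c * C)) (Filter.cocompact E) Filter.atTop :=
      Filter.tendsto_atTop_add_const_right _ _ (tendsto_norm_cocompact_atTop (E := E))
    refine Filter.tendsto_atTop_mono (fun z => ?_) h0
    have h1 := hC z
    have h2 := real_inner_le_norm p z
    have h3 : c * ((‖p‖ + 1) / c * ‖z‖ - C) ≤ c * φ z := by gcongr
    have h4 : c * ((‖p‖ + 1) / c * ‖z‖ - C) = (‖p‖ + 1) * ‖z‖ - c * C := by field_simp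
    linarith
  exact hco.exists_forall_le ht

/-- first order condition at a local min -/
lemma grad_eq_of_min {φ : E → ℝ} {T : E → E} (h : IsGrad φ T) (c : ℝ) (p z : E)
    (hz : ∀ y, c * φ z - ⟪p, z⟫ ≤ c * φ y - ⟪p, y⟫) : c • T z = p := by
  have key : ∀ u, 0 = c * ⟪T z, u⟫ - ⟪p, u⟫ := by
    intro u
    have hd := hasDerivAt_line h.grad z u 0
    have hd2 : HasDerivAt (fun s : ℝ => c * φ (z + s • u) - (⟪p, z⟫ + s * ⟪p, u⟫))
        (c * ⟪T (z + (0:ℝ) • u), u⟫ - ⟪p, u⟫) 0 := by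
      have := (hd.const_mul c).sub (((hasDerivAt_id (0:ℝ)).mul_const ⟪p, u⟫).const_add ⟪p, z⟫)
      rw [one_mul] at this
      exact this
    have hm : IsLocalMin (fun s : ℝ => c * φ (z + s • u) - (⟪p, z⟫ + s * ⟪p, u⟫)) 0 := by
      refine Filter.Eventually.of_forall fun s => ?_
      have := hz (z + s • u)
      rw [inner_add_right, inner_smul_right] at this
      simpa using this
    have := hm.hasDerivAt_eq_zero hd2
    simpa using this.symm
  have : c • T z - p = 0 := by
    rw [← inner_self_eq_zero (𝕜 := ℝ)]
    have := key (c • T z - p)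
    rw [inner_sub_left, inner_smul_left]
    simpa using this.symm
  exact sub_eq_zero.1 this

lemma hess_symm {φ : E → ℝ} {T : E → E} (h : IsGrad φ T) {A : E →L[ℝ] E} {a : E}
    (hA : HasFDerivAt T A a) (u v : E) : ⟪A u, v⟫ = ⟪u, A v⟫ := by
  have h1 : ∀ y, HasFDerivAt φ (InnerProductSpace.toDual ℝ E (T y)) y := fun y => (h.grad y)
  have h2 : HasFDerivAt (fun y => InnerProductSpace.toDual ℝ E (T y))
      (((InnerProductSpace.toDual ℝ E).toContinuousLinearEquiv :
        E ≃L[ℝ] _).toContinuousLinearMap.comp A) a :=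
    ((InnerProductSpace.toDual ℝ E).toContinuousLinearEquiv.toContinuousLinearMap).hasFDerivAt.comp
      a hA
  have := second_derivative_symmetric h1 h2 u v
  simp at this
  rw [this, real_inner_comm]

lemma hess_nonneg {φ : E → ℝ} {T : E → E} (h : IsGrad φ T) {A : E →L[ℝ] E} {a : E}
    (hA : HasFDerivAt T A a) (u : E) : 0 ≤ ⟪A u, u⟫ := by
  have h1 : HasDerivAt (fun s : ℝ => a + s • u) u 0 := by
    simpa using ((hasDerivAt_id (0:ℝ)).smul_const u).const_add a
  have h2 : HasDerivAt (fun s : ℝ => T (a + s • u)) (A u) 0 := by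
    have := HasFDerivAt.comp_hasDerivAt (l := T) (l' := A) (f := fun s : ℝ => a + s • u) (0:ℝ)
      (by simpa using hA) h1
    exact this
  have h3 : HasDerivAt (fun s : ℝ => ⟪T (a + s • u), u⟫) ⟪A u, u⟫ 0 := by
    have := h2.inner ℝ (hasDerivAt_const (0:ℝ) u)
    simpa using this
  have hmono : Monotone (fun s : ℝ => ⟪T (a + s • u), u⟫) := by
    intro s t hst
    rcases hst.eq_or_lt with rfl | hlt
    · exact le_rfl
    have := h.mono (a + t • u) (a + s • u)
    have e : a + t • u - (a + s • u) = (t - s) • u := by rw [sub_smul]; abel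
    rw [e, inner_smul_right, inner_sub_left] at this
    have := nonneg_of_mul_nonneg_right this (by linarith)
    simp only; linarith
  rw [← h3.deriv]
  exact hmono.deriv_nonneg

/-- invertible derivative gives unique preimage -/
lemma inj_of_det {φ : E → ℝ} {T : E → E} (h : IsGrad φ T) {A : E →L[ℝ] E} {a : E}
    (hA : HasFDerivAt T A a) (hdet : A.det ≠ 0) {z : E} (hz : T z = T a) : z = a := by
  -- T is constant along the segment
  set u := z - a with hu
  have hseg : ∀ s ∈ Set.Icc (0:ℝ) 1, T (a + s • u) = T a := by
    intro s hs
    -- φ - ⟪T a, ·⟫ is minimal at a and at z, hence on the segment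
    have hmin : ∀ y, 1 * φ (a + s • u) - ⟪T a, a + s • u⟫ ≤ 1 * φ y - ⟪T a, y⟫ := by
      intro y
      have h1 := h.sub a y
      -- the point w
      have h2 := h.sub (a + s • u) a
      have h3 := h.sub (a + s • u) z
      have h4 := h.sub z a
      have e1 : a - (a + s • u) = - (s • u) := by abel
      have e2 : z - (a + s • u) = (1 - s) • u := by rw [sub_smul, one_smul, hu]; abel
      have e3 : a - z = - u := by rw [hu]; abel
      rw [e1, inner_neg_right, inner_smul_right] at h2
      rw [e2, inner_smul_right] at h3
      rw [e3, inner_neg_right, hz] at h4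
      rw [inner_sub_right] at h1
      rw [inner_add_right, inner_smul_right]
      have h5 : φ (a + s • u) ≤ (1 - s) * φ a + s * φ z := by
        have := mul_le_mul_of_nonneg_left h2 (by linarith [hs.2] : 0 ≤ 1 - s)
        have := mul_le_mul_of_nonneg_left h3 hs.1
        nlinarith
      have := mul_le_mul_of_nonneg_left h4 hs.1
      nlinarith
    simpa using grad_eq_of_min h 1 (T a) _ hmin
  have h1 : HasDerivAt (fun s : ℝ => a + s • u) u 0 := by
    simpa using ((hasDerivAt_id (0:ℝ)).smul_const u).const_add a
  have h2 : HasDerivAt (fun s : ℝ => T (a + s • u)) (A u) 0 := by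
    have := HasFDerivAt.comp_hasDerivAt (l := T) (l' := A) (f := fun s : ℝ => a + s • u) (0:ℝ)
      (by simpa using hA) h1
    exact this
  have h3 : HasDerivWithinAt (fun s : ℝ => T (a + s • u)) 0 (Set.Icc 0 1) 0 := by
    refine (hasDerivWithinAt_const (0:ℝ) (Set.Icc 0 1) (T a)).congr (fun s hs => hseg s hs) ?_
    simp
  have hAu : A u = 0 :=
    (uniqueDiffOn_Icc_zero_one 0 (by simp)).eq_deriv _ h2.hasDerivWithinAt h3
  have hu0 : u = 0 := by
    by_contra hne
    apply hdet
    have : LinearMap.det (A : E →ₗ[ℝ] E) = 0 := by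
      rw [LinearMap.det_eq_zero_iff_ker_ne_bot]
      refine fun hb => hne ?_
      have : u ∈ LinearMap.ker (A : E →ₗ[ℝ] E) := by simpa using hAu
      rw [hb] at this; simpa using this
    exact this
  exact sub_eq_zero.1 hu0

end basic
end Caff

namespace Caff

section det
open scoped MatrixOrder in
lemma det_mid {n : Type*} [Fintype n] [DecidableEq n] {A B : Matrix n n ℝ}
    (hA : A.PosSemidef) (hB : B.PosSemidef) (h0 : A.det ≠ 0) :
    A.det * B.det ≤ ((1 / 2 : ℝ) • (A + B)).det ^ 2 := by
  obtain ⟨C, rfl⟩ := CStarAlgebra.nonneg_iff_eq_star_mul_self.mp hA.nonneg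
  have hC : C.det ≠ 0 := by
    intro h; apply h0; rw [Matrix.det_mul, h, mul_zero]
  have hCu : IsUnit C.det := isUnit_iff_ne_zero.2 hC
  set M := (C⁻¹).conjTranspose * B * C⁻¹ with hM
  have hMp : M.PosSemidef := hB.conjTranspose_mul_mul_same C⁻¹
  have hBM : B = C.conjTranspose * M * C := by
    have h1 : C⁻¹ * C = 1 := Matrix.nonsing_inv_mul C hCu
    have h2 : C.conjTranspose * (C⁻¹).conjTranspose = 1 := by
      rw [← Matrix.conjTranspose_mul, h1, Matrix.conjTranspose_one]
    calc B = 1 * B * 1 := by simp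
      _ = (C.conjTranspose * (C⁻¹).conjTranspose) * B * (C⁻¹ * C) := by rw [h1, h2]
      _ = _ := by rw [hM]; simp only [Matrix.mul_assoc]
  have hdetM : M.det = ∏ i, hMp.1.eigenvalues i := by
    simpa using hMp.1.det_eq_prod_eigenvalues
  have hdet1 : ((1 / 2 : ℝ) • (1 + M)).det = ∏ i, ((1 + hMp.1.eigenvalues i) / 2) := by
    have h1 := Matrix.eval_charpoly M (-1)
    rw [hMp.1.charpoly_eq, Polynomial.eval_prod] at h1
    have h2 : (Matrix.scalar n (-1) - M) = (-2 : ℝ) • ((1 / 2 : ℝ) • (1 + M)) := by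
      rw [smul_smul]
      have : Matrix.scalar n (-1 : ℝ) = -1 := by rw [map_neg, map_one]
      rw [this]; norm_num; abel
    rw [h2, Matrix.det_smul] at h1
    have h3 : ((-2 : ℝ) ^ Fintype.card n) ≠ 0 := by positivity
    apply mul_left_cancel₀ h3
    rw [← h1, ← Finset.card_univ, ← Finset.prod_const, ← Finset.prod_mul_distrib]
    refine Finset.prod_congr rfl fun i _ => ?_
    simp; ring
  have hsum : (1 / 2 : ℝ) • (star C * C + B) = C.conjTranspose * ((1 / 2 : ℝ) • (1 + M)) * C := by
    rw [hBM, Matrix.star_eq_conjTranspose]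
    simp [Matrix.mul_add, Matrix.add_mul, Matrix.mul_assoc]
  rw [hsum, hBM, Matrix.star_eq_conjTranspose]
  simp only [Matrix.det_mul, Matrix.det_conjTranspose, hdetM, hdet1, star_trivial]
  have key : ∏ i, hMp.1.eigenvalues i ≤ (∏ i, ((1 + hMp.1.eigenvalues i) / 2)) ^ 2 := by
    rw [← Finset.prod_pow]
    refine Finset.prod_le_prod (fun i _ => hMp.eigenvalues_nonneg i) fun i _ => ?_
    nlinarith [sq_nonneg (hMp.1.eigenvalues i - 1)]
  have := mul_le_mul_of_nonneg_left key (by positivity : 0 ≤ C.det ^ 4)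
  nlinarith

variable {E : Type*} [NormedAddCommGroup E] [InnerProductSpace ℝ E] [FiniteDimensional ℝ E]

lemma isPositive_of {A : E →L[ℝ] E} (hs : ∀ u v, ⟪A u, v⟫ = ⟪u, A v⟫) (hp : ∀ u, 0 ≤ ⟪A u, u⟫) :
    (A : E →ₗ[ℝ] E).IsPositive :=
  ⟨fun u v => hs u v, fun u => by simpa using hp u⟩

lemma clm_det_nonneg {A : E →L[ℝ] E} (hA : (A : E →ₗ[ℝ] E).IsPositive) : 0 ≤ A.det := by
  have h1 := ((LinearMap.posSemidef_toMatrix_iff (stdOrthonormalBasis ℝ E)).2 hA).det_nonneg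
  rw [LinearMap.det_toMatrix] at h1
  exact h1

lemma clm_det_mid {A B : E →L[ℝ] E} (hA : (A : E →ₗ[ℝ] E).IsPositive)
    (hB : (B : E →ₗ[ℝ] E).IsPositive) (h0 : A.det ≠ 0) :
    A.det * B.det ≤ ((1 / 2 : ℝ) • (A + B)).det ^ 2 := by
  set b := (stdOrthonormalBasis ℝ E).toBasis with hb
  have h1 := (LinearMap.posSemidef_toMatrix_iff (stdOrthonormalBasis ℝ E)).2 hA
  have h2 := (LinearMap.posSemidef_toMatrix_iff (stdOrthonormalBasis ℝ E)).2 hB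
  have h3 := det_mid h1 h2 (by rw [LinearMap.det_toMatrix]; exact h0)
  rw [← map_add, ← map_smul] at h3
  simp only [LinearMap.det_toMatrix] at h3
  exact h3

end det

section aediff
variable {E : Type*} [NormedAddCommGroup E] [InnerProductSpace ℝ E] [FiniteDimensional ℝ E]
  [MeasurableSpace E] [BorelSpace E]

lemma lipschitz_image_null {J : E → E} {K : NNReal} (hJ : LipschitzWith K J)
    (m : Measure E) [m.IsAddHaarMeasure] {s : Set E} (hs : m s = 0) : m (J '' s) = 0 := by
  have h1 : (Measure.hausdorffMeasure (Module.finrank ℝ E) : Measure E) ≪ m :=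
    Measure.absolutelyContinuous_isAddHaarMeasure _ _
  have h2 : m ≪ (Measure.hausdorffMeasure (Module.finrank ℝ E) : Measure E) :=
    Measure.absolutelyContinuous_isAddHaarMeasure _ _
  apply h2
  have := hJ.hausdorffMeasure_image_le (d := Module.finrank ℝ E) (by positivity) s
  rw [h1 hs, mul_zero] at this
  exact nonpos_iff_eq_zero.1 this

lemma ae_diff {φ : E → ℝ} {T : E → E} (h : IsGrad φ T) (hs : SuperLin φ)
    (m : Measure E) [m.IsAddHaarMeasure] : ∀ᵐ x ∂m, DifferentiableAt ℝ T x := by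
  -- surjectivity of `id + T`
  set S : E → E := fun x => x + T x with hS
  have hScont : Continuous S := continuous_id.add h.cont
  have hq : IsGrad (fun x => ‖x‖ ^ 2 / 2 + φ x) S := by
    constructor
    · intro x
      rw [hasGradientAt_iff_hasFDerivAt, hS]
      have h1 := ((hasStrictFDerivAt_norm_sq x).hasFDerivAt).mul_const (1 / 2 : ℝ)
      have h2 := h1.add (h.grad x).hasFDerivAt
      have e1 : (fun x => ‖x‖ ^ 2 / 2 + φ x) = (fun y => ‖y‖ ^ 2 * (1 / 2)) + φ := by
        funext y; simp only [Pi.add_apply]; ring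
      rw [e1]
      refine h2.congr_fderiv ?_
      ext u
      simp [inner_add_left]
    · intro x z
      have h1 := h.sub x z
      have h2 : ‖z‖ ^ 2 = ‖x‖ ^ 2 + 2 * ⟪x, z - x⟫ + ‖z - x‖ ^ 2 := by
        rw [← norm_add_sq_real]; simp
      simp only [hS, inner_add_left]
      nlinarith [sq_nonneg ‖z - x‖]
  have hqs : SuperLin (fun x => ‖x‖ ^ 2 / 2 + φ x) := by
    intro K
    obtain ⟨C, hC⟩ := hs K
    exact ⟨C, fun x => by nlinarith [hC x, sq_nonneg ‖x‖]⟩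
  have hsurj : ∀ p, ∃ z, S z = p := by
    intro p
    obtain ⟨z, hz⟩ := exists_min_of_superlin hq.cont_fun hqs 1 one_pos p
    exact ⟨z, by simpa using grad_eq_of_min hq 1 p z hz⟩
  choose J hJ using hsurj
  have hexp : ∀ x z, ‖x - z‖ ≤ ‖S x - S z‖ := by
    intro x z
    have h1 := h.mono x z
    have h2 : ⟪S x - S z, x - z⟫ = ‖x - z‖ ^ 2 + ⟪T x - T z, x - z⟫ := by
      rw [← real_inner_self_eq_norm_sq, ← inner_add_left]
      congr 1
      simp only [hS]; abel
    have h3 := real_inner_le_norm (S x - S z) (x - z)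
    by_contra hlt
    push Not at hlt
    nlinarith [norm_nonneg (S x - S z), norm_nonneg (x - z)]
  have hJS : ∀ x, J (S x) = x := by
    intro x
    have := hexp (J (S x)) x
    rw [hJ, sub_self, norm_zero] at this
    exact sub_eq_zero.1 (norm_le_zero_iff.1 this)
  have hJl : LipschitzWith 1 J := by
    refine LipschitzWith.of_dist_le_mul fun p q => ?_
    have := hexp (J p) (J q)
    rw [hJ, hJ] at this
    simpa [dist_eq_norm] using this
  have hN : m (J '' {p | ¬ DifferentiableAt ℝ J p}) = 0 :=
    lipschitz_image_null hJl m (hJl.ae_differentiableAt)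
  have hZ : m (J '' {p | DifferentiableAt ℝ J p ∧ (fderiv ℝ J p).det = 0}) = 0 :=
    addHaar_image_eq_zero_of_det_fderivWithin_eq_zero m
      (fun p hp => hp.1.hasFDerivAt.hasFDerivWithinAt) (fun p hp => hp.2)
  have hsub : {x | ¬ DifferentiableAt ℝ T x} ⊆ (J '' {p | ¬ DifferentiableAt ℝ J p}) ∪
      (J '' {p | DifferentiableAt ℝ J p ∧ (fderiv ℝ J p).det = 0}) := by
    intro x hx
    by_contra hcon
    simp only [Set.mem_union, not_or] at hcon
    obtain ⟨hc1, hc2⟩ := hcon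
    have hd : DifferentiableAt ℝ J (S x) := by
      by_contra hnd
      exact hc1 ⟨S x, hnd, hJS x⟩
    have hdet : (fderiv ℝ J (S x)).det ≠ 0 := fun h0 => hc2 ⟨S x, ⟨hd, h0⟩, hJS x⟩
    apply hx
    have hder : HasFDerivAt J
        (((fderiv ℝ J (S x)).toContinuousLinearEquivOfDetNeZero hdet : E ≃L[ℝ] E) : E →L[ℝ] E)
        (S x) := by
      simpa using hd.hasFDerivAt
    have := HasFDerivAt.of_local_left_inverse (g := S) (a := x) hScont.continuousAt hder
      (Filter.Eventually.of_forall hJS)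
    have h2 : DifferentiableAt ℝ (fun y => S y - y) x :=
      this.differentiableAt.sub differentiableAt_id
    have e : (fun y => S y - y) = T := by funext y; simp [hS]
    rwa [e] at h2
  exact measure_mono_null hsub (measure_union_null hN hZ)
end aediff

section taylor
variable {E : Type*} [NormedAddCommGroup E] [InnerProductSpace ℝ E] [FiniteDimensional ℝ E]

lemma taylor_lower {f : E → ℝ} (hf : ContDiff ℝ 2 f) {c : ℝ}
    (hc : ∀ x v, c * ‖v‖ ^ 2 ≤ ⟪fderiv ℝ (fun z => gradient f z) x v, v⟫) (a b : E) :
    f a + ⟪gradient f a, b - a⟫ + c / 2 * ‖b - a‖ ^ 2 ≤ f b := by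
  set u := b - a with hu
  have hg : ∀ x, HasGradientAt f (gradient f x) x := fun x =>
    ((hf.differentiable (by norm_num)) x).hasGradientAt
  have hgd : Differentiable ℝ (fun z => gradient f z) := by
    have h1 : Differentiable ℝ (fderiv ℝ f) :=
      (hf.fderiv_right (m := 1) (by norm_num)).differentiable (by norm_num)
    exact ((InnerProductSpace.toDual ℝ E).symm.toContinuousLinearEquiv.differentiable).comp h1
  have hl := hasDerivAt_line hg a u
  have hl2 : ∀ t : ℝ, HasDerivAt (fun s : ℝ => ⟪gradient f (a + s • u), u⟫)
      ⟪fderiv ℝ (fun z => gradient f z) (a + t • u) u, u⟫ t := by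
    intro t
    have h1 : HasDerivAt (fun s : ℝ => a + s • u) u t := by
      simpa using ((hasDerivAt_id t).smul_const u).const_add a
    have h2 := (hgd (a + t • u)).hasFDerivAt.comp_hasDerivAt t h1
    have := h2.inner ℝ (hasDerivAt_const t u)
    simpa using this
  set g1 : ℝ → ℝ := fun t => ⟪gradient f (a + t • u), u⟫ - ⟪gradient f a, u⟫ - c * t * ‖u‖ ^ 2
    with hg1
  have hg1d : ∀ t, HasDerivAt g1 (⟪fderiv ℝ (fun z => gradient f z) (a + t • u) u, u⟫ -
      c * ‖u‖ ^ 2) t := by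
    intro t
    have := ((hl2 t).sub_const ⟪gradient f a, u⟫).sub
      (((hasDerivAt_id t).const_mul c).mul_const (‖u‖ ^ 2))
    simpa [hg1] using! this
  have hg1m : Monotone g1 := monotone_of_deriv_nonneg (fun t => (hg1d t).differentiableAt)
    fun t => by rw [(hg1d t).deriv]; linarith [hc (a + t • u) u]
  set g0 : ℝ → ℝ := fun t => f (a + t • u) - t * ⟪gradient f a, u⟫ - c / 2 * t ^ 2 * ‖u‖ ^ 2
    with hg0
  have hg0d : ∀ t, HasDerivAt g0 (g1 t) t := by
    intro t
    have := ((hl t).sub ((hasDerivAt_id t).mul_const ⟪gradient f a, u⟫)).sub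
      ((((hasDerivAt_id t).pow 2).const_mul (c / 2)).mul_const (‖u‖ ^ 2))
    refine HasDerivAt.congr_deriv (f := g0) this ?_
    simp only [hg1, id]; push_cast; ring
  have hm : MonotoneOn g0 (Set.Ici 0) := by
    refine monotoneOn_of_deriv_nonneg (convex_Ici 0)
      (fun t _ => (hg0d t).continuousAt.continuousWithinAt)
      (fun t _ => (hg0d t).differentiableAt.differentiableWithinAt) fun t ht => ?_
    rw [(hg0d t).deriv]
    have h0 : g1 0 = 0 := by simp [hg1]
    rw [← h0]
    apply hg1m
    simpa using (interior_subset ht : t ∈ Set.Ici (0:ℝ))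
  have := hm (Set.mem_Ici.2 le_rfl) (Set.mem_Ici.2 zero_le_one) zero_le_one
  simp only [hg0, zero_smul, add_zero, one_smul] at this
  have e : a + u = b := by simp [hu]
  rw [e] at this
  linarith

end taylor
end Caff

namespace Caff
section jac
variable {E : Type*} [NormedAddCommGroup E] [InnerProductSpace ℝ E] [FiniteDimensional ℝ E]
  [MeasurableSpace E] [BorelSpace E]

/-- the density -/
noncomputable def dens (V : E → ℝ) (x : E) : ENNReal := ENNReal.ofReal (Real.exp (-V x))

lemma dens_ne_zero (V : E → ℝ) (x : E) : dens V x ≠ 0 := by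
  simp [dens, Real.exp_pos]

lemma dens_meas {V : E → ℝ} (hV : Continuous V) : Measurable (dens V) := by
  unfold dens; fun_prop

lemma null_of_dens {V : E → ℝ} (hV : Continuous V) (m : Measure E) {s : Set E}
    (hs : m.withDensity (dens V) s = 0) : m s = 0 :=
  withDensity_absolutelyContinuous' (dens_meas hV).aemeasurable
    (Filter.Eventually.of_forall fun x => dens_ne_zero V x) hs

/-- good set -/
def good (T : E → E) : Set E := {x | DifferentiableAt ℝ T x ∧ (fderiv ℝ T x).det ≠ 0}

lemma good_meas (T : E → E) : MeasurableSet (good T) := by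
  have h1 : MeasurableSet {x | DifferentiableAt ℝ T x} := measurableSet_of_differentiableAt ℝ T
  have h2 : Measurable (fun x => (fderiv ℝ T x).det) :=
    (ContinuousLinearMap.continuous_det).measurable.comp (measurable_fderiv ℝ T)
  exact h1.inter ((measurableSet_singleton (0:ℝ)).compl.preimage h2)

lemma good_inj {φ : E → ℝ} {T : E → E} (h : IsGrad φ T) {x z : E} (hx : x ∈ good T)
    (hz : T z = T x) : z = x := inj_of_det h hx.1.hasFDerivAt hx.2 hz

lemma good_injOn {φ : E → ℝ} {T : E → E} (h : IsGrad φ T) (s : Set E) (hs : s ⊆ good T) :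
    Set.InjOn T s := fun _ _ _ hz e => good_inj h (hs hz) e

lemma det_nonneg {φ : E → ℝ} {T : E → E} (h : IsGrad φ T) {x : E} (hx : DifferentiableAt ℝ T x) :
    0 ≤ (fderiv ℝ T x).det :=
  clm_det_nonneg (isPositive_of (hess_symm h hx.hasFDerivAt) (hess_nonneg h hx.hasFDerivAt))

variable {φ : E → ℝ} {T : E → E} (h : IsGrad φ T) (hs : SuperLin φ)
  {V W : E → ℝ} (hV : Continuous V) (hW : Continuous W) (m : Measure E) [m.IsAddHaarMeasure]
  (hmap : (m.withDensity (dens V)).map T = m.withDensity (dens W))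

include h hs hV hmap in
lemma good_ae : m (good T)ᶜ = 0 := by
  set Z := {x | DifferentiableAt ℝ T x ∧ (fderiv ℝ T x).det = 0} with hZ
  have h1 : m (T '' Z) = 0 := addHaar_image_eq_zero_of_det_fderivWithin_eq_zero m
      (fun p hp => hp.1.hasFDerivAt.hasFDerivWithinAt) (fun p hp => hp.2)
  have h2 : (m.withDensity (dens W)) (T '' Z) = 0 := withDensity_absolutelyContinuous _ _ h1
  rw [← hmap] at h2
  have h3 : (m.withDensity (dens V)) (T ⁻¹' (T '' Z)) = 0 :=
    Measure.preimage_null_of_map_null h.cont.measurable.aemeasurable h2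
  have h4 : m Z = 0 := null_of_dens hV m (measure_mono_null (Set.subset_preimage_image T Z) h3)
  have h5 := ae_diff h hs m
  refine measure_mono_null ?_ (measure_union_null h4 h5)
  intro x hx
  by_cases hd : DifferentiableAt ℝ T x
  · left
    refine ⟨hd, ?_⟩
    by_contra h0
    exact hx ⟨hd, h0⟩
  · right; exact hd

include h hs hV hW hmap in
lemma jac : ∀ᵐ x ∂m, x ∈ good T ∧ 0 < (fderiv ℝ T x).det ∧
    (fderiv ℝ T x).det * Real.exp (-W (T x)) = Real.exp (-V x) := by
  have hG : ∀ᵐ x ∂m, x ∈ good T := good_ae h hs hV m hmap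
  have hdetm : Measurable (fun x => (fderiv ℝ T x).det) :=
    (ContinuousLinearMap.continuous_det).measurable.comp (measurable_fderiv ℝ T)
  have hWT : Measurable (fun x => dens W (T x)) := (dens_meas hW).comp h.cont.measurable
  have hae : (fun x => ENNReal.ofReal |(fderiv ℝ T x).det| * dens W (T x)) =ᵐ[m] dens V := by
    refine ae_eq_of_forall_setLIntegral_eq_of_sigmaFinite (by fun_prop) (dens_meas hV) ?_
    intro s hs' _
    have hsG : MeasurableSet (s ∩ good T) := hs'.inter (good_meas T)
    have e1 : ∀ f : E → ENNReal, ∫⁻ x in s, f x ∂m = ∫⁻ x in s ∩ good T, f x ∂m := by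
      intro f
      refine (setLIntegral_congr ?_).symm
      exact Filter.EventuallyEq.trans
        (Filter.EventuallyEq.inter (Filter.EventuallyEq.refl _ s)
          (Filter.eventuallyEq_univ.2 hG)) (by rw [Set.inter_univ]; exact Filter.EventuallyEq.refl _ _)
    rw [e1, e1]
    have hf' : ∀ x ∈ s ∩ good T, HasFDerivWithinAt T (fderiv ℝ T x) (s ∩ good T) x :=
      fun x hx => hx.2.1.hasFDerivAt.hasFDerivWithinAt
    have hinj := good_injOn h (s ∩ good T) Set.inter_subset_right
    have hmi : MeasurableSet (T '' (s ∩ good T)) :=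
      measurable_image_of_fderivWithin hsG hf' hinj
    rw [← lintegral_image_eq_lintegral_abs_det_fderiv_mul m hsG hf' hinj (dens W),
      ← withDensity_apply _ hmi, ← withDensity_apply _ hsG, ← hmap,
      Measure.map_apply h.cont.measurable hmi]
    congr 1
    ext x
    constructor
    · rintro ⟨z, hz, hzx⟩
      rw [good_inj h hz.2 hzx.symm]; exact hz
    · intro hx; exact ⟨x, hx, rfl⟩
  filter_upwards [hG, hae] with x hx hx2
  have hd := det_nonneg h hx.1
  refine ⟨hx, lt_of_le_of_ne hd (Ne.symm hx.2), ?_⟩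
  rw [abs_of_nonneg hd] at hx2
  unfold dens at hx2
  rw [← ENNReal.ofReal_mul hd, ENNReal.ofReal_eq_ofReal_iff (by positivity) (by positivity)] at hx2
  exact hx2

include h hs hV hW hmap in
lemma image_le {Ω : Set E} (hΩ : MeasurableSet Ω) :
    m (T '' Ω) ≤ ∫⁻ x in Ω, ENNReal.ofReal (fderiv ℝ T x).det ∂m := by
  have hG := good_ae h hs hV m hmap
  have hmi : MeasurableSet (T '' good T) :=
      measurable_image_of_fderivWithin (good_meas T)
        (fun x hx => hx.1.hasFDerivAt.hasFDerivWithinAt) (good_injOn h _ le_rfl)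
  have h0 : m (T '' good T)ᶜ = 0 := by
    apply null_of_dens hW m
    rw [← hmap, Measure.map_apply h.cont.measurable hmi.compl]
    refine measure_mono_null (t := (good T)ᶜ) ?_ (withDensity_absolutelyContinuous _ _ hG)
    intro x hx hxg
    exact hx ⟨x, hxg, rfl⟩
  have hsub : T '' Ω ⊆ T '' (Ω ∩ good T) ∪ (T '' good T)ᶜ := by
    rintro _ ⟨x, hx, rfl⟩
    by_cases hm : T x ∈ T '' good T
    · obtain ⟨g, hg, hgx⟩ := hm
      left
      have := good_inj h hg hgx.symm
      subst this
      exact ⟨x, ⟨hx, hg⟩, rfl⟩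
    · right; exact hm
  calc m (T '' Ω) ≤ m (T '' (Ω ∩ good T)) + m (T '' good T)ᶜ :=
        (measure_mono hsub).trans (measure_union_le _ _)
    _ = m (T '' (Ω ∩ good T)) := by rw [h0, add_zero]
    _ ≤ ∫⁻ x in Ω ∩ good T, ENNReal.ofReal |(fderiv ℝ T x).det| ∂m :=
        addHaar_image_le_lintegral_abs_det_fderiv m (hΩ.inter (good_meas T))
          (fun x hx => hx.2.1.hasFDerivAt.hasFDerivWithinAt)
    _ = ∫⁻ x in Ω ∩ good T, ENNReal.ofReal (fderiv ℝ T x).det ∂m := by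
        refine setLIntegral_congr_fun (hΩ.inter (good_meas T)) fun x hx => ?_
        simp only [abs_of_nonneg (det_nonneg h hx.2.1)]
    _ ≤ _ := lintegral_mono_set Set.inter_subset_left

end jac
end Caff

namespace Caff
section growth
variable {E : Type*} [NormedAddCommGroup E] [InnerProductSpace ℝ E] [FiniteDimensional ℝ E]
  [MeasurableSpace E] [BorelSpace E]

variable {φ : E → ℝ} {T : E → E} (h : IsGrad φ T) 
  {V W : E → ℝ} (hV : Continuous V) (hW : Continuous W) (m : Measure E) [m.IsAddHaarMeasure]
  (hmap : (m.withDensity (dens V)).map T = m.withDensity (dens W))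

include h hW hmap in
lemma range_dense (y : E) {r : ℝ} (hr : 0 < r) : ∃ x, ‖T x - y‖ < r := by
  by_contra hcon
  push Not at hcon
  have h1 : T ⁻¹' (Metric.ball y r) = ∅ := by
    ext x
    simp only [Set.mem_preimage, Metric.mem_ball, dist_eq_norm, Set.mem_empty_iff_false, iff_false,
      not_lt]
    exact hcon x
  have h2 : m.withDensity (dens W) (Metric.ball y r) = 0 := by
    rw [← hmap, Measure.map_apply h.cont.measurable measurableSet_ball, h1, measure_empty]
  have h3 := null_of_dens hW m h2
  exact (Metric.measure_ball_pos m y hr).ne' h3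

include h hW hmap in
lemma superlin : SuperLin φ := by
  intro K
  set K' := max K 1 with hK'
  have hK1 : 1 ≤ K' := le_max_right _ _
  choose g hg using fun y => range_dense h hW m hmap y (r := 1 / 2) (by norm_num)
  obtain ⟨t, -, htf, htc⟩ := finite_cover_balls_of_compact
    (isCompact_closedBall (0 : E) (2 * K')) (e := 1 / 2) (by norm_num)
  set F := htf.toFinset with hF
  refine ⟨∑ c ∈ F, |φ (g c) - ⟪T (g c), g c⟫|, fun x => ?_⟩
  set p := (2 * K') • (‖x‖⁻¹ • x) with hp
  have hpx : ⟪p, x⟫ = 2 * K' * ‖x‖ := by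
    rw [hp, inner_smul_left, inner_smul_left, real_inner_self_eq_norm_sq]
    rcases eq_or_ne ‖x‖ 0 with h0 | h0
    · simp [h0]
    · simp only [conj_trivial]; field_simp
  have hpn : p ∈ Metric.closedBall (0:E) (2 * K') := by
    rw [mem_closedBall_zero_iff, hp, norm_smul, norm_smul, norm_inv, norm_norm,
      Real.norm_of_nonneg (by linarith)]
    have : ‖x‖⁻¹ * ‖x‖ ≤ 1 := inv_mul_le_one
    nlinarith
  obtain ⟨c, hc, hpc⟩ : ∃ c ∈ t, p ∈ Metric.ball c (1 / 2) := by
    simpa using htc hpn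
  have h1 := h.sub (g c) x
  have h2 : |φ (g c) - ⟪T (g c), g c⟫| ≤ ∑ c ∈ F, |φ (g c) - ⟪T (g c), g c⟫| :=
    Finset.single_le_sum (f := fun c => |φ (g c) - ⟪T (g c), g c⟫|) (fun i _ => abs_nonneg _)
      (by simpa [hF] using hc)
  have h3 := neg_abs_le (φ (g c) - ⟪T (g c), g c⟫)
  have h4 : ‖p - T (g c)‖ ≤ 1 := by
    have a1 := hg c
    rw [Metric.mem_ball, dist_eq_norm] at hpc
    calc ‖p - T (g c)‖ = ‖(p - c) - (T (g c) - c)‖ := by congr 1; abel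
      _ ≤ ‖p - c‖ + ‖T (g c) - c‖ := norm_sub_le _ _
      _ ≤ 1 := by linarith
  have h5 := real_inner_le_norm (p - T (g c)) x
  rw [inner_sub_left, hpx] at h5
  rw [inner_sub_right] at h1
  have h6 : K ≤ K' := le_max_left _ _
  have h7 : 0 ≤ ‖x‖ := norm_nonneg x
  nlinarith

include h hV hW hmap in
lemma lin_growth {cV cW b : ℝ} (hcV : 0 ≤ cV) (hb : 0 < b) (hVq : ∀ x, V x ≤ cV * (1 + ‖x‖ ^ 2))
    (hWq : ∀ y, b * ‖y‖ ^ 2 - cW ≤ W y)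
    (hI : ∫⁻ y, ENNReal.ofReal (Real.exp (-(b / 2) * ‖y‖ ^ 2)) ∂m < ⊤) :
    ∃ C, 0 ≤ C ∧ ∀ x, ‖T x‖ ≤ C * (1 + ‖x‖) := by
  set I := ∫⁻ y, ENNReal.ofReal (Real.exp (-(b / 2) * ‖y‖ ^ 2)) ∂m with hIdef
  set m1 := (m (Metric.ball (0:E) 1)).toReal with hm1
  have hm1fin : m (Metric.ball (0:E) 1) ≠ ⊤ := measure_ball_lt_top.ne
  have hm1pos : 0 < m1 := ENNReal.toReal_pos (Metric.measure_ball_pos m 0 one_pos).ne' hm1fin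
  have key : ∀ x, Real.exp (-(cV * (1 + (‖x‖ + 3) ^ 2))) * m1 ≤
      Real.exp (cW - b / 2 * (‖T x‖ / 3) ^ 2) * I.toReal := by
    intro x
    set R := ‖T x‖ with hR
    set e := R⁻¹ • T x with he
    have hTe : ⟪T x, e⟫ = R := by
      rw [he, inner_smul_right, real_inner_self_eq_norm_sq, ← hR]
      rcases eq_or_ne R 0 with h0 | h0
      · simp [h0]
      · field_simp
    have hen : ‖e‖ ≤ 1 := by
      rw [he, norm_smul, norm_inv, hR, norm_norm]; exact inv_mul_le_one
    have hsub : Metric.ball (x + (2:ℝ) • e) 1 ⊆ T ⁻¹' {y | R / 3 ≤ ‖y‖} := by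
      intro z hz
      set w := z - (x + (2:ℝ) • e) with hw
      have hwn : ‖w‖ < 1 := by rwa [Metric.mem_ball, dist_eq_norm] at hz
      have e1 : z - x = (2:ℝ) • e + w := by rw [hw]; abel
      have h1 := h.mono z x
      rw [e1, inner_sub_left, inner_add_right (T x), inner_smul_right, hTe] at h1
      have h2 := neg_le_of_abs_le (abs_real_inner_le_norm (T x) w)
      have h3 := real_inner_le_norm (T z) ((2:ℝ) • e + w)
      have h4 : ‖(2:ℝ) • e + w‖ ≤ 3 := by
        refine (norm_add_le _ _).trans ?_
        rw [norm_smul, Real.norm_of_nonneg (by norm_num)]; linarith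
      rw [Set.mem_preimage, Set.mem_setOf_eq]
      have h5 : 0 ≤ R := norm_nonneg _
      have h6 := norm_nonneg (T z)
      nlinarith
    have hmeas : MeasurableSet {y : E | R / 3 ≤ ‖y‖} :=
      measurableSet_le measurable_const measurable_norm
    have hlow : ENNReal.ofReal (Real.exp (-(cV * (1 + (‖x‖ + 3) ^ 2)))) * m (Metric.ball (0:E) 1) ≤
        (m.withDensity (dens V)) (Metric.ball (x + (2:ℝ) • e) 1) := by
      rw [withDensity_apply _ measurableSet_ball, ← Measure.addHaar_ball_center m (x + (2:ℝ) • e),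
        ← setLIntegral_const]
      refine setLIntegral_mono (dens_meas hV) fun z hz => ?_
      unfold dens
      gcongr
      refine (hVq z).trans ?_
      have : ‖z‖ ≤ ‖x‖ + 3 := by
        rw [Metric.mem_ball, dist_eq_norm] at hz
        calc ‖z‖ = ‖(z - (x + (2:ℝ) • e)) + (x + (2:ℝ) • e)‖ := by simp
          _ ≤ ‖z - (x + (2:ℝ) • e)‖ + (‖x‖ + ‖(2:ℝ) • e‖) :=
            (norm_add_le _ _).trans (by gcongr; exact norm_add_le _ _)
          _ ≤ _ := by rw [norm_smul, Real.norm_of_nonneg (by norm_num)]; linarith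
      gcongr
    have hup : (m.withDensity (dens W)) {y : E | R / 3 ≤ ‖y‖} ≤
        ENNReal.ofReal (Real.exp (cW - b / 2 * (R / 3) ^ 2)) * I := by
      rw [withDensity_apply _ hmeas, hIdef, ← lintegral_const_mul _ (by fun_prop)]
      refine (setLIntegral_mono (by fun_prop) fun z hz => ?_).trans (setLIntegral_le_lintegral _ _)
      unfold dens
      rw [← ENNReal.ofReal_mul (by positivity), ← Real.exp_add]
      gcongr
      have h1 := hWq z
      have h2 : (R / 3) ^ 2 ≤ ‖z‖ ^ 2 := by
        have : 0 ≤ R := norm_nonneg _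
        gcongr; exact hz
      nlinarith
    have h3 := (hlow.trans (measure_mono hsub)).trans_eq (Measure.map_apply h.cont.measurable hmeas).symm
    rw [hmap] at h3
    have h4 := h3.trans hup
    have h5 := ENNReal.toReal_mono (ENNReal.mul_ne_top ENNReal.ofReal_ne_top hI.ne) h4
    rwa [ENNReal.toReal_mul, ENNReal.toReal_mul, ENNReal.toReal_ofReal (by positivity),
      ENNReal.toReal_ofReal (by positivity)] at h5
  have hIpos : 0 < I.toReal := by
    by_contra hc
    have h1 := key 0
    have h2 := (mul_pos (Real.exp_pos (-(cV * (1 + (‖(0:E)‖ + 3) ^ 2)))) hm1pos).trans_le h1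
    exact hc (pos_of_mul_pos_right h2 (Real.exp_pos _).le)
  set A := (18 / b) * (|cW| + |Real.log I.toReal| + |Real.log m1| + 10 * cV) with hA
  have hA0 : 0 ≤ A := by positivity
  refine ⟨Real.sqrt A, Real.sqrt_nonneg _, fun x => ?_⟩
  have h1 := Real.log_le_log (mul_pos (Real.exp_pos _) hm1pos) (key x)
  rw [Real.log_mul (Real.exp_pos _).ne' hm1pos.ne', Real.log_mul (Real.exp_pos _).ne' hIpos.ne',
    Real.log_exp, Real.log_exp] at h1
  have h2 : ‖T x‖ ^ 2 ≤ A * (1 + ‖x‖) ^ 2 := by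
    set P := |cW| + |Real.log I.toReal| + |Real.log m1| with hP
    have hP0 : 0 ≤ P := by positivity
    have e1 : cW + Real.log I.toReal - Real.log m1 ≤ P := by
      have := le_abs_self cW
      have := le_abs_self (Real.log I.toReal)
      have := neg_abs_le (Real.log m1)
      linarith
    have hx := norm_nonneg x
    have e2 : b / 18 * ‖T x‖ ^ 2 ≤ (P + 10 * cV) * (1 + ‖x‖) ^ 2 := by
      have q1 : 1 + (‖x‖ + 3) ^ 2 ≤ 10 * (1 + ‖x‖) ^ 2 := by nlinarith
      have q2 : (1:ℝ) ≤ (1 + ‖x‖) ^ 2 := by nlinarith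
      have q3 := mul_le_mul_of_nonneg_left q1 hcV
      have q4 := mul_le_mul_of_nonneg_left q2 hP0
      nlinarith
    have e3 : ‖T x‖ ^ 2 = 18 / b * (b / 18 * ‖T x‖ ^ 2) := by field_simp
    rw [e3, hA, mul_assoc]
    gcongr
  rw [← Real.sqrt_sq (norm_nonneg (T x)), ← Real.sqrt_sq (by positivity : 0 ≤ 1 + ‖x‖),
    ← Real.sqrt_mul hA0]
  exact Real.sqrt_le_sqrt h2

end growth
end Caff

namespace Caff
section touch
variable {E : Type*} [NormedAddCommGroup E] [InnerProductSpace ℝ E] [FiniteDimensional ℝ E]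

lemma isGrad_mid {φ : E → ℝ} {T : E → E} (h : IsGrad φ T) (k : E) :
    IsGrad (fun z => (φ (z + k) + φ (z - k)) / 2)
      (fun z => (1 / 2 : ℝ) • (T (z + k) + T (z - k))) := by
  constructor
  · intro x
    rw [hasGradientAt_iff_hasFDerivAt]
    have h1 : HasFDerivAt (fun z => φ (z + k)) _ x :=
      HasFDerivAt.comp x (h.grad (x + k)).hasFDerivAt ((hasFDerivAt_id x).add_const k)
    have h2 : HasFDerivAt (fun z => φ (z - k)) _ x :=
      HasFDerivAt.comp x (h.grad (x - k)).hasFDerivAt ((hasFDerivAt_id x).sub_const k)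
    have h3 := (h1.add h2).mul_const (1 / 2 : ℝ)
    have e : (fun z => (φ (z + k) + φ (z - k)) / 2) =
        fun z => (((fun z => φ (z + k)) + (fun z => φ (z - k))) z) * (1 / 2) := by
      funext z; simp only [Pi.add_apply]; ring
    rw [e]
    refine h3.congr_fderiv ?_
    ext u
    simp
  · intro x z
    have h1 := h.sub (x + k) (z + k)
    have h2 := h.sub (x - k) (z - k)
    rw [add_sub_add_right_eq_sub] at h1
    rw [sub_sub_sub_cancel_right] at h2
    simp only [inner_smul_left, inner_add_left, conj_trivial]
    linarith

lemma touch_setup {φ : E → ℝ} {T : E → E} (h : IsGrad φ T) (hs : SuperLin φ)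
    {W : E → ℝ} (hW : Continuous W) {κ c0 : ℝ} (hκ : 0 ≤ κ) {k x0 : E}
    (hle : ∀ z, (φ (z + k) + φ (z - k)) / 2 ≤ (1 + κ) * φ z + c0)
    (heq : (φ (x0 + k) + φ (x0 - k)) / 2 = (1 + κ) * φ x0 + c0)
    {η ρ : ℝ} (hη : 0 < η) (hρ0 : 0 < ρ) (hρ1 : ρ < 1) :
    ∃ Ω : Set E, IsOpen Ω ∧ x0 ∈ Ω ∧ Bornology.IsBounded Ω ∧
      (∀ z ∈ Ω, (W (T (x0 + k)) + W (T (x0 - k))) / 2 - W (T x0) - η <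
        (W (T (z + k)) + W (T (z - k))) / 2 - W (T z)) ∧
      ∃ q : E, ∀ z1 ∈ Ω, ∃ z2 ∈ Ω,
        T z2 = (ρ / (1 + κ)) • ((1 / 2 : ℝ) • (T (z1 + k) + T (z1 - k))) + q := by
  have hκ1 : 0 < 1 + κ := by linarith
  have hT := h.cont
  have hφ := h.cont_fun
  set v : E → ℝ := fun z => (φ (z + k) + φ (z - k)) / 2 with hv
  set S : E → E := fun z => (1 / 2 : ℝ) • (T (z + k) + T (z - k)) with hS
  have hvS : IsGrad v S := isGrad_mid h k
  have hvc : Continuous v := hvS.cont_fun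
  set p := S x0 with hp
  have hminx0 : ∀ y, (1 + κ) * φ x0 - ⟪p, x0⟫ ≤ (1 + κ) * φ y - ⟪p, y⟫ := by
    intro y
    have h1 := hvS.sub x0 y
    have h2 := hle y
    rw [inner_sub_right] at h1
    simp only [hv] at h1 
    linarith
  have hTx0 : (1 + κ) • T x0 = p := grad_eq_of_min h (1 + κ) p x0 hminx0
  -- shifted functions
  set w' : E → ℝ := fun z => (1 + κ) * φ z - ⟪p, z⟫ - ((1 + κ) * φ x0 - ⟪p, x0⟫) with hw'
  set v' : E → ℝ := fun z => v z - ⟪p, z⟫ - (v x0 - ⟪p, x0⟫) with hv'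
  have hw'c : Continuous w' := by simp only [hw']; fun_prop
  have hv'c : Continuous v' := by simp only [hv']; fun_prop
  have hv'0 : ∀ z, 0 ≤ v' z := by
    intro z
    have h1 := hvS.sub x0 z
    rw [inner_sub_right] at h1
    simp only [hv']; linarith
  have hvw : ∀ z, v' z ≤ w' z := by
    intro z
    have h1 := hle z
    simp only [hv', hw', hv]; linarith
  set e1 : E → ℝ := fun z => (W (T (z + k)) + W (T (z - k))) / 2 - W (T z) with he1
  have he1c : Continuous e1 := by simp only [he1]; fun_prop
  have he1z : ∀ z, w' z ≤ 0 → e1 z = e1 x0 := by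
    intro z hz
    have hz0 : v' z ≤ 0 := (hvw z).trans hz
    have a1 : T z = T x0 := by
      have : (1 + κ) • T z = p := by
        refine grad_eq_of_min h (1 + κ) p z fun y => ?_
        have := hminx0 y
        simp only [hw'] at hz
        linarith
      rw [← hTx0] at this
      exact smul_right_injective E hκ1.ne' this
    have b1 := h.sub (x0 + k) (z + k)
    have b2 := h.sub (x0 - k) (z - k)
    rw [add_sub_add_right_eq_sub] at b1
    rw [sub_sub_sub_cancel_right] at b2
    have b3 : ⟪p, z⟫ - ⟪p, x0⟫ = (⟪T (x0 + k), z - x0⟫ + ⟪T (x0 - k), z - x0⟫) / 2 := by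
      rw [← inner_sub_right, hp, hS]
      simp only [inner_smul_left, inner_add_left, conj_trivial]
      ring
    have b4 : v z - ⟪p, z⟫ - (v x0 - ⟪p, x0⟫) ≤ 0 := hz0
    simp only [hv] at b4
    have a2 : T (z + k) = T (x0 + k) := by
      have : (1:ℝ) • T (z + k) = T (x0 + k) := by
        refine grad_eq_of_min h 1 _ _ fun y => ?_
        have := h.sub (x0 + k) y
        have e : ⟪T (x0 + k), y - (x0 + k)⟫ =
            ⟪T (x0 + k), y⟫ - ⟪T (x0 + k), z + k⟫ + ⟪T (x0 + k), z - x0⟫ := by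
          simp only [inner_sub_right, inner_add_right]; ring
        rw [e] at this
        linarith
      rwa [one_smul] at this
    have a3 : T (z - k) = T (x0 - k) := by
      have : (1:ℝ) • T (z - k) = T (x0 - k) := by
        refine grad_eq_of_min h 1 _ _ fun y => ?_
        have := h.sub (x0 - k) y
        have e : ⟪T (x0 - k), y - (x0 - k)⟫ =
            ⟪T (x0 - k), y⟫ - ⟪T (x0 - k), z - k⟫ + ⟪T (x0 - k), z - x0⟫ := by
          simp only [inner_sub_right]; ring
        rw [e] at this
        linarith
      rwa [one_smul] at this
    simp only [he1, a1, a2, a3]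
  -- boundedness of sections
  have hbdd : ∀ t, Bornology.IsBounded {z | w' z ≤ t} := by
    intro t
    obtain ⟨C, hC⟩ := hs ((‖p‖ + 1) / (1 + κ))
    refine (Metric.isBounded_iff_subset_closedBall 0).2
      ⟨t + (1 + κ) * C + ((1 + κ) * φ x0 - ⟪p, x0⟫), fun z hz => ?_⟩
    rw [mem_closedBall_zero_iff]
    have h1 : w' z ≤ t := hz
    simp only [hw'] at h1
    have h2 := real_inner_le_norm p z
    have h3 := mul_le_mul_of_nonneg_left (hC z) hκ1.le
    have h4 : (1 + κ) * ((‖p‖ + 1) / (1 + κ) * ‖z‖ - C) = (‖p‖ + 1) * ‖z‖ - (1 + κ) * C := by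
      field_simp
    linarith
  obtain ⟨t, ht0, ht⟩ : ∃ t > 0, ∀ z, w' z ≤ t → e1 x0 - η < e1 z := by
    set Kc := {z | w' z ≤ 1} ∩ {z | e1 z ≤ e1 x0 - η} with hKc
    have hcomp : IsCompact Kc := by
      refine Metric.isCompact_of_isClosed_isBounded ?_ ((hbdd 1).subset Set.inter_subset_left)
      exact (isClosed_le hw'c continuous_const).inter (isClosed_le he1c continuous_const)
    rcases Kc.eq_empty_or_nonempty with hem | hne
    · refine ⟨1, one_pos, fun z hz => ?_⟩
      by_contra hcon
      push Not at hcon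
      have : z ∈ Kc := ⟨hz, hcon⟩
      rw [hem] at this; exact this
    · obtain ⟨zs, hzs, hmin⟩ := hcomp.exists_isMinOn hne hw'c.continuousOn
      have hpos : 0 < w' zs := by
        by_contra hcon
        push Not at hcon
        have := he1z zs hcon
        have h2 : e1 zs ≤ e1 x0 - η := hzs.2
        linarith
      refine ⟨min 1 (w' zs / 2), by positivity, fun z hz => ?_⟩
      by_contra hcon
      push Not at hcon
      have hzK : z ∈ Kc := ⟨hz.trans (min_le_left _ _), hcon⟩
      have h1 : w' zs ≤ w' z := hmin hzK
      have h2 := hz.trans (min_le_right _ _)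
      linarith
  set Ω := {z | w' z < ρ * v' z + (1 - ρ) * t} with hΩ
  have hΩt : ∀ z ∈ Ω, w' z < t := by
    intro z hz
    have h1 : w' z < ρ * v' z + (1 - ρ) * t := hz
    have h2 := mul_le_mul_of_nonneg_left (hvw z) hρ0.le
    have h3 : (1 - ρ) * w' z < (1 - ρ) * t := by linarith
    exact lt_of_mul_lt_mul_left h3 (by linarith)
  refine ⟨Ω, isOpen_lt hw'c (by fun_prop), ?_, (hbdd t).subset fun z hz => (hΩt z hz).le,
    fun z hz => ht z (hΩt z hz).le, ((1 - ρ) / (1 + κ)) • p, fun z1 hz1 => ?_⟩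
  · have a : w' x0 = 0 := by simp [hw']
    have b : v' x0 = 0 := by simp [hv']
    simp only [hΩ, Set.mem_setOf_eq, a, b]
    nlinarith
  · set p' := ρ • S z1 + (1 - ρ) • p with hp'
    obtain ⟨z2, hz2⟩ := exists_min_of_superlin hφ hs (1 + κ) hκ1 p'
    have hTz2 := grad_eq_of_min h (1 + κ) p' z2 hz2
    refine ⟨z2, ?_, ?_⟩
    · have h1 : w' z1 < ρ * v' z1 + (1 - ρ) * t := hz1
      have h2 := hz2 z1
      have h3 := mul_le_mul_of_nonneg_left (hvS.sub z1 z2) hρ0.le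
      simp only [hp', inner_add_left, inner_smul_left, conj_trivial] at h2
      rw [inner_sub_right] at h3
      change w' z2 < ρ * v' z2 + (1 - ρ) * t
      simp only [hw', hv'] at h1 ⊢
      linarith
    · have : T z2 = (1 + κ)⁻¹ • ((1 + κ) • T z2) := by
        rw [smul_smul, inv_mul_cancel₀ hκ1.ne', one_smul]
      rw [this, hTz2, hp']
      change (1 + κ)⁻¹ • (ρ • S z1 + (1 - ρ) • p) =
        (ρ / (1 + κ)) • S z1 + ((1 - ρ) / (1 + κ)) • p
      rw [div_eq_inv_mul, div_eq_inv_mul, mul_smul, mul_smul, smul_add]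

end touch
end Caff

namespace Caff
section vol
variable {E : Type*} [NormedAddCommGroup E] [InnerProductSpace ℝ E] [FiniteDimensional ℝ E]
  [MeasurableSpace E] [BorelSpace E]

variable {φ : E → ℝ} {T : E → E} (h : IsGrad φ T) (hs : SuperLin φ)
  {V W : E → ℝ} (hV : Continuous V) (hW : Continuous W) (m : Measure E) [m.IsAddHaarMeasure]
  (hmap : (m.withDensity (dens V)).map T = m.withDensity (dens W))

lemma clm_det_smul (A : E →L[ℝ] E) (r : ℝ) :
    (r • A).det = r ^ (Module.finrank ℝ E) * A.det := by
  have := LinearMap.det_smul r (A : E →ₗ[ℝ] E)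
  exact this

include h hs hV hW hmap in
lemma touching {κ c0 a : ℝ} (hκ : 0 ≤ κ) {k x0 : E}
    (hVk : ∀ x, (V (x + k) + V (x - k)) / 2 ≤ V x + a)
    (hle : ∀ z, (φ (z + k) + φ (z - k)) / 2 ≤ (1 + κ) * φ z + c0)
    (heq : (φ (x0 + k) + φ (x0 - k)) / 2 = (1 + κ) * φ x0 + c0) :
    (W (T (x0 + k)) + W (T (x0 - k))) / 2 - W (T x0) ≤
      a + Module.finrank ℝ E * Real.log (1 + κ) := by
  by_contra hcon
  push Not at hcon
  set d := Module.finrank ℝ E with hd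
  obtain ⟨η, hη, hgap⟩ : ∃ η > 0, a + d * Real.log (1 + κ) + 2 * η =
      (W (T (x0 + k)) + W (T (x0 - k))) / 2 - W (T x0) :=
    ⟨((W (T (x0 + k)) + W (T (x0 - k))) / 2 - W (T x0) - (a + d * Real.log (1 + κ))) / 2,
      by linarith, by ring⟩
  set σ := η / (2 * (d + 1)) with hσ
  have hσ0 : 0 < σ := by positivity
  have hdσ : d * σ ≤ η / 2 := by
    rw [hσ, mul_div_assoc', div_le_div_iff₀ (by positivity) (by norm_num)]
    nlinarith
  set ρ := Real.exp (-σ) with hρ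
  have hρ0 : 0 < ρ := Real.exp_pos _
  have hρ1 : ρ < 1 := by rw [hρ, Real.exp_lt_one_iff]; linarith
  have hκ1 : 0 < 1 + κ := by linarith
  obtain ⟨Ω, hΩo, hx0, hΩb, hΩe, q, hq⟩ := touch_setup h hs hW hκ hle heq hη hρ0 hρ1
  have hJ := jac h hs hV hW m hmap
  set J := {x | x ∈ good T ∧ 0 < (fderiv ℝ T x).det ∧
    (fderiv ℝ T x).det * Real.exp (-W (T x)) = Real.exp (-V x)} with hJdef
  set N := toMeasurable m Jᶜ with hN
  have hN0 : m N = 0 := by rw [hN, measure_toMeasurable]; exact hJ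
  have hNm : MeasurableSet N := measurableSet_toMeasurable _ _
  have hNJ : ∀ x, x ∉ N → x ∈ J := fun x hx => by
    by_contra hxJ
    exact hx (subset_toMeasurable m Jᶜ hxJ)
  set B := N ∪ ((fun x => x + k) ⁻¹' N ∪ (fun x => x + (-k)) ⁻¹' N) with hB
  have hBm : MeasurableSet B :=
    hNm.union ((hNm.preimage (measurable_add_const k)).union
      (hNm.preimage (measurable_add_const (-k))))
  have hB0 : m B = 0 := by
    refine measure_union_null hN0 (measure_union_null ?_ ?_)
    · rw [measure_preimage_add_right, hN0]
    · rw [measure_preimage_add_right, hN0]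
  have hdetJ : ∀ x ∈ J, (fderiv ℝ T x).det = Real.exp (W (T x) - V x) := by
    intro x hx
    have := hx.2.2
    have h2 : Real.exp (W (T x) - V x) = Real.exp (W (T x)) * Real.exp (-V x) := by
      rw [← Real.exp_add]; ring_nf
    rw [h2, ← this, mul_comm, mul_assoc, ← Real.exp_add]; simp
  -- the derivative of the averaged map
  set r := ρ / (1 + κ) with hr
  have hr0 : 0 < r := by positivity
  set S : E → E := fun z => (1 / 2 : ℝ) • (T (z + k) + T (z - k)) with hS
  set A : E → E →L[ℝ] E := fun z => (1 / 2 : ℝ) • (fderiv ℝ T (z + k) + fderiv ℝ T (z - k)) with hA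
  have hvS := isGrad_mid h k
  have hSd : ∀ z, z ∉ B → HasFDerivAt S (A z) z := by
    intro z hz
    simp only [hB, Set.mem_union, not_or, Set.mem_preimage] at hz
    have h1 := (hNJ _ hz.2.1).1.1.hasFDerivAt
    have h2 := (hNJ _ hz.2.2).1.1.hasFDerivAt
    rw [← sub_eq_add_neg] at h2
    have h3 : HasFDerivAt (fun z => T (z + k)) (fderiv ℝ T (z + k)) z := by
      simpa using! HasFDerivAt.comp z h1 ((hasFDerivAt_id z).add_const k)
    have h4 : HasFDerivAt (fun z => T (z - k)) (fderiv ℝ T (z - k)) z := by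
      simpa using! HasFDerivAt.comp z h2 ((hasFDerivAt_id z).sub_const k)
    exact (h3.add h4).const_smul (1 / 2 : ℝ)
  have hAdet : ∀ z, z ∉ B → Real.exp ((W (T (z + k)) + W (T (z - k))) / 2 -
      (V (z + k) + V (z - k)) / 2) ≤ (A z).det := by
    intro z hz
    have hz' := hz
    simp only [hB, Set.mem_union, not_or, Set.mem_preimage] at hz
    have j1 := hNJ _ hz.2.1
    have j2 := hNJ _ hz.2.2
    rw [← sub_eq_add_neg] at j2
    have p1 := isPositive_of (hess_symm h j1.1.1.hasFDerivAt) (hess_nonneg h j1.1.1.hasFDerivAt)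
    have p2 := isPositive_of (hess_symm h j2.1.1.hasFDerivAt) (hess_nonneg h j2.1.1.hasFDerivAt)
    have h1 := clm_det_mid p1 p2 j1.2.1.ne'
    have h0 : 0 ≤ (A z).det := clm_det_nonneg
      (isPositive_of (hess_symm hvS (hSd z hz')) (hess_nonneg hvS (hSd z hz')))
    rw [hdetJ _ j1, hdetJ _ j2, ← Real.exp_add] at h1
    refine le_of_sq_le_sq ?_ h0
    refine le_trans (le_of_eq ?_) h1
    rw [← Real.exp_nat_mul]
    congr 1
    push_cast; ring
  -- volume comparison
  set S' : E → E := fun z => r • S z + q with hS'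
  have hmS' : MeasurableSet (Ω \ B) := hΩo.measurableSet.diff hBm
  have hS'd : ∀ z ∈ Ω \ B, HasFDerivWithinAt S' (r • A z) (Ω \ B) z := fun z hz =>
    (((hSd z hz.2).const_smul r).add_const q).hasFDerivWithinAt
  have hApos : ∀ z, z ∉ B → 0 < (A z).det := fun z hz => (Real.exp_pos _).trans_le (hAdet z hz)
  have hS'inj : Set.InjOn S' (Ω \ B) := by
    intro z _ z' hz' e
    have e2 : S z = S z' := by
      have : r • S z = r • S z' := add_right_cancel e
      exact smul_right_injective E hr0.ne' this
    exact inj_of_det hvS (hSd z' hz'.2) (hApos z' hz'.2).ne' e2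
  have hv1 := lintegral_abs_det_fderiv_eq_addHaar_image m hmS' hS'd hS'inj
  have hv2 : m (S' '' (Ω \ B)) ≤ m (T '' Ω) := by
    refine measure_mono ?_
    rintro _ ⟨z1, hz1, rfl⟩
    obtain ⟨z2, hz2, e⟩ := hq z1 hz1.1
    exact ⟨z2, hz2, e⟩
  have hv3 := image_le h hs hV hW m hmap hΩo.measurableSet
  set D : E → ENNReal := fun z => ENNReal.ofReal (Real.exp (W (T z) - V z)) with hD
  have hDc : Continuous (fun z => Real.exp (W (T z) - V z)) := by
    have := h.cont
    fun_prop
  have hDm : Measurable D := by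
    simp only [hD]; exact hDc.measurable.ennreal_ofReal
  have hv4 : ∫⁻ x in Ω, ENNReal.ofReal (fderiv ℝ T x).det ∂m = ∫⁻ x in Ω, D x ∂m := by
    refine lintegral_congr_ae (ae_restrict_of_ae ?_)
    filter_upwards [hJ] with x hx
    rw [hdetJ x hx]
  have hv5 : ∫⁻ x in Ω \ B, D x ∂m = ∫⁻ x in Ω, D x ∂m := by
    refine setLIntegral_congr ?_
    exact diff_null_ae_eq_self hB0
  have hv6 : ENNReal.ofReal (Real.exp (η / 2)) * ∫⁻ x in Ω \ B, D x ∂m ≤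
      ∫⁻ x in Ω \ B, ENNReal.ofReal |(r • A x).det| ∂m := by
    rw [← lintegral_const_mul _ hDm]
    refine lintegral_mono_ae ?_
    refine (ae_restrict_iff' hmS').2 (Filter.Eventually.of_forall fun z hz => ?_)
    simp only [hD]
    rw [← ENNReal.ofReal_mul (Real.exp_pos _).le, ← Real.exp_add]
    refine ENNReal.ofReal_le_ofReal ?_
    refine le_trans ?_ (le_abs_self _)
    rw [clm_det_smul, ← hd]
    have hrd : r ^ d = Real.exp (-(d * σ) - d * Real.log (1 + κ)) := by
      have : r = Real.exp (-σ - Real.log (1 + κ)) := by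
        rw [Real.exp_sub, Real.exp_log hκ1]
      rw [this, ← Real.exp_nat_mul]; congr 1; ring
    calc Real.exp (η / 2 + (W (T z) - V z))
        ≤ Real.exp ((-(d * σ) - d * Real.log (1 + κ)) + ((W (T (z + k)) + W (T (z - k))) / 2 -
          (V (z + k) + V (z - k)) / 2)) := by
          apply Real.exp_le_exp.2
          have a1 := hΩe z hz.1
          have a2 := hVk z
          linarith
      _ = r ^ d * Real.exp ((W (T (z + k)) + W (T (z - k))) / 2 -
          (V (z + k) + V (z - k)) / 2) := by rw [Real.exp_add, hrd]
      _ ≤ _ := by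
          have := hAdet z hz.2
          gcongr
  set I := ∫⁻ x in Ω, D x ∂m with hI
  have hfin : ENNReal.ofReal (Real.exp (η / 2)) * I ≤ I := by
    rw [← hv5] 
    refine hv6.trans ?_
    rw [hv1]
    refine hv2.trans (hv3.trans ?_)
    rw [hv4, hv5]
  have hIpos : 0 < I := by
    rw [hI, setLIntegral_pos_iff hDm]
    have : Function.support D ∩ Ω = Ω := by
      refine Set.inter_eq_right.2 fun z _ => ?_
      simp [hD, Real.exp_pos]
    rw [this]
    exact hΩo.measure_pos m ⟨x0, hx0⟩
  have hItop : I < ⊤ := by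
    obtain ⟨R, hR⟩ := hΩb.subset_closedBall x0
    obtain ⟨M, hM⟩ := (isCompact_closedBall x0 R).exists_bound_of_continuousOn hDc.continuousOn
    have : I ≤ ∫⁻ x in Ω, ENNReal.ofReal M ∂m := by
      refine setLIntegral_mono measurable_const fun z hz => ?_
      refine ENNReal.ofReal_le_ofReal ?_
      exact (le_abs_self _).trans (hM z (hR hz))
    refine this.trans_lt ?_
    rw [setLIntegral_const]
    exact ENNReal.mul_lt_top ENNReal.ofReal_lt_top hΩb.measure_lt_top
  have hr1 := ENNReal.toReal_mono hItop.ne hfin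
  rw [ENNReal.toReal_mul, ENNReal.toReal_ofReal (Real.exp_pos _).le] at hr1
  have hr2 : 0 < I.toReal := ENNReal.toReal_pos hIpos.ne' hItop.ne
  have hr3 : 1 < Real.exp (η / 2) := by rw [Real.one_lt_exp_iff]; linarith
  nlinarith

end vol
end Caff

namespace Caff
section final
variable {E : Type*} [NormedAddCommGroup E] [InnerProductSpace ℝ E] [FiniteDimensional ℝ E]

lemma lip_of_semiconcave {φ : E → ℝ} {T : E → E} (h : IsGrad φ T) {L : ℝ} (hL : 0 < L)
    (hsc : ∀ x k, φ (x + k) + φ (x - k) - 2 * φ x ≤ L * ‖k‖ ^ 2) (x z : E) :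
    ‖T x - T z‖ ≤ L * ‖x - z‖ := by
  have hquad : ∀ x k, φ (x + k) ≤ φ x + ⟪T x, k⟫ + L / 2 * ‖k‖ ^ 2 := by
    intro x k
    set χ : E → ℝ := fun k => φ (x + k) - φ x - ⟪T x, k⟫ - L / 2 * ‖k‖ ^ 2 with hχ
    have hstep : ∀ k, χ k ≤ 2 * χ ((1 / 2 : ℝ) • k) := by
      intro k
      have h1 := hsc (x + (1 / 2 : ℝ) • k) ((1 / 2 : ℝ) • k)
      have e1 : x + (1 / 2 : ℝ) • k + (1 / 2 : ℝ) • k = x + k := by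
        rw [add_assoc, ← add_smul]; norm_num
      rw [e1, add_sub_cancel_right, norm_smul, Real.norm_of_nonneg (by norm_num)] at h1
      simp only [hχ]
      rw [norm_smul, Real.norm_of_nonneg (by norm_num : (0:ℝ) ≤ 1 / 2), inner_smul_right]
      nlinarith
    have hiter : ∀ n : ℕ, χ k ≤ 2 ^ n * χ ((1 / 2 : ℝ) ^ n • k) := by
      intro n
      induction n with
      | zero => simp
      | succ n ih =>
        refine ih.trans ?_
        have := hstep ((1 / 2 : ℝ) ^ n • k)
        rw [smul_smul, ← pow_succ'] at this
        calc _ ≤ 2 ^ n * (2 * χ ((1 / 2 : ℝ) ^ (n + 1) • k)) := by gcongr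
          _ = _ := by ring
    have hbd : ∀ n : ℕ, χ k ≤ ⟪T (x + (1 / 2 : ℝ) ^ n • k) - T x, k⟫ := by
      intro n
      refine (hiter n).trans ?_
      set s := (1 / 2 : ℝ) ^ n with hs
      have hs0 : 0 < s := by positivity
      have hs2 : (2:ℝ) ^ n * s = 1 := by rw [hs, ← mul_pow]; norm_num
      have h1 := h.sub (x + s • k) x
      have e1 : x - (x + s • k) = -(s • k) := by abel
      rw [e1, inner_neg_right, inner_smul_right] at h1
      have h2 : χ (s • k) ≤ s * ⟪T (x + s • k) - T x, k⟫ := by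
        simp only [hχ, inner_smul_right, inner_sub_left]
        have : 0 ≤ L / 2 * ‖s • k‖ ^ 2 := by positivity
        linarith
      calc _ ≤ 2 ^ n * (s * ⟪T (x + s • k) - T x, k⟫) := by gcongr
        _ = _ := by rw [← mul_assoc, hs2, one_mul]
    have hT := h.cont
    have hlim : Filter.Tendsto (fun n : ℕ => ⟪T (x + (1 / 2 : ℝ) ^ n • k) - T x, k⟫)
        Filter.atTop (nhds 0) := by
      have c1 : Continuous (fun s : ℝ => ⟪T (x + s • k) - T x, k⟫) := by fun_prop
      have c2 := (c1.tendsto 0).comp (tendsto_pow_atTop_nhds_zero_of_lt_one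
        (by norm_num : (0:ℝ) ≤ 1 / 2) (by norm_num))
      simpa using! c2
    have := ge_of_tendsto' hlim hbd
    simp only [hχ] at this
    linarith
  have hco : ∀ x z, φ z + ⟪T z, x - z⟫ + ‖T x - T z‖ ^ 2 / (2 * L) ≤ φ x := by
    intro x z
    set q := T x - T z with hq
    have h1 := hquad x (-(L⁻¹ • q))
    have h2 := h.sub z (x + -(L⁻¹ • q))
    rw [norm_neg, norm_smul, Real.norm_of_nonneg (by positivity), inner_neg_right,
      inner_smul_right] at h1
    have e : x + -(L⁻¹ • q) - z = (x - z) - L⁻¹ • q := by abel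
    rw [e, inner_sub_right, inner_smul_right] at h2
    have h3 : ⟪T x, q⟫ - ⟪T z, q⟫ = ‖q‖ ^ 2 := by
      rw [← inner_sub_left, ← hq, real_inner_self_eq_norm_sq]
    have h4 : L⁻¹ * ⟪T x, q⟫ - L⁻¹ * ⟪T z, q⟫ = L⁻¹ * ‖q‖ ^ 2 := by rw [← h3]; ring
    have h5 : L / 2 * (L⁻¹ * ‖q‖) ^ 2 = L⁻¹ * ‖q‖ ^ 2 / 2 := by field_simp
    have h6 : ‖q‖ ^ 2 / (2 * L) = L⁻¹ * ‖q‖ ^ 2 / 2 := by field_simp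
    rw [h6]
    linarith
  have h1 := hco x z
  have h2 := hco z x
  rw [norm_sub_rev (T z) (T x)] at h2
  have h3 : ‖T x - T z‖ ^ 2 / L ≤ ⟪T x - T z, x - z⟫ := by
    have e1 : z - x = -(x - z) := by abel
    rw [e1, inner_neg_right] at h2
    rw [inner_sub_left]
    have : ‖T x - T z‖ ^ 2 / L = ‖T x - T z‖ ^ 2 / (2 * L) + ‖T x - T z‖ ^ 2 / (2 * L) := by
      field_simp; ring
    linarith
  have h4 := h3.trans (real_inner_le_norm _ _)
  rw [div_le_iff₀ hL] at h4
  by_contra hcon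
  push Not at hcon
  have h5 : 0 < ‖T x - T z‖ := lt_of_le_of_lt (by positivity) hcon
  nlinarith

set_option maxHeartbeats 1000000 in
lemma main_ineq {φ : E → ℝ} {T : E → E} (h : IsGrad φ T) (hs : SuperLin φ)
    (hpos : ∀ x, 0 ≤ φ x) {W : E → ℝ} {α β C CW L : ℝ} {n : ℕ} (hL : 0 < L)
    (hα : 0 ≤ α)
    (hC : 0 ≤ C) (hCW : 0 ≤ CW) (hgap : α < β * L ^ 2)
    (hgr : ∀ x, ‖T x‖ ≤ C * (1 + ‖x‖))
    (hW1 : ∀ a b, W ((1 / 2 : ℝ) • (a + b)) + β / 8 * ‖a - b‖ ^ 2 ≤ (W a + W b) / 2)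
    (hW2 : ∀ κ, 0 ≤ κ → ∀ y, W y - W ((1 + κ) • y) ≤ κ * CW)
    (htouch : ∀ κ c0 : ℝ, ∀ k x0 : E, 0 ≤ κ →
      (∀ z, (φ (z + k) + φ (z - k)) / 2 ≤ (1 + κ) * φ z + c0) →
      ((φ (x0 + k) + φ (x0 - k)) / 2 = (1 + κ) * φ x0 + c0) →
      (W (T (x0 + k)) + W (T (x0 - k))) / 2 - W (T x0) ≤
        α / 2 * ‖k‖ ^ 2 + n * Real.log (1 + κ)) (x1 k1 : E) :
    φ (x1 + k1) + φ (x1 - k1) - 2 * φ x1 ≤ L * ‖k1‖ ^ 2 := by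
  by_contra hcon
  push Not at hcon
  have hφ := h.cont_fun
  obtain ⟨δ, hδ, hδe⟩ : ∃ δ > 0, φ (x1 + k1) + φ (x1 - k1) - 2 * φ x1 - L * ‖k1‖ ^ 2 = 2 * δ :=
    ⟨(φ (x1 + k1) + φ (x1 - k1) - 2 * φ x1 - L * ‖k1‖ ^ 2) / 2, by linarith, by ring⟩
  set H := ‖k1‖ with hH
  have hH0 : 0 ≤ H := norm_nonneg _
  set γ := β * L ^ 2 - α with hγ
  have hγ0 : 0 < γ := by linarith
  set M : ℝ := n + CW with hM
  have hM0 : 0 ≤ M := by positivity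
  obtain ⟨κ, hκ, hκ1, hκ2⟩ : ∃ κ > 0, 2 * κ * φ x1 ≤ δ ∧ 4 * L * κ * M < δ * γ := by
    have hx1 := hpos x1
    refine ⟨min (δ / (2 * φ x1 + 1)) (δ * γ / (4 * L * M + 1)), by positivity, ?_, ?_⟩
    · have := min_le_left (δ / (2 * φ x1 + 1)) (δ * γ / (4 * L * M + 1))
      set κ := min (δ / (2 * φ x1 + 1)) (δ * γ / (4 * L * M + 1))
      rw [le_div_iff₀ (by positivity)] at this
      have hκ0 : 0 ≤ κ := by positivity
      nlinarith
    · have := min_le_right (δ / (2 * φ x1 + 1)) (δ * γ / (4 * L * M + 1))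
      set κ := min (δ / (2 * φ x1 + 1)) (δ * γ / (4 * L * M + 1))
      rw [le_div_iff₀ (by positivity)] at this
      have hκ0 : 0 < κ := by positivity
      nlinarith
  set F : E × E → ℝ := fun q => φ (q.1 + q.2) + φ (q.1 - q.2) - 2 * (1 + κ) * φ q.1 - L * ‖q.2‖ ^ 2
    with hF
  have hFc : Continuous F := by simp only [hF]; fun_prop
  have hF1 : δ ≤ F (x1, k1) := by simp only [hF]; nlinarith
  obtain ⟨C2, hC2⟩ := hs ((C * H + 1) / κ)
  set R := C * H * (1 + H) + κ * C2 with hR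
  have hFub : ∀ x k, ‖k‖ ≤ H → F (x, k) ≤ 2 * R - 2 * ‖x‖ := by
    intro x k hk
    have hstep : ∀ k : E, ‖k‖ ≤ H → φ (x + k) - φ x ≤ C * H * (1 + ‖x‖ + H) := by
      intro k hk
      have h1 := h.sub (x + k) x
      have e : x - (x + k) = -k := by abel
      rw [e, inner_neg_right] at h1
      have h2 := real_inner_le_norm (T (x + k)) k
      have h3 := (hgr (x + k)).trans
        (mul_le_mul_of_nonneg_left (by linarith [norm_add_le x k] : 1 + ‖x + k‖ ≤ 1 + ‖x‖ + H) hC)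
      have h4 : ‖T (x + k)‖ * ‖k‖ ≤ C * (1 + ‖x‖ + H) * H := by gcongr
      nlinarith
    have s1 := hstep k hk
    have s2 := hstep (-k) (by rwa [norm_neg])
    rw [← sub_eq_add_neg] at s2
    have s3 := mul_le_mul_of_nonneg_left (hC2 x) hκ.le
    have s4 : κ * ((C * H + 1) / κ * ‖x‖ - C2) = (C * H + 1) * ‖x‖ - κ * C2 := by field_simp
    have s5 : 0 ≤ L * ‖k‖ ^ 2 := by positivity
    simp only [hF, hR]
    nlinarith
  have hx1R : ‖x1‖ ≤ R := by have := hFub x1 k1 le_rfl; linarith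
  have hcomp : IsCompact (Metric.closedBall (0:E) R ×ˢ Metric.closedBall (0:E) H) :=
    (isCompact_closedBall _ _).prod (isCompact_closedBall _ _)
  have hmem : (x1, k1) ∈ Metric.closedBall (0:E) R ×ˢ Metric.closedBall (0:E) H := by
    simp only [Set.mem_prod, mem_closedBall_zero_iff]; exact ⟨hx1R, le_rfl⟩
  obtain ⟨⟨x, k⟩, hxk, hmax⟩ := hcomp.exists_isMaxOn ⟨_, hmem⟩ hFc.continuousOn
  simp only [Set.mem_prod, mem_closedBall_zero_iff] at hxk
  have hFδ : δ ≤ F (x, k) := hF1.trans (hmax hmem)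
  have hglob : ∀ x' k', ‖k'‖ ≤ H → F (x', k') ≤ F (x, k) := by
    intro x' k' hk'
    by_cases hx' : ‖x'‖ ≤ R
    · refine hmax (a := (x', k')) ?_
      simp only [Set.mem_prod, mem_closedBall_zero_iff]; exact ⟨hx', hk'⟩
    · push Not at hx'
      have := hFub x' k' hk'
      linarith
  clear hmax hcomp hmem
  set yp := T (x + k) with hyp
  set ym := T (x - k) with hym
  set c0 := (φ (x + k) + φ (x - k)) / 2 - (1 + κ) * φ x with hc0
  have hle : ∀ z, (φ (z + k) + φ (z - k)) / 2 ≤ (1 + κ) * φ z + c0 := by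
    intro z
    have := hglob z k hxk.2
    simp only [hF] at this
    linarith
  have ht := htouch κ c0 k x hκ.le hle (by rw [hc0]; ring)
  have hgrad : (1 + κ) • T x = (1 / 2 : ℝ) • (yp + ym) := by
    refine grad_eq_of_min h (1 + κ) _ x fun y => ?_
    have h1 := (isGrad_mid h k).sub x y
    have h2 := hle y
    rw [inner_sub_right] at h1
    linarith
  set P := ⟪yp - ym, k⟫ with hP
  have hshr : ∀ s : ℝ, 0 ≤ s → s < 1 → (1 + s) * (L * ‖k‖ ^ 2) ≤ P := by
    intro s hs0 hs1
    have h1 := hglob x (s • k) (by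
      rw [norm_smul, Real.norm_of_nonneg hs0]; nlinarith [norm_nonneg k, hxk.2])
    simp only [hF, norm_smul, Real.norm_of_nonneg hs0] at h1
    have h2 := h.sub (x + k) (x + s • k)
    have h3 := h.sub (x - k) (x - s • k)
    have e2 : x + s • k - (x + k) = (s - 1) • k := by rw [sub_smul, one_smul]; abel
    have e3 : x - s • k - (x - k) = (1 - s) • k := by rw [sub_smul, one_smul]; abel
    rw [e2, inner_smul_right] at h2
    rw [e3, inner_smul_right] at h3
    have e4 : P = ⟪T (x + k), k⟫ - ⟪T (x - k), k⟫ := by rw [hP, inner_sub_left]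
    have h4 : (1 - s) * ((1 + s) * (L * ‖k‖ ^ 2)) ≤ (1 - s) * P := by
      rw [e4]; linarith
    exact le_of_mul_le_mul_left h4 (by linarith)
  have hPδ : δ ≤ P := by
    have h2 := h.sub (x + k) x
    have h3 := h.sub (x - k) x
    have e2 : x - (x + k) = -k := by abel
    have e3 : x - (x - k) = k := by abel
    rw [e2, inner_neg_right] at h2
    rw [e3] at h3
    have e4 : P = ⟪T (x + k), k⟫ - ⟪T (x - k), k⟫ := by rw [hP, inner_sub_left]
    have h5 : 0 ≤ κ * φ x := mul_nonneg hκ.le (hpos x)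
    have h6 : 0 ≤ L * ‖k‖ ^ 2 := by positivity
    simp only [hF] at hFδ
    linarith
  have hP2 : 2 * (L * ‖k‖ ^ 2) ≤ P := by
    by_contra hc
    push Not at hc
    set Q := L * ‖k‖ ^ 2 with hQ
    have hQ0 : 0 < Q := by linarith
    have := hshr (P / (2 * Q)) (div_nonneg (by linarith) (by linarith)) (by rw [div_lt_one (by positivity)]; exact hc)
    have e : (1 + P / (2 * Q)) * Q = Q + P / 2 := by field_simp
    linarith
  set Y := ‖yp - ym‖ with hY
  set t := ‖k‖ with ht'
  have hPY : P ≤ Y * t := real_inner_le_norm _ _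
  have ht0 : 0 < t := by
    rcases (norm_nonneg k).eq_or_lt with h0 | h0
    · rw [ht', ← h0] at hPY; linarith
    · exact h0
  have hYt : 2 * L * t ≤ Y := by
    have : (2 * L * t) * t ≤ Y * t := by nlinarith
    exact le_of_mul_le_mul_right this ht0
  have hw1 := hW1 yp ym
  rw [← hgrad] at hw1
  have hw2 := hW2 κ hκ.le (T x)
  have hlog : Real.log (1 + κ) ≤ κ := by
    have := Real.log_le_sub_one_of_pos (by linarith : 0 < 1 + κ); linarith
  have hnlog : n * Real.log (1 + κ) ≤ n * κ := by gcongr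
  have hmain : β / 8 * Y ^ 2 - α / 2 * t ^ 2 ≤ κ * M := by
    rw [hM]; linarith
  have hY0 : 0 ≤ Y := norm_nonneg _
  -- δ ≤ Y t, combine
  have f1 : δ ≤ Y * t := hPδ.trans hPY
  have f2 : 4 * L ^ 2 * t ^ 2 ≤ 2 * L * (Y * t) := by nlinarith
  have f3 : 2 * L * (Y * t) ≤ Y ^ 2 := by nlinarith
  have f4 : γ * Y ^ 2 ≤ 8 * L ^ 2 * (κ * M) := by
    have g1 := mul_le_mul_of_nonneg_left hmain (by positivity : 0 ≤ 8 * L ^ 2)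
    have g2 := mul_le_mul_of_nonneg_left (f2.trans f3) hα
    rw [hγ]; linarith
  have f5 : γ * (2 * L * δ) ≤ 8 * L ^ 2 * (κ * M) := by
    refine le_trans ?_ f4
    refine mul_le_mul_of_nonneg_left ?_ hγ0.le
    refine le_trans ?_ f3
    gcongr
  have f6 : (2 * L) * (δ * γ) ≤ (2 * L) * (4 * L * κ * M) := by linarith
  have := le_of_mul_le_mul_left f6 (by positivity)
  linarith

end final
end Caff

namespace Caff
section concl
variable {E : Type*} [NormedAddCommGroup E] [InnerProductSpace ℝ E] [FiniteDimensional ℝ E]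
  [MeasurableSpace E] [BorelSpace E]

lemma taylor_upper {f : E → ℝ} (hf : ContDiff ℝ 2 f) {c : ℝ}
    (hc : ∀ x v, ⟪fderiv ℝ (fun z => gradient f z) x v, v⟫ ≤ c * ‖v‖ ^ 2) (a b : E) :
    f b ≤ f a + ⟪gradient f a, b - a⟫ + c / 2 * ‖b - a‖ ^ 2 := by
  have e : (fun z => gradient (fun y => -f y) z) = fun z => -gradient f z := by
    funext z
    simp only [gradient]
    rw [fderiv_fun_neg, map_neg]
  have h := taylor_lower (f := fun y => -f y) hf.neg (c := -c) (fun x v => by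
    rw [e, fderiv_fun_neg]
    have := hc x v
    simp only [ContinuousLinearMap.neg_apply, inner_neg_left]
    linarith) a b
  have e2 := congrFun e a
  rw [e2, inner_neg_left] at h
  linarith

lemma gauss_fin {b : ℝ} (hb : 0 < b) :
    ∫⁻ y : E, ENNReal.ofReal (Real.exp (-b * ‖y‖ ^ 2)) < ⊤ := by
  have h1 := GaussianFourier.integrable_cexp_neg_mul_sq_norm_add (V := E) (b := (b : ℂ))
    (by simpa using hb) 0 0
  have h2 := h1.norm
  have h3 : Integrable (fun y : E => Real.exp (-b * ‖y‖ ^ 2)) := by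
    refine h2.congr (Filter.Eventually.of_forall fun y => ?_)
    simp only [Complex.norm_exp]
    congr 1
    simp [← Complex.ofReal_pow]
  exact h3.lintegral_lt_top

lemma W_lower {W : E → ℝ} {β : ℝ} (hβ : 0 < β)
    (hW : ∀ a b, W a + ⟪gradient W a, b - a⟫ + β / 2 * ‖b - a‖ ^ 2 ≤ W b) :
    (∃ cW, ∀ y, β / 4 * ‖y‖ ^ 2 - cW ≤ W y) ∧
    (∀ a b, W ((1 / 2 : ℝ) • (a + b)) + β / 8 * ‖a - b‖ ^ 2 ≤ (W a + W b) / 2) ∧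
    (∃ CW, 0 ≤ CW ∧ ∀ κ, 0 ≤ κ → ∀ y, W y - W ((1 + κ) • y) ≤ κ * CW) := by
  set g := gradient W 0 with hg
  refine ⟨⟨‖g‖ ^ 2 / β - W 0, fun y => ?_⟩, fun a b => ?_, ⟨‖g‖ ^ 2 / (4 * β), by positivity,
    fun κ hκ y => ?_⟩⟩
  · have h1 := hW 0 y
    rw [sub_zero, ← hg] at h1
    have h2 := neg_le_of_abs_le (abs_real_inner_le_norm g y)
    have h3 : 0 ≤ β / 4 * ‖y‖ ^ 2 - ‖g‖ * ‖y‖ + ‖g‖ ^ 2 / β := by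
      have : β / 4 * ‖y‖ ^ 2 - ‖g‖ * ‖y‖ + ‖g‖ ^ 2 / β = (β * ‖y‖ - 2 * ‖g‖) ^ 2 / (4 * β) := by
        field_simp; ring
      rw [this]; positivity
    linarith
  · set c := (1 / 2 : ℝ) • (a + b) with hc
    have h1 := hW c a
    have h2 := hW c b
    have e1 : a - c = (1 / 2 : ℝ) • (a - b) := by rw [hc]; module
    have e2 : b - c = -((1 / 2 : ℝ) • (a - b)) := by rw [hc]; module
    rw [e2, inner_neg_right, norm_neg, norm_smul, Real.norm_of_nonneg (by norm_num)] at h2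
    rw [e1, norm_smul, Real.norm_of_nonneg (by norm_num)] at h1
    linarith
  · have h1 := hW 0 y
    have h2 := hW y 0
    have h3 := hW y ((1 + κ) • y)
    have e : (1 + κ) • y - y = κ • y := by module
    rw [e, inner_smul_right] at h3
    rw [sub_zero, ← hg] at h1
    rw [zero_sub, inner_neg_right, norm_neg] at h2
    have h4 := neg_le_of_abs_le (abs_real_inner_le_norm g y)
    have h5 : 0 ≤ β * ‖y‖ ^ 2 - ‖g‖ * ‖y‖ + ‖g‖ ^ 2 / (4 * β) := by
      have : β * ‖y‖ ^ 2 - ‖g‖ * ‖y‖ + ‖g‖ ^ 2 / (4 * β) = (2 * β * ‖y‖ - ‖g‖) ^ 2 / (4 * β) := by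
        field_simp; ring
      rw [this]; positivity
    have h6 : -(‖g‖ ^ 2 / (4 * β)) ≤ ⟪gradient W y, y⟫ := by linarith
    have h7 := mul_le_mul_of_nonneg_left h6 hκ
    have h8 : 0 ≤ β / 2 * ‖κ • y‖ ^ 2 := by positivity
    linarith

lemma V_upper {V : E → ℝ} {α : ℝ} (hα : 0 < α)
    (hV : ∀ a b, V b ≤ V a + ⟪gradient V a, b - a⟫ + α / 2 * ‖b - a‖ ^ 2) :
    (∃ cV, 0 ≤ cV ∧ ∀ x, V x ≤ cV * (1 + ‖x‖ ^ 2)) ∧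
    (∀ k x, (V (x + k) + V (x - k)) / 2 ≤ V x + α / 2 * ‖k‖ ^ 2) := by
  refine ⟨⟨|V 0| + ‖gradient V 0‖ + α, by positivity, fun x => ?_⟩, fun k x => ?_⟩
  · have h1 := hV 0 x
    rw [sub_zero] at h1
    have h2 := real_inner_le_norm (gradient V 0) x
    have h3 := le_abs_self (V 0)
    have h4 := abs_nonneg (V 0)
    have h5 := norm_nonneg (gradient V 0)
    have h6 : ‖x‖ ≤ 1 + ‖x‖ ^ 2 := by nlinarith [sq_nonneg (‖x‖ - 1), norm_nonneg x]
    have h7 := mul_le_mul_of_nonneg_left h6 h5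
    nlinarith [sq_nonneg ‖x‖, mul_nonneg h4 (sq_nonneg ‖x‖), mul_nonneg hα.le (sq_nonneg ‖x‖)]
  · have h1 := hV x (x + k)
    have h2 := hV x (x - k)
    have e : x - k - x = -k := by abel
    rw [add_sub_cancel_left] at h1
    rw [e, inner_neg_right, norm_neg] at h2
    linarith

theorem caff {φ : E → ℝ} {T : E → E} (h0 : IsGrad φ T) {V W : E → ℝ} {α β : ℝ}
    (hα : 0 < α) (hβ : 0 < β) (hV : ContDiff ℝ 2 V) (hW : ContDiff ℝ 2 W)
    (hVα : ∀ x v, ⟪fderiv ℝ (fun z => gradient V z) x v, v⟫ ≤ α * ‖v‖ ^ 2)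
    (hWβ : ∀ y v, β * ‖v‖ ^ 2 ≤ ⟪fderiv ℝ (fun z => gradient W z) y v, v⟫)
    (hmap : ((volume : Measure E).withDensity (dens V)).map T =
      (volume : Measure E).withDensity (dens W)) (x z : E) :
    ‖T x - T z‖ ≤ Real.sqrt (α / β) * ‖x - z‖ := by
  obtain ⟨⟨cW, hWq⟩, hW1, ⟨CW, hCW, hW2⟩⟩ := W_lower hβ (taylor_lower hW hWβ)
  obtain ⟨⟨cV, hcV, hVq⟩, hVk⟩ := V_upper hα (taylor_upper hV hVα)
  have hs0 : SuperLin φ := superlin h0 hW.continuous volume hmap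
  obtain ⟨z0, hz0⟩ := exists_min_of_superlin h0.cont_fun hs0 1 one_pos 0
  set ψ : E → ℝ := fun x => φ x - φ z0 with hψ
  have h : IsGrad ψ T := by
    refine ⟨fun x => ?_, fun x y => ?_⟩
    · rw [hasGradientAt_iff_hasFDerivAt]
      exact (h0.grad x).hasFDerivAt.sub_const (φ z0)
    · have := h0.sub x y
      simp only [hψ]; linarith
  have hs : SuperLin ψ := superlin h hW.continuous volume hmap
  have hpos : ∀ x, 0 ≤ ψ x := by
    intro x
    have := hz0 x
    simp only [inner_zero_left] at this
    simp only [hψ]; linarith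
  obtain ⟨C, hC, hgr⟩ := lin_growth h hV.continuous hW.continuous volume hmap hcV
    (by positivity : 0 < β / 4) hVq hWq (by exact gauss_fin (by positivity))
  have hL0 : 0 < Real.sqrt (α / β) := Real.sqrt_pos.2 (by positivity)
  have key : ∀ L, Real.sqrt (α / β) < L → ‖T x - T z‖ ≤ L * ‖x - z‖ := by
    intro L hL
    have hL1 : 0 < L := hL0.trans hL
    refine lip_of_semiconcave h hL1 (fun x1 k1 => ?_) x z
    refine main_ineq (n := Module.finrank ℝ E) h hs hpos hL1 hα.le hC hCW ?_ hgr hW1 hW2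
      (fun κ c0 k x0 hκ hle heq =>
        touching h hs hV.continuous hW.continuous volume hmap hκ (hVk k) hle heq) x1 k1
    have := (Real.sqrt_lt' hL1).1 hL
    rw [div_lt_iff₀ hβ] at this
    linarith
  refine le_of_forall_pos_le_add fun ε hε => ?_
  refine (key (Real.sqrt (α / β) + ε / (‖x - z‖ + 1)) (by
    have : 0 < ε / (‖x - z‖ + 1) := by positivity
    linarith)).trans ?_
  rw [add_mul]
  gcongr
  rw [div_mul_eq_mul_div, div_le_iff₀ (by positivity)]
  nlinarith

end concl
end Caff

/-- Caffarelli's contraction theorem: under (A1), the Brenier map `∇φ₀`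
is globally Lipschitz with constant at most `√(α/β)`. -/
theorem caffarelli_contraction {d : ℕ}
    (μ ν : Measure (EuclideanSpace ℝ (Fin d)))
    (V W : EuclideanSpace ℝ (Fin d) → ℝ) (α β : ℝ)
    (hA1 : AssumptionA1 μ ν V W α β)
    (φ₀ : EuclideanSpace ℝ (Fin d) → ℝ) (hφ₀ : IsBrenierPotential μ ν φ₀) :
    LipschitzWith (Real.toNNReal (Real.sqrt (α / β))) (fun x => gradient φ₀ x) := by
  obtain ⟨-, -, hμ, hν, hV, hW, hα, hβ, hVα, hWβ⟩ := hA1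
  obtain ⟨hc, hd, hmap⟩ := hφ₀
  rw [hμ, hν] at hmap
  refine LipschitzWith.of_dist_le_mul fun x z => ?_
  rw [dist_eq_norm, dist_eq_norm, Real.coe_toNNReal _ (Real.sqrt_nonneg _)]
  exact Caff.caff (Caff.isGrad_of_convex hc hd) hα hβ (hV.of_le (WithTop.coe_le_coe.2 (le_top : (2 : ℕ∞) ≤ ⊤)))
    (hW.of_le (WithTop.coe_le_coe.2 (le_top : (2 : ℕ∞) ≤ ⊤))) hVα hWβ hmap x z
end

section
/- Suppose μ and ν are probability measures on ℝ^d satisfying assumption (A1) with constants α, β > 0. Let ε > 0 and let (f_ε, g_ε) be a Schrödinger pair for (μ, ν, ε), with entropic potential φ_ε := |·|²/2 − f_ε. Then φ_ε is twice differentiable, ∇φ_ε is globally Lipschitz, and for every x ∈ ℝ^d, 0 ≼ ∇²φ_ε(x) ≼ (1/2)(√(4α/β + ε²α²) − εα) · I_d. In particular, since (1/2)(√(4α/β + ε²α²) − εα) ≤ √(α/β), the Lipschitz constant of ∇φ_ε is at most √(α/β) uniformly in ε. -/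
open MeasureTheory Real
open scoped RealInnerProductSpace

lemma bm_one {A B C : Set ℝ} (hA : MeasurableSet A) (hB : MeasurableSet B)
    (hAn : A.Nonempty) (hBn : B.Nonempty) (h : ∀ x ∈ A, ∀ y ∈ B, x + y ∈ C) :
    volume A + volume B ≤ volume C := by
  obtain ⟨a, ha⟩ := hAn
  obtain ⟨b, hb⟩ := hBn
  rw [hA.measure_eq_iSup_isCompact, hB.measure_eq_iSup_isCompact]
  have key : ∀ K : Set ℝ, K ⊆ A → IsCompact K → ∀ L : Set ℝ, L ⊆ B → IsCompact L →
      volume K + volume L ≤ volume C := by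
    intro K hKA hK L hLB hL
    have hK' : IsCompact (insert a K) := hK.insert a
    have hL' : IsCompact (insert b L) := hL.insert b
    obtain ⟨M, hM, hMmax⟩ := hK'.exists_isGreatest (Set.insert_nonempty _ _)
    obtain ⟨m, hm, hmmin⟩ := hL'.exists_isLeast (Set.insert_nonempty _ _)
    have hMA : M ∈ A := (Set.insert_subset ha hKA) hM
    have hmB : m ∈ B := (Set.insert_subset hb hLB) hm
    have e1 : volume K = volume ((fun x => m + x) '' K) := by
      rw [Set.image_add_left, measure_preimage_add]
    have e2 : volume L = volume ((fun x => M + x) '' L) := by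
      rw [Set.image_add_left, measure_preimage_add]
    rw [e1, e2]
    have hmeas : MeasurableSet ((fun x => M + x) '' L) :=
      (hL.image (by fun_prop)).measurableSet
    rw [← measure_union₀ hmeas.nullMeasurableSet]
    · apply measure_mono
      rintro z (⟨x, hx, rfl⟩ | ⟨y, hy, rfl⟩)
      · simpa [add_comm] using h x (hKA hx) m hmB
      · exact h M hMA y (hLB hy)
    · refine measure_mono_null (t := {M + m}) ?_ (by simp)
      rintro z ⟨⟨x, hx, rfl⟩, ⟨y, hy, hxy⟩⟩
      have h1 : x ≤ M := hMmax (Set.mem_insert_of_mem _ hx)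
      have h2 : m ≤ y := hmmin (Set.mem_insert_of_mem _ hy)
      simp only [Set.mem_singleton_iff] at hxy ⊢
      linarith
  simp only [iSup_and', ]
  refine ENNReal.biSup_add_biSup_le' (p := fun K => K ⊆ A ∧ IsCompact K)
    (q := fun K => K ⊆ B ∧ IsCompact K) ⟨∅, by simp⟩ ⟨∅, by simp⟩ ?_
  intro K hK L hL
  exact key K hK.1 hK.2 L hL.1 hL.2

lemma pl_norm {u v h : ℝ → ℝ} (hu : Measurable u) (hv : Measurable v) (hh : Measurable h)
    (hu0 : ∀ x, 0 ≤ u x) (hv0 : ∀ x, 0 ≤ v x) (hh0 : ∀ x, 0 ≤ h x)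
    (hu1 : ∀ x, u x ≤ 1) (hv1 : ∀ x, v x ≤ 1)
    (hus : ∀ t < 1, ∃ x, t < u x) (hvs : ∀ t < 1, ∃ x, t < v x)
    (H : ∀ x y, u x * v y ≤ h ((x + y) / 2) ^ 2) :
    (∫⁻ x, ENNReal.ofReal (u x)) + (∫⁻ x, ENNReal.ofReal (v x)) ≤ 2 * ∫⁻ x, ENNReal.ofReal (h x) := by
  rw [lintegral_eq_lintegral_meas_lt _ (.of_forall hu0) hu.aemeasurable,
    lintegral_eq_lintegral_meas_lt _ (.of_forall hv0) hv.aemeasurable,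
    lintegral_eq_lintegral_meas_lt _ (.of_forall hh0) hh.aemeasurable]
  rw [← lintegral_const_mul' _ _ (by simp)]
  refine (le_lintegral_add _ _).trans ?_
  refine setLIntegral_mono' measurableSet_Ioi ?_
  intro t ht
  have ht : 0 < t := ht
  by_cases h1 : t < 1
  · have e : 2 * volume {a | t < h a} = volume ((fun x : ℝ => (1/2 : ℝ) * x) ⁻¹' {a | t < h a}) := by
      rw [Real.volume_preimage_mul_left (by norm_num)]
      simp
    rw [e]
    refine bm_one (measurableSet_lt measurable_const hu) (measurableSet_lt measurable_const hv)
      (hus t h1) (hvs t h1) ?_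
    intro x hx y hy
    simp only [Set.mem_ofPred_eq, Set.mem_preimage] at hx hy ⊢
    have := H x y
    rw [show (1/2 : ℝ) * (x + y) = (x + y) / 2 by ring]
    by_contra hc
    push Not at hc
    nlinarith [hh0 ((x+y)/2)]
  · have e1 : {a | t < u a} = ∅ := by
      ext x; simp; linarith [hu1 x]
    have e2 : {a | t < v a} = ∅ := by
      ext x; simp; linarith [hv1 x]
    simp [e1, e2]

lemma ennreal_amgm (X Y : ENNReal) : 4 * (X * Y) ≤ (X + Y) ^ 2 := by
  by_cases hX : X = ⊤
  · simp [hX]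
  by_cases hY : Y = ⊤
  · simp [hY]
  lift X to NNReal using hX
  lift Y to NNReal using hY
  norm_cast
  rw [← NNReal.coe_le_coe]
  push_cast
  nlinarith [sq_nonneg ((X:ℝ) - Y)]

lemma pl_bdd {u v h : ℝ → ENNReal} (hu : Measurable u) (hv : Measurable v) (hh : Measurable h)
    (hub : ⨆ x, u x ≠ ⊤) (hvb : ⨆ x, v x ≠ ⊤)
    (H : ∀ x y, u x * v y ≤ h ((x + y) / 2) ^ 2) :
    (∫⁻ x, u x) * (∫⁻ x, v x) ≤ (∫⁻ x, h x) ^ 2 := by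
  set a := ⨆ x, u x with ha
  set b := ⨆ x, v x with hb
  have hua : ∀ x, u x ≤ a := le_iSup u
  have hvb' : ∀ x, v x ≤ b := le_iSup v
  by_cases ha0 : a = 0
  · have : ∀ x, u x = 0 := fun x => le_antisymm (ha0 ▸ hua x) (zero_le)
    simp [this]
  by_cases hb0 : b = 0
  · have : ∀ x, v x = 0 := fun x => le_antisymm (hb0 ▸ hvb' x) (zero_le)
    simp [this]
  -- square root of ab
  set c : ENNReal := ENNReal.ofReal (Real.sqrt (a.toReal * b.toReal)) with hc
  have hapos : 0 < a.toReal := ENNReal.toReal_pos ha0 hub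
  have hbpos : 0 < b.toReal := ENNReal.toReal_pos hb0 hvb
  have hc2 : c ^ 2 = a * b := by
    rw [hc, ← ENNReal.ofReal_pow (by positivity), Real.sq_sqrt (by positivity),
      ENNReal.ofReal_mul (by positivity), ENNReal.ofReal_toReal hub, ENNReal.ofReal_toReal hvb]
  have hc0 : c ≠ 0 := by
    rw [hc]; exact (ENNReal.ofReal_pos.2 (by positivity)).ne'
  have hct : c ≠ ⊤ := ENNReal.ofReal_ne_top
  have key := pl_norm (u := fun x => (u x / a).toReal) (v := fun x => (v x / b).toReal)
    (h := fun x => (min (h x / c) 1).toReal) (by fun_prop) (by fun_prop) (by fun_prop)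
    (fun _ => ENNReal.toReal_nonneg) (fun _ => ENNReal.toReal_nonneg) (fun _ => ENNReal.toReal_nonneg)
    (fun x => ENNReal.toReal_le_of_le_ofReal (by simp) (by
      simpa using ENNReal.div_le_of_le_mul (by simpa using hua x)))
    (fun x => ENNReal.toReal_le_of_le_ofReal (by simp) (by
      simpa using ENNReal.div_le_of_le_mul (by simpa using hvb' x))) ?_ ?_ ?_
  · have e1 : ∀ x, ENNReal.ofReal (u x / a).toReal = a⁻¹ * u x := fun x => by
      rw [ENNReal.ofReal_toReal (ENNReal.div_ne_top ((hua x).trans_lt hub.lt_top).ne ha0), mul_comm,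
        div_eq_mul_inv]
    have e2 : ∀ x, ENNReal.ofReal (v x / b).toReal = b⁻¹ * v x := fun x => by
      rw [ENNReal.ofReal_toReal (ENNReal.div_ne_top ((hvb' x).trans_lt hvb.lt_top).ne hb0), mul_comm,
        div_eq_mul_inv]
    have e3 : ∀ x, ENNReal.ofReal (min (h x / c) 1).toReal ≤ c⁻¹ * h x := fun x => by
      rw [ENNReal.ofReal_toReal (by simp), mul_comm, ← div_eq_mul_inv]
      exact min_le_left _ _
    simp only [e1, e2] at key
    rw [lintegral_const_mul _ hu, lintegral_const_mul _ hv] at key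
    have key2 := key.trans (mul_le_mul_right (lintegral_mono e3) 2)
    rw [lintegral_const_mul _ hh] at key2
    have k3 := (ennreal_amgm _ _).trans (pow_le_pow_left' key2 2)
    have k4 : 4 * (∫⁻ x, u x) * (∫⁻ x, v x) ≤ 4 * (∫⁻ x, h x) ^ 2 := by
      calc 4 * (∫⁻ x, u x) * (∫⁻ x, v x)
          = (a * a⁻¹) * (b * b⁻¹) * (4 * (∫⁻ x, u x) * (∫⁻ x, v x)) := by
            rw [ENNReal.mul_inv_cancel ha0 hub, ENNReal.mul_inv_cancel hb0 hvb]; simp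
        _ = c ^ 2 * (4 * (a⁻¹ * (∫⁻ x, u x) * (b⁻¹ * (∫⁻ x, v x)))) := by rw [hc2]; ring
        _ ≤ c ^ 2 * (2 * (c⁻¹ * ∫⁻ x, h x)) ^ 2 := by gcongr
        _ = (c * c⁻¹) ^ 2 * (4 * (∫⁻ x, h x) ^ 2) := by ring
        _ = _ := by rw [ENNReal.mul_inv_cancel hc0 hct]; simp
    rw [mul_assoc] at k4
    exact (ENNReal.mul_le_mul_iff_right (by simp) (by simp)).1 k4
  · intro t ht
    by_cases ht0 : t < 0
    · exact ⟨0, ht0.trans_le ENNReal.toReal_nonneg⟩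
    push Not at ht0
    have : ENNReal.ofReal t * a < a := by
      conv_rhs => rw [← one_mul a]
      exact (ENNReal.mul_lt_mul_iff_left ha0 hub).2 (by simpa using ht)
    obtain ⟨x, hx⟩ := lt_iSup_iff.1 this
    refine ⟨x, ?_⟩
    rw [← ENNReal.ofReal_lt_iff_lt_toReal ht0
      (ENNReal.div_ne_top ((hua x).trans_lt hub.lt_top).ne ha0)]
    exact (ENNReal.lt_div_iff_mul_lt (Or.inl ha0) (Or.inl hub)).2 hx
  · intro t ht
    by_cases ht0 : t < 0
    · exact ⟨0, ht0.trans_le ENNReal.toReal_nonneg⟩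
    push Not at ht0
    have : ENNReal.ofReal t * b < b := by
      conv_rhs => rw [← one_mul b]
      exact (ENNReal.mul_lt_mul_iff_left hb0 hvb).2 (by simpa using ht)
    obtain ⟨x, hx⟩ := lt_iSup_iff.1 this
    refine ⟨x, ?_⟩
    rw [← ENNReal.ofReal_lt_iff_lt_toReal ht0
      (ENNReal.div_ne_top ((hvb' x).trans_lt hvb.lt_top).ne hb0)]
    exact (ENNReal.lt_div_iff_mul_lt (Or.inl hb0) (Or.inl hvb)).2 hx
  · intro x y
    have : u x / a * (v y / b) ≤ (min (h ((x + y) / 2) / c) 1) ^ 2 := by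
      rcases min_choice (h ((x + y) / 2) / c) 1 with hm | hm
      · rw [hm]
        calc u x / a * (v y / b) = u x * v y * (a⁻¹ * b⁻¹) := by
              simp only [div_eq_mul_inv]; ring
          _ = u x * v y * (c ^ 2)⁻¹ := by
              rw [hc2, ENNReal.mul_inv (Or.inl ha0) (Or.inl hub)]
          _ ≤ h ((x + y) / 2) ^ 2 * (c ^ 2)⁻¹ := by gcongr; exact H x y
          _ = _ := by rw [ENNReal.inv_pow, ← mul_pow, ← div_eq_mul_inv]
      · rw [hm]
        have h1 : u x / a ≤ 1 := ENNReal.div_le_of_le_mul (by simpa using hua x)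
        have h2 : v y / b ≤ 1 := ENNReal.div_le_of_le_mul (by simpa using hvb' y)
        simpa using mul_le_mul' h1 h2
    have := ENNReal.toReal_mono (by simp) this
    simpa [ENNReal.toReal_mul, ENNReal.toReal_pow] using this

lemma pl_real {u v h : ℝ → ENNReal} (hu : Measurable u) (hv : Measurable v) (hh : Measurable h)
    (H : ∀ x y, u x * v y ≤ h ((x + y) / 2) ^ 2) :
    (∫⁻ x, u x) * (∫⁻ x, v x) ≤ (∫⁻ x, h x) ^ 2 := by
  by_cases hu0 : ∫⁻ x, u x = 0
  · simp [hu0]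
  by_cases hv0 : ∫⁻ x, v x = 0
  · simp [hv0]
  have lim : ∀ w : ℝ → ENNReal, Measurable w →
      Filter.Tendsto (fun n : ℕ => ∫⁻ x, min (w x) n) Filter.atTop (nhds (∫⁻ x, w x)) := by
    intro w hw
    refine lintegral_tendsto_of_tendsto_of_monotone (fun n => by fun_prop) ?_ ?_
    · refine .of_forall fun x n m hnm => ?_
      simp only
      gcongr
    · refine .of_forall fun x => ?_
      have := (tendsto_const_nhds (x := w x)).min ENNReal.tendsto_nat_nhds_top
      simpa using this
  refine le_of_tendsto' (ENNReal.Tendsto.mul (lim u hu) (Or.inl hu0) (lim v hv) (Or.inl hv0)) ?_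
  intro n
  refine pl_bdd (by fun_prop) (by fun_prop) hh ?_ ?_ ?_
  · exact ((iSup_le fun x => min_le_right _ _).trans_lt (ENNReal.natCast_lt_top n)).ne
  · exact ((iSup_le fun x => min_le_right _ _).trans_lt (ENNReal.natCast_lt_top n)).ne
  · intro x y
    exact (mul_le_mul' (min_le_left _ _) (min_le_left _ _)).trans (H x y)

lemma pl_pi : ∀ (n : ℕ) {u v h : (Fin n → ℝ) → ENNReal}, Measurable u → Measurable v →
    Measurable h → (∀ x y, u x * v y ≤ h ((2⁻¹ : ℝ) • (x + y)) ^ 2) →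
    (∫⁻ x, u x) * (∫⁻ x, v x) ≤ (∫⁻ x, h x) ^ 2 := by
  intro n
  induction n with
  | zero =>
    intro u v h hu hv hh H
    simp only [Measure.volume_pi_eq_dirac (0 : Fin 0 → ℝ)]
    rw [lintegral_dirac' _ hu, lintegral_dirac' _ hv, lintegral_dirac' _ hh]
    simpa using H 0 0
  | succ n ih =>
    intro u v h hu hv hh H
    have E := (volume_preserving_piFinSuccAbove (fun _ : Fin (n + 1) => ℝ) 0).symm
    have fub : ∀ w : (Fin (n + 1) → ℝ) → ENNReal, Measurable w →
        ∫⁻ x, w x = ∫⁻ s : ℝ, ∫⁻ z : Fin n → ℝ,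
          w ((MeasurableEquiv.piFinSuccAbove (fun _ : Fin (n + 1) => ℝ) 0).symm (s, z)) := by
      intro w hw
      rw [← E.lintegral_comp hw, Measure.volume_eq_prod, lintegral_prod]
      exact (hw.comp (MeasurableEquiv.measurable _)).aemeasurable
    rw [fub u hu, fub v hv, fub h hh]
    have meas : ∀ w : (Fin (n + 1) → ℝ) → ENNReal, Measurable w → 
        Measurable (fun p : ℝ × (Fin n → ℝ) => 
          w ((MeasurableEquiv.piFinSuccAbove (fun _ : Fin (n + 1) => ℝ) 0).symm p)) :=
      fun w hw => hw.comp (MeasurableEquiv.measurable _)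
    refine pl_real (meas u hu).lintegral_prod_right' (meas v hv).lintegral_prod_right'
      (meas h hh).lintegral_prod_right' ?_
    intro s t
    refine ih ((meas u hu).comp measurable_prodMk_left) ((meas v hv).comp measurable_prodMk_left)
      ((meas h hh).comp measurable_prodMk_left) ?_
    intro x y
    refine (H _ _).trans (le_of_eq ?_)
    congr 2
    ext i
    refine Fin.cases ?_ (fun j => ?_) i
    · simp [MeasurableEquiv.piFinSuccAbove]; ring
    · simp [MeasurableEquiv.piFinSuccAbove]; ring

lemma pl_euclid {d : ℕ} {u v h : EuclideanSpace ℝ (Fin d) → ENNReal} (hu : Measurable u)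
    (hv : Measurable v) (hh : Measurable h) 
    (H : ∀ x y, u x * v y ≤ h ((2⁻¹ : ℝ) • (x + y)) ^ 2) :
    (∫⁻ x, u x) * (∫⁻ x, v x) ≤ (∫⁻ x, h x) ^ 2 := by
  have E := PiLp.volume_preserving_toLp (Fin d)
  rw [← E.lintegral_comp hu, ← E.lintegral_comp hv, ← E.lintegral_comp hh]
  refine pl_pi d (hu.comp E.measurable) (hv.comp E.measurable) (hh.comp E.measurable) ?_
  intro x y
  simpa using H _ _

/-- The Laplace transform of `exp (-U)`. -/
noncomputable def lapZ {d : ℕ} (U : EuclideanSpace ℝ (Fin d) → ℝ)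
    (θ : EuclideanSpace ℝ (Fin d)) : ENNReal :=
  ∫⁻ y, ENNReal.ofReal (Real.exp (⟪θ, y⟫ - U y))

lemma lapZ_upper {d : ℕ} {U : EuclideanSpace ℝ (Fin d) → ℝ} (hUm : Measurable U) {κ : ℝ}
    (hκ : 0 < κ) (hU : ∀ z s, κ * ‖s‖ ^ 2 ≤ U (z + s) + U (z - s) - 2 * U z)
    (θ t : EuclideanSpace ℝ (Fin d)) :
    lapZ U (θ + t) * lapZ U (θ - t) ≤ ENNReal.ofReal (Real.exp (‖t‖ ^ 2 / κ)) * lapZ U θ ^ 2 := by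
  have hm : ∀ θ : EuclideanSpace ℝ (Fin d),
      Measurable (fun y => ENNReal.ofReal (Real.exp (⟪θ, y⟫ - U y))) := fun θ => by fun_prop
  have key := pl_euclid (hm (θ + t)) (hm (θ - t))
    ((hm θ).const_mul (ENNReal.ofReal (Real.exp (‖t‖ ^ 2 / (2 * κ))))) ?_
  · rw [lintegral_const_mul _ (hm θ), mul_pow, ← ENNReal.ofReal_pow (by positivity),
      ← Real.exp_nat_mul] at key
    have e : ((2 : ℕ) : ℝ) * (‖t‖ ^ 2 / (2 * κ)) = ‖t‖ ^ 2 / κ := by push_cast; field_simp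
    rw [e] at key
    exact key
  · intro x y
    rw [← ENNReal.ofReal_mul (by positivity), ← ENNReal.ofReal_mul (by positivity),
      ← ENNReal.ofReal_pow (by positivity), ← Real.exp_add, ← Real.exp_add, ← Real.exp_nat_mul]
    apply ENNReal.ofReal_le_ofReal
    apply Real.exp_le_exp.2
    obtain ⟨z, s, rfl, rfl⟩ : ∃ z s, x = z + s ∧ y = z - s := by
      refine ⟨(2⁻¹ : ℝ) • (x + y), (2⁻¹ : ℝ) • (x - y), ?_, ?_⟩
      · rw [← smul_add]; simp [← two_smul ℝ]
      · rw [← smul_sub]; simp [← two_smul ℝ]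
    have hz : (2⁻¹ : ℝ) • (z + s + (z - s)) = z := by
      rw [add_add_sub_cancel, ← two_smul ℝ, smul_smul]; norm_num
    rw [hz]
    have h1 := hU z s
    have h2 := real_inner_le_norm t s
    have h3 : 2 * (‖t‖ * ‖s‖) ≤ ‖t‖ ^ 2 / κ + κ * ‖s‖ ^ 2 := by
      have : ‖t‖ ^ 2 / κ + κ * ‖s‖ ^ 2 - 2 * (‖t‖ * ‖s‖) = (‖t‖ - κ * ‖s‖) ^ 2 / κ := by
        field_simp; ring
      have : 0 ≤ (‖t‖ - κ * ‖s‖) ^ 2 / κ := by positivity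
      linarith
    have h4 : ‖t‖ ^ 2 / (2 * κ) = (‖t‖ ^ 2 / κ) / 2 := by field_simp
    simp only [inner_add_left, inner_sub_left, inner_add_right, inner_sub_right]
    push_cast
    rw [h4]
    linarith

lemma lint_cs {d : ℕ} {u v h : EuclideanSpace ℝ (Fin d) → ENNReal} (hu : Measurable u)
    (hv : Measurable v) (H : ∀ x, h x ^ 2 ≤ u x * v x) :
    (∫⁻ x, h x) ^ 2 ≤ (∫⁻ x, u x) * (∫⁻ x, v x) := by
  have h1 : ∀ x, h x ≤ u x ^ (1/2 : ℝ) * v x ^ (1/2 : ℝ) := by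
    intro x
    rw [← ENNReal.mul_rpow_of_nonneg _ _ (by norm_num)]
    refine le_trans (le_of_eq ?_) (ENNReal.rpow_le_rpow (H x) (by norm_num : (0:ℝ) ≤ 1/2))
    rw [← ENNReal.rpow_natCast, ← ENNReal.rpow_mul]; norm_num
  have h2 := (lintegral_mono (μ := volume) h1).trans
    (ENNReal.lintegral_mul_norm_pow_le (p := 1/2) (q := 1/2) hu.aemeasurable hv.aemeasurable
      (by norm_num) (by norm_num) (by norm_num))
  refine (pow_le_pow_left' h2 2).trans (le_of_eq ?_)
  rw [mul_pow]
  simp only [← ENNReal.rpow_natCast, ← ENNReal.rpow_mul]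
  norm_num

lemma lapZ_lower_aux {d : ℕ} {U : EuclideanSpace ℝ (Fin d) → ℝ} (hUm : Measurable U) 
    (θ t s : EuclideanSpace ℝ (Fin d)) (c : ℝ)
    (hU : ∀ z, U (z + s) + U (z - s) - 2 * U z ≤ 2 * ⟪t, s⟫ - c) :
    ENNReal.ofReal (Real.exp c) * lapZ U θ ^ 2 ≤ lapZ U (θ + t) * lapZ U (θ - t) := by
  have hm : ∀ θ : EuclideanSpace ℝ (Fin d),
      Measurable (fun y => ENNReal.ofReal (Real.exp (⟪θ, y⟫ - U y))) := fun θ => by fun_prop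
  have e1 : lapZ U (θ + t) = ∫⁻ y, ENNReal.ofReal (Real.exp (⟪θ + t, y + s⟫ - U (y + s))) :=
    (lintegral_add_right_eq_self (fun y => ENNReal.ofReal (Real.exp (⟪θ + t, y⟫ - U y))) s).symm
  have e2 : lapZ U (θ - t) = ∫⁻ y, ENNReal.ofReal (Real.exp (⟪θ - t, y - s⟫ - U (y - s))) :=
    (lintegral_sub_right_eq_self (fun y => ENNReal.ofReal (Real.exp (⟪θ - t, y⟫ - U y))) s).symm
  rw [e1, e2]
  have key := lint_cs (u := fun y => ENNReal.ofReal (Real.exp (⟪θ + t, y + s⟫ - U (y + s))))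
    (v := fun y => ENNReal.ofReal (Real.exp (⟪θ - t, y - s⟫ - U (y - s))))
    (h := fun y => ENNReal.ofReal (Real.exp (c / 2)) * ENNReal.ofReal (Real.exp (⟪θ, y⟫ - U y)))
    (by fun_prop) (by fun_prop) ?_
  · rw [lintegral_const_mul _ (hm θ), mul_pow, ← ENNReal.ofReal_pow (by positivity),
      ← Real.exp_nat_mul] at key
    have e : ((2 : ℕ) : ℝ) * (c / 2) = c := by push_cast; ring
    rw [e] at key
    exact key
  · intro y
    rw [← ENNReal.ofReal_mul (by positivity), ← ENNReal.ofReal_mul (by positivity),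
      ← ENNReal.ofReal_pow (by positivity), ← Real.exp_add, ← Real.exp_add, ← Real.exp_nat_mul]
    apply ENNReal.ofReal_le_ofReal
    apply Real.exp_le_exp.2
    have h1 := hU y
    simp only [inner_add_left, inner_sub_left, inner_add_right, inner_sub_right]
    push_cast
    linarith

lemma lapZ_lower {d : ℕ} {U : EuclideanSpace ℝ (Fin d) → ℝ} (hUm : Measurable U) {M : ℝ}
    (hM : 0 < M) (hU : ∀ z s, U (z + s) + U (z - s) - 2 * U z ≤ M * ‖s‖ ^ 2)
    (θ t : EuclideanSpace ℝ (Fin d)) :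
    ENNReal.ofReal (Real.exp (‖t‖ ^ 2 / M)) * lapZ U θ ^ 2 ≤ lapZ U (θ + t) * lapZ U (θ - t) := by
  refine lapZ_lower_aux hUm θ t (M⁻¹ • t) _ fun z => ?_
  refine (hU z _).trans (le_of_eq ?_)
  rw [norm_smul, inner_smul_right, real_inner_self_eq_norm_sq, mul_pow, Real.norm_eq_abs, sq_abs]
  field_simp
  ring

lemma lapZ_convex {d : ℕ} {U : EuclideanSpace ℝ (Fin d) → ℝ} (hUm : Measurable U)
    (θ t : EuclideanSpace ℝ (Fin d)) :
    lapZ U θ ^ 2 ≤ lapZ U (θ + t) * lapZ U (θ - t) := by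
  have := lapZ_lower_aux hUm θ t 0 0 (fun z => by simp; linarith)
  simpa using this

/-- One half of the Schrödinger system. -/
lemma half_lapZ {d : ℕ} {ν : Measure (EuclideanSpace ℝ (Fin d))}
    {W f g : EuclideanSpace ℝ (Fin d) → ℝ} {ε : ℝ} (hε : 0 < ε)
    (hν : ν = volume.withDensity (fun y => ENNReal.ofReal (Real.exp (-W y))))
    (hW : Measurable W) (hg : Measurable g)
    (h : ∀ x, Integrable (fun y => Real.exp ((g y - ‖x - y‖ ^ 2 / 2) / ε)) ν ∧
      0 < ∫ y, Real.exp ((g y - ‖x - y‖ ^ 2 / 2) / ε) ∂ν ∧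
      f x = -ε * Real.log (∫ y, Real.exp ((g y - ‖x - y‖ ^ 2 / 2) / ε) ∂ν)) 
    (x : EuclideanSpace ℝ (Fin d)) :
    lapZ (fun y => entPot g y / ε + W y) (ε⁻¹ • x) = ENNReal.ofReal (Real.exp (entPot f x / ε)) := by
  obtain ⟨hi, hpos, hf⟩ := h x
  have e1 : Real.exp (entPot f x / ε) = Real.exp (‖x‖ ^ 2 / 2 / ε) *
      ∫ y, Real.exp ((g y - ‖x - y‖ ^ 2 / 2) / ε) ∂ν := by
    rw [entPot, hf, show (‖x‖ ^ 2 / 2 - -ε * Real.log (∫ y, Real.exp ((g y - ‖x - y‖ ^ 2 / 2) / ε) ∂ν)) / ε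
      = ‖x‖ ^ 2 / 2 / ε + Real.log (∫ y, Real.exp ((g y - ‖x - y‖ ^ 2 / 2) / ε) ∂ν) by
        field_simp; ring, Real.exp_add, Real.exp_log hpos]
  rw [e1, ENNReal.ofReal_mul (by positivity), ofReal_integral_eq_lintegral_ofReal hi
    (.of_forall fun _ => (Real.exp_pos _).le), hν,
    lintegral_withDensity_eq_lintegral_mul _ (by fun_prop) (by fun_prop),
    ← lintegral_const_mul _ (by fun_prop)]
  refine lintegral_congr fun y => ?_
  simp only [Pi.mul_apply]
  rw [← ENNReal.ofReal_mul (by positivity), ← ENNReal.ofReal_mul (by positivity),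
    ← Real.exp_add, ← Real.exp_add]
  congr 2
  rw [entPot, norm_sub_sq_real, real_inner_smul_left]
  field_simp
  ring

/-- Upper bound for second differences. -/
lemma half_upper {d : ℕ} {W φ ψ : EuclideanSpace ℝ (Fin d) → ℝ} {ε c β : ℝ} (hε : 0 < ε)
    (hW : Measurable W) (hψ : Measurable ψ) (hc : 0 ≤ c) (hβ : 0 < β)
    (hZ : ∀ x, lapZ (fun y => ψ y / ε + W y) (ε⁻¹ • x) = ENNReal.ofReal (Real.exp (φ x / ε)))
    (hWs : ∀ z s, β * ‖s‖ ^ 2 ≤ W (z + s) + W (z - s) - 2 * W z)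
    (hψs : ∀ z s, c * ‖s‖ ^ 2 ≤ ψ (z + s) + ψ (z - s) - 2 * ψ z)
    (x t : EuclideanSpace ℝ (Fin d)) :
    φ (x + t) + φ (x - t) - 2 * φ x ≤ (c + ε * β)⁻¹ * ‖t‖ ^ 2 := by
  have hκ : 0 < c / ε + β := by positivity
  have key := lapZ_upper (U := fun y => ψ y / ε + W y) (by fun_prop) hκ (fun z s => by
    have h1 := hWs z s
    have h2 := div_le_div_of_nonneg_right (hψs z s) hε.le
    have h3 : (ψ (z + s) + ψ (z - s) - 2 * ψ z) / ε = ψ (z + s) / ε + ψ (z - s) / ε 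
      - 2 * (ψ z / ε) := by ring
    have h4 : c * ‖s‖ ^ 2 / ε = c / ε * ‖s‖ ^ 2 := by ring
    rw [h3, h4] at h2
    linarith) (ε⁻¹ • x) (ε⁻¹ • t)
  rw [← smul_add, ← smul_sub, hZ, hZ, hZ, ← ENNReal.ofReal_mul (by positivity),
    ← ENNReal.ofReal_pow (by positivity), ← ENNReal.ofReal_mul (by positivity),
    ENNReal.ofReal_le_ofReal_iff (by positivity), ← Real.exp_nat_mul, ← Real.exp_add,
    ← Real.exp_add, Real.exp_le_exp, norm_smul, mul_pow, Real.norm_eq_abs, sq_abs] at key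
  have h5 : (ε⁻¹ ^ 2 * ‖t‖ ^ 2) / (c / ε + β) = (c + ε * β)⁻¹ * ‖t‖ ^ 2 / ε := by
    field_simp
  rw [h5] at key
  have h6 := mul_le_mul_of_nonneg_left key hε.le
  field_simp at h6 ⊢
  push_cast at h6
  linarith

lemma half_lower {d : ℕ} {V φ ψ : EuclideanSpace ℝ (Fin d) → ℝ} {ε L α : ℝ} (hε : 0 < ε)
    (hV : Measurable V) (hφ : Measurable φ) (hL : 0 ≤ L) (hα : 0 < α)
    (hZ : ∀ y, lapZ (fun x => φ x / ε + V x) (ε⁻¹ • y) = ENNReal.ofReal (Real.exp (ψ y / ε)))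
    (hVs : ∀ z s, V (z + s) + V (z - s) - 2 * V z ≤ α * ‖s‖ ^ 2)
    (hφs : ∀ z s, φ (z + s) + φ (z - s) - 2 * φ z ≤ L * ‖s‖ ^ 2)
    (x t : EuclideanSpace ℝ (Fin d)) :
    (L + ε * α)⁻¹ * ‖t‖ ^ 2 ≤ ψ (x + t) + ψ (x - t) - 2 * ψ x := by
  have hκ : 0 < L / ε + α := by positivity
  have key := lapZ_lower (U := fun y => φ y / ε + V y) (by fun_prop) hκ (fun z s => by
    have h1 := hVs z s
    have h2 := div_le_div_of_nonneg_right (hφs z s) hε.le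
    have h3 : (φ (z + s) + φ (z - s) - 2 * φ z) / ε = φ (z + s) / ε + φ (z - s) / ε 
      - 2 * (φ z / ε) := by ring
    have h4 : L * ‖s‖ ^ 2 / ε = L / ε * ‖s‖ ^ 2 := by ring
    rw [h3, h4] at h2
    linarith) (ε⁻¹ • x) (ε⁻¹ • t)
  rw [← smul_add, ← smul_sub, hZ, hZ, hZ, ← ENNReal.ofReal_mul (by positivity),
    ← ENNReal.ofReal_pow (by positivity), ← ENNReal.ofReal_mul (by positivity),
    ENNReal.ofReal_le_ofReal_iff (by positivity), ← Real.exp_nat_mul, ← Real.exp_add,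
    ← Real.exp_add, Real.exp_le_exp, norm_smul, mul_pow, Real.norm_eq_abs, sq_abs] at key
  have h5 : (ε⁻¹ ^ 2 * ‖t‖ ^ 2) / (L / ε + α) = (L + ε * α)⁻¹ * ‖t‖ ^ 2 / ε := by
    field_simp
  rw [h5] at key
  have h6 := mul_le_mul_of_nonneg_left key hε.le
  field_simp at h6 ⊢
  push_cast at h6
  linarith

lemma half_convex {d : ℕ} {V φ ψ : EuclideanSpace ℝ (Fin d) → ℝ} {ε : ℝ} (hε : 0 < ε)
    (hV : Measurable V) (hφ : Measurable φ)
    (hZ : ∀ y, lapZ (fun x => φ x / ε + V x) (ε⁻¹ • y) = ENNReal.ofReal (Real.exp (ψ y / ε)))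
    (x t : EuclideanSpace ℝ (Fin d)) :
    0 ≤ ψ (x + t) + ψ (x - t) - 2 * ψ x := by
  have key := lapZ_convex (U := fun y => φ y / ε + V y) (by fun_prop) (ε⁻¹ • x) (ε⁻¹ • t)
  rw [← smul_add, ← smul_sub, hZ, hZ, hZ, ← ENNReal.ofReal_mul (by positivity),
    ← ENNReal.ofReal_pow (by positivity),
    ENNReal.ofReal_le_ofReal_iff (by positivity), ← Real.exp_nat_mul, ← Real.exp_add,
    Real.exp_le_exp] at key
  have h6 := mul_le_mul_of_nonneg_left key hε.le
  field_simp at h6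
  push_cast at h6
  linarith

/-- The fixed point argument. -/
lemma second_diff_bound {d : ℕ} {V W φ ψ : EuclideanSpace ℝ (Fin d) → ℝ} {ε α β : ℝ} (hε : 0 < ε)
    (hα : 0 < α) (hβ : 0 < β)
    (hV : Measurable V) (hW : Measurable W) (hφ : Measurable φ) (hψ : Measurable ψ)
    (hZ1 : ∀ x, lapZ (fun y => ψ y / ε + W y) (ε⁻¹ • x) = ENNReal.ofReal (Real.exp (φ x / ε)))
    (hZ2 : ∀ y, lapZ (fun x => φ x / ε + V x) (ε⁻¹ • y) = ENNReal.ofReal (Real.exp (ψ y / ε)))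
    (hVs : ∀ z s, V (z + s) + V (z - s) - 2 * V z ≤ α * ‖s‖ ^ 2)
    (hWs : ∀ z s, β * ‖s‖ ^ 2 ≤ W (z + s) + W (z - s) - 2 * W z)
    (x t : EuclideanSpace ℝ (Fin d)) :
    φ (x + t) + φ (x - t) - 2 * φ x ≤ 
      (1 / 2) * (Real.sqrt (4 * α / β + ε ^ 2 * α ^ 2) - ε * α) * ‖t‖ ^ 2 := by
  set S : Set ℝ := {L | 0 ≤ L ∧ ∀ x t, φ (x + t) + φ (x - t) - 2 * φ x ≤ L * ‖t‖ ^ 2} with hS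
  have hne : S.Nonempty := by
    refine ⟨(0 + ε * β)⁻¹, by positivity, ?_⟩
    exact half_upper hε hW hψ le_rfl hβ hZ1 hWs (by simpa using half_convex hε hV hφ hZ2)
  have hbdd : BddBelow S := ⟨0, fun L hL => hL.1⟩
  have hmem : sInf S ∈ S := by
    refine IsClosed.csInf_mem ?_ hne hbdd
    simp only [hS, Set.ofPred_and, Set.ofPred_forall]
    refine IsClosed.inter (isClosed_le continuous_const continuous_id) ?_
    refine isClosed_iInter fun x => isClosed_iInter fun t => 
      isClosed_le continuous_const (by fun_prop)
  set L := sInf S with hL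
  have hnext : ((L + ε * α)⁻¹ + ε * β)⁻¹ ∈ S := by
    have hL0 : 0 ≤ L := hmem.1
    refine ⟨by positivity, ?_⟩
    refine half_upper hε hW hψ (by positivity) hβ hZ1 hWs ?_
    exact half_lower hε hV hφ hL0 hα hZ2 hVs hmem.2
  have hle : L ≤ ((L + ε * α)⁻¹ + ε * β)⁻¹ := csInf_le hbdd hnext
  have hL0 : 0 ≤ L := hmem.1
  have hq : L ^ 2 + ε * α * L ≤ α / β := by
    have hP : 0 < L + ε * α := by positivity
    have hQ : 0 < (L + ε * α)⁻¹ + ε * β := by positivity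
    have h1 : L * ((L + ε * α)⁻¹ + ε * β) ≤ 1 := by
      have := mul_le_mul_of_nonneg_right hle hQ.le
      rwa [inv_mul_cancel₀ hQ.ne'] at this
    have h2 := mul_le_mul_of_nonneg_right h1 hP.le
    have h3 : L * ((L + ε * α)⁻¹ + ε * β) * (L + ε * α) = L + ε * β * L * (L + ε * α) := by
      field_simp
    rw [h3] at h2
    rw [le_div_iff₀ hβ]
    refine le_of_mul_le_mul_left ?_ hε
    linarith
  have hfin : L ≤ (1 / 2) * (Real.sqrt (4 * α / β + ε ^ 2 * α ^ 2) - ε * α) := by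
    have : 2 * L + ε * α ≤ Real.sqrt (4 * α / β + ε ^ 2 * α ^ 2) := by
      apply Real.le_sqrt_of_sq_le
      have : 4 * α / β = 4 * (α / β) := by ring
      nlinarith
    linarith
  exact (hmem.2 x t).trans (by gcongr)

lemma second_diff_le_of_deriv {q q' q'' : ℝ → ℝ} {K : ℝ} (h1 : ∀ t, HasDerivAt q (q' t) t)
    (h2 : ∀ t, HasDerivAt q' (q'' t) t) (hK : ∀ t, q'' t ≤ K) :
    q 1 + q (-1) - 2 * q 0 ≤ K := by
  have ha : Antitone (fun t => q' t - K * t) := by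
    refine antitone_of_hasDerivAt_nonpos (f' := fun t => q'' t - K) (fun t => ?_) (fun t => ?_)
    · exact ((h2 t).fun_sub ((hasDerivAt_id' t).const_mul K)).congr_deriv (by ring)
    · simpa using hK t
  have hr : ∀ t, HasDerivAt (fun t => q t + q (-t) - K * t ^ 2) (q' t - q' (-t) - K * (2 * t)) t := by
    intro t
    have e1 : HasDerivAt (fun t => q (-t)) (-(q' (-t))) t := by
      exact ((h1 (-t)).comp t (hasDerivAt_neg t)).congr_deriv (by ring)
    have e2 : HasDerivAt (fun t => K * t ^ 2) (K * (2 * t)) t := by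
      simpa using (hasDerivAt_pow 2 t).const_mul K
    exact (((h1 t).fun_add e1).fun_sub e2).congr_deriv (by ring)
  have hanti : AntitoneOn (fun t => q t + q (-t) - K * t ^ 2) (Set.Ici 0) := by
    refine antitoneOn_of_hasDerivWithinAt_nonpos (convex_Ici 0)
      (fun t _ => (hr t).continuousAt.continuousWithinAt)
      (fun t _ => (hr t).hasDerivWithinAt) (fun t ht => ?_)
    simp only [interior_Ici, Set.mem_Ioi] at ht
    have := ha (show -t ≤ t by linarith)
    simp only at this
    linarith
  have := hanti (show (0:ℝ) ∈ Set.Ici 0 by simp) (show (1:ℝ) ∈ Set.Ici 0 by simp) zero_le_one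
  simp at this
  linarith

lemma deriv_le_of_second_diff {q q' : ℝ → ℝ} {c K : ℝ} (h1 : ∀ t, HasDerivAt q (q' t) t)
    (h2 : HasDerivAt q' c 0) (hK : ∀ t, q t + q (-t) - 2 * q 0 ≤ K * t ^ 2) :
    c ≤ K := by
  by_contra hlt
  push Not at hlt
  have hr : ∀ t, HasDerivAt (fun t => q t + q (-t) - K * t ^ 2) (q' t - q' (-t) - K * (2 * t)) t := by
    intro t
    have e1 : HasDerivAt (fun t => q (-t)) (-(q' (-t))) t := by
      exact ((h1 (-t)).comp t (hasDerivAt_neg t)).congr_deriv (by ring)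
    have e2 : HasDerivAt (fun t => K * t ^ 2) (K * (2 * t)) t := by
      simpa using (hasDerivAt_pow 2 t).const_mul K
    exact (((h1 t).fun_add e1).fun_sub e2).congr_deriv (by ring)
  have hd : deriv (fun t => q t + q (-t) - K * t ^ 2) = fun t => q' t - q' (-t) - K * (2 * t) :=
    funext fun t => (hr t).deriv
  have hdd : deriv (deriv (fun t => q t + q (-t) - K * t ^ 2)) 0 = 2 * (c - K) := by
    rw [hd]
    have e1 : HasDerivAt (fun t => q' (-t)) (-c) 0 := by
      have h2' : HasDerivAt q' c (-0) := by simpa using h2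
      exact (h2'.comp 0 (hasDerivAt_neg 0)).congr_deriv (by ring)
    have e2 : HasDerivAt (fun t : ℝ => K * (2 * t)) (K * 2) 0 := by
      simpa using ((hasDerivAt_id (0:ℝ)).const_mul 2).const_mul K
    rw [((h2.fun_sub e1).fun_sub e2).deriv]
    ring
  have hmin := isLocalMin_of_deriv_deriv_pos (f := fun t => q t + q (-t) - K * t ^ 2) (x₀ := 0)
    (by rw [hdd]; linarith) (by rw [hd]; simp) (hr 0).continuousAt
  have heq : (fun t => q t + q (-t) - K * t ^ 2) =ᶠ[nhds 0] fun _ => 2 * q 0 := by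
    filter_upwards [hmin] with t ht
    have := hK t
    simp at ht
    linarith
  have := heq.deriv.deriv_eq
  rw [hdd] at this
  simp at this
  linarith

section lines
variable {d : ℕ} {φ : EuclideanSpace ℝ (Fin d) → ℝ}

lemma line_deriv1 (h1 : Differentiable ℝ φ) (x v : EuclideanSpace ℝ (Fin d)) (t : ℝ) :
    HasDerivAt (fun t : ℝ => φ (x + t • v)) ⟪gradient φ (x + t • v), v⟫ t := by
  have e : HasDerivAt (fun t : ℝ => x + t • v) v t := by
    simpa using ((hasDerivAt_id t).smul_const v).const_add x
  have := (h1 (x + t • v)).hasGradientAt.hasFDerivAt.comp_hasDerivAt t e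
  exact this.congr_deriv (by rw [InnerProductSpace.toDual_apply_apply])

lemma line_deriv2 (h2 : Differentiable ℝ (fun x => gradient φ x))
    (x v : EuclideanSpace ℝ (Fin d)) (t : ℝ) :
    HasDerivAt (fun t : ℝ => ⟪gradient φ (x + t • v), v⟫)
      ⟪fderiv ℝ (fun z => gradient φ z) (x + t • v) v, v⟫ t := by
  have e : HasDerivAt (fun t : ℝ => x + t • v) v t := by
    simpa using ((hasDerivAt_id t).smul_const v).const_add x
  have := (h2 (x + t • v)).hasFDerivAt.comp_hasDerivAt t e
  simpa using this.inner ℝ (hasDerivAt_const t v)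

lemma second_diff_le (h1 : Differentiable ℝ φ) (h2 : Differentiable ℝ (fun x => gradient φ x))
    {K : ℝ} (hK : ∀ x v, ⟪fderiv ℝ (fun z => gradient φ z) x v, v⟫ ≤ K * ‖v‖ ^ 2) 
    (x s : EuclideanSpace ℝ (Fin d)) :
    φ (x + s) + φ (x - s) - 2 * φ x ≤ K * ‖s‖ ^ 2 := by
  have := second_diff_le_of_deriv (line_deriv1 h1 x s) (line_deriv2 h2 x s) (fun t => hK _ _)
  simpa [← sub_eq_add_neg] using this

lemma second_diff_ge (h1 : Differentiable ℝ φ) (h2 : Differentiable ℝ (fun x => gradient φ x))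
    {K : ℝ} (hK : ∀ x v, K * ‖v‖ ^ 2 ≤ ⟪fderiv ℝ (fun z => gradient φ z) x v, v⟫) 
    (x s : EuclideanSpace ℝ (Fin d)) :
    K * ‖s‖ ^ 2 ≤ φ (x + s) + φ (x - s) - 2 * φ x := by
  have := second_diff_le_of_deriv (fun t => (line_deriv1 h1 x s t).fun_neg)
    (fun t => (line_deriv2 h2 x s t).fun_neg) (fun t => neg_le_neg (hK _ _))
  simp [← sub_eq_add_neg] at this
  linarith

lemma hess_le (h1 : Differentiable ℝ φ) (h2 : Differentiable ℝ (fun x => gradient φ x))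
    {K : ℝ} (hK : ∀ x s, φ (x + s) + φ (x - s) - 2 * φ x ≤ K * ‖s‖ ^ 2)
    (x v : EuclideanSpace ℝ (Fin d)) :
    ⟪fderiv ℝ (fun z => gradient φ z) x v, v⟫ ≤ K * ‖v‖ ^ 2 := by
  have h0 := line_deriv2 h2 x v 0
  simp only [zero_smul, add_zero] at h0
  refine deriv_le_of_second_diff (line_deriv1 h1 x v) h0 (fun t => ?_)
  have := hK x (t • v)
  rw [norm_smul, mul_pow, Real.norm_eq_abs, sq_abs] at this
  simp only [neg_smul, ← sub_eq_add_neg, zero_smul, add_zero]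
  linarith

lemma hess_ge (h1 : Differentiable ℝ φ) (h2 : Differentiable ℝ (fun x => gradient φ x))
    (hK : ∀ x s, 0 ≤ φ (x + s) + φ (x - s) - 2 * φ x)
    (x v : EuclideanSpace ℝ (Fin d)) :
    0 ≤ ⟪fderiv ℝ (fun z => gradient φ z) x v, v⟫ := by
  have h0 := (line_deriv2 h2 x v 0).fun_neg
  simp only [zero_smul, add_zero] at h0
  have := deriv_le_of_second_diff (K := 0) (fun t => (line_deriv1 h1 x v t).fun_neg) h0 (fun t => ?_)
  · linarith
  have := hK x (t • v)
  simp only [neg_smul, ← sub_eq_add_neg, zero_smul, add_zero]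
  linarith

lemma hess_symm (h1 : Differentiable ℝ φ) (h2 : Differentiable ℝ (fun x => gradient φ x))
    (x v w : EuclideanSpace ℝ (Fin d)) :
    ⟪fderiv ℝ (fun z => gradient φ z) x v, w⟫ = ⟪fderiv ℝ (fun z => gradient φ z) x w, v⟫ := by
  have e1 : ∀ y, HasFDerivAt φ (innerSL ℝ (gradient φ y)) y := fun y => by
    exact (h1 y).hasGradientAt.hasFDerivAt
  have e2 := (innerSL ℝ (E := EuclideanSpace ℝ (Fin d))).hasFDerivAt.comp x (h2 x).hasFDerivAt
  have := second_derivative_symmetric e1 e2 v w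
  exact this

lemma hess_norm_le (h1 : Differentiable ℝ φ) (h2 : Differentiable ℝ (fun x => gradient φ x))
    {K : ℝ} (hK0 : 0 < K)
    (hK : ∀ x v, 0 ≤ ⟪fderiv ℝ (fun z => gradient φ z) x v, v⟫ ∧
      ⟪fderiv ℝ (fun z => gradient φ z) x v, v⟫ ≤ K * ‖v‖ ^ 2) (x : EuclideanSpace ℝ (Fin d)) :
    ‖fderiv ℝ (fun z => gradient φ z) x‖ ≤ K := by
  set A := fderiv ℝ (fun z => gradient φ z) x with hA
  refine A.opNorm_le_bound hK0.le fun v => ?_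
  have hsym : ⟪A (A v), v⟫ = ‖A v‖ ^ 2 := by
    rw [hA, hess_symm h1 h2, ← hA, real_inner_self_eq_norm_sq]
  have q1 := hK x v
  have q2 := hK x (A v)
  rw [← hA] at q1 q2
  -- positivity of the form at `K v - A v`
  have q3 := (hK x (K • v - A v)).1
  rw [← hA] at q3
  simp only [map_sub, map_smul, inner_sub_left, inner_sub_right, real_inner_smul_left,
    real_inner_smul_right, hsym, real_inner_self_eq_norm_sq] at q3
  have q4 : K * ‖A v‖ ^ 2 ≤ K * (K * ⟪A v, v⟫) := by linarith [q2.2]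
  have q5 : ‖A v‖ ^ 2 ≤ K * ⟪A v, v⟫ := le_of_mul_le_mul_left q4 hK0
  refine abs_le_of_sq_le_sq' ?_ (by positivity) |>.2
  nlinarith [mul_le_mul_of_nonneg_left q1.2 hK0.le]

lemma grad_lip (h2 : Differentiable ℝ (fun x => gradient φ x)) {K : ℝ} 
    (hK : ∀ x, ‖fderiv ℝ (fun z => gradient φ z) x‖ ≤ K) :
    LipschitzWith (Real.toNNReal K) (fun x => gradient φ x) := by
  refine lipschitzWith_of_nnnorm_fderiv_le h2 fun x => ?_
  rw [← norm_toNNReal]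
  exact Real.toNNReal_le_toNNReal (hK x)

end lines

section laplace
variable {d : ℕ} {G : Type*} [NormedAddCommGroup G] [NormedSpace ℝ G]

lemma lap_prod_integrable {ν : Measure (EuclideanSpace ℝ (Fin d))}
    {k : EuclideanSpace ℝ (Fin d) → ℝ}
    (hk : ∀ x, Integrable (fun y => Real.exp ⟪x, y⟫ * k y) ν) (c : ℝ) (s : Finset (Fin d)) :
    ∀ x, Integrable (fun y => Real.exp ⟪x, y⟫ *
      ((∏ i ∈ s, (Real.exp (c * y i) + Real.exp (-(c * y i)))) * k y)) ν := by
  classical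
  induction s using Finset.induction_on with
  | empty => simpa using hk
  | insert i s hi ih =>
    intro x
    have e := (ih (x + EuclideanSpace.single i c)).add (ih (x - EuclideanSpace.single i c))
    refine e.congr (.of_forall fun y => ?_)
    simp only [Pi.add_apply, inner_add_left, inner_sub_left, EuclideanSpace.inner_single_left,
      Finset.prod_insert hi]
    simp only [sub_eq_add_neg, Real.exp_add]
    simp
    ring

lemma exp_norm_le_prod (c : ℝ) (hc : 0 ≤ c) (y : EuclideanSpace ℝ (Fin d)) :
    Real.exp (c * ‖y‖) ≤ ∏ i, (Real.exp (c * y i) + Real.exp (-(c * y i))) := by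
  have h1 : ‖y‖ ≤ ∑ i, |y i| := by
    have : y = ∑ i, EuclideanSpace.single i (y i) := by
      ext j; simp [Finset.sum_apply, Pi.single_apply]
    calc ‖y‖ = ‖∑ i, EuclideanSpace.single i (y i)‖ := by rw [← this]
      _ ≤ ∑ i, ‖EuclideanSpace.single i (y i)‖ := norm_sum_le _ _
      _ = _ := by simp
  calc Real.exp (c * ‖y‖) ≤ Real.exp (∑ i, c * |y i|) := by
        rw [← Finset.mul_sum]; gcongr
    _ = ∏ i, Real.exp (c * |y i|) := Real.exp_sum _ _
    _ ≤ _ := by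
      refine Finset.prod_le_prod (fun _ _ => (Real.exp_pos _).le) fun i _ => ?_
      rcases abs_cases (y i) with ⟨h, _⟩ | ⟨h, _⟩ <;> rw [h]
      · linarith [Real.exp_pos (-(c * y i))]
      · rw [mul_neg]; linarith [Real.exp_pos (c * y i)]

lemma lap_norm_integrable {ν : Measure (EuclideanSpace ℝ (Fin d))}
    {k : EuclideanSpace ℝ (Fin d) → G} (hkm : AEStronglyMeasurable k ν)
    (hk : ∀ x, Integrable (fun y => Real.exp ⟪x, y⟫ * ‖k y‖) ν) (x : EuclideanSpace ℝ (Fin d)) :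
    Integrable (fun y => Real.exp ⟪x, y⟫ * (Real.exp (2 * ‖y‖) * ‖k y‖)) ν := by
  refine (lap_prod_integrable hk 2 Finset.univ x).mono ?_ ?_
  · have : AEStronglyMeasurable (fun y => ‖k y‖) ν := hkm.norm
    have h1 : AEStronglyMeasurable (fun y : EuclideanSpace ℝ (Fin d) => Real.exp ⟪x, y⟫) ν :=
      Continuous.aestronglyMeasurable (by fun_prop)
    have h2 : AEStronglyMeasurable (fun y : EuclideanSpace ℝ (Fin d) => Real.exp (2 * ‖y‖)) ν :=
      Continuous.aestronglyMeasurable (by fun_prop)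
    exact h1.mul (h2.mul this)
  · refine .of_forall fun y => ?_
    rw [Real.norm_of_nonneg (by positivity), Real.norm_of_nonneg (by positivity)]
    gcongr
    exact exp_norm_le_prod 2 (by norm_num) y

/-- The kernel of the derivative of the Laplace transform. -/
noncomputable def lapK (k : EuclideanSpace ℝ (Fin d) → G) (y : EuclideanSpace ℝ (Fin d)) :
    EuclideanSpace ℝ (Fin d) →L[ℝ] G :=
  (innerSL ℝ y).smulRight (k y)

lemma lapK_meas {ν : Measure (EuclideanSpace ℝ (Fin d))}
    {k : EuclideanSpace ℝ (Fin d) → G} (hkm : AEStronglyMeasurable k ν) :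
    AEStronglyMeasurable (lapK k) ν := by
  have h1 : AEStronglyMeasurable (fun y : EuclideanSpace ℝ (Fin d) => innerSL ℝ y) ν :=
    Continuous.aestronglyMeasurable (by fun_prop)
  have h2 : Continuous (fun p : (EuclideanSpace ℝ (Fin d) →L[ℝ] ℝ) × G => p.1.smulRight p.2) :=
    by fun_prop
  exact h2.comp_aestronglyMeasurable (h1.prodMk hkm)

lemma lapK_norm (k : EuclideanSpace ℝ (Fin d) → G) (y : EuclideanSpace ℝ (Fin d)) :
    ‖lapK k y‖ = ‖y‖ * ‖k y‖ := by
  rw [lapK, ContinuousLinearMap.norm_smulRight_apply, innerSL_apply_norm]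

lemma lapK_integrable {ν : Measure (EuclideanSpace ℝ (Fin d))}
    {k : EuclideanSpace ℝ (Fin d) → G} (hkm : AEStronglyMeasurable k ν)
    (hk : ∀ x, Integrable (fun y => Real.exp ⟪x, y⟫ * ‖k y‖) ν) (x : EuclideanSpace ℝ (Fin d)) :
    Integrable (fun y => Real.exp ⟪x, y⟫ * ‖lapK k y‖) ν := by
  refine (lap_norm_integrable hkm hk x).mono ?_ ?_
  · have h1 : AEStronglyMeasurable (fun y : EuclideanSpace ℝ (Fin d) => Real.exp ⟪x, y⟫) ν :=
      Continuous.aestronglyMeasurable (by fun_prop)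
    exact h1.mul (lapK_meas hkm).norm
  · refine .of_forall fun y => ?_
    rw [Real.norm_of_nonneg (by positivity), Real.norm_of_nonneg (by positivity), lapK_norm]
    gcongr
    linarith [Real.add_one_le_exp (2 * ‖y‖), norm_nonneg y]

lemma lap_hasFDerivAt {ν : Measure (EuclideanSpace ℝ (Fin d))}
    {k : EuclideanSpace ℝ (Fin d) → G} (hkm : AEStronglyMeasurable k ν)
    (hk : ∀ x, Integrable (fun y => Real.exp ⟪x, y⟫ * ‖k y‖) ν) (x : EuclideanSpace ℝ (Fin d)) :
    HasFDerivAt (fun x => ∫ y, Real.exp ⟪x, y⟫ • k y ∂ν) 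
      (∫ y, Real.exp ⟪x, y⟫ • lapK k y ∂ν) x := by
  have hexp : ∀ x, AEStronglyMeasurable (fun y : EuclideanSpace ℝ (Fin d) => Real.exp ⟪x, y⟫) ν :=
    fun x => Continuous.aestronglyMeasurable (by fun_prop)
  refine hasFDerivAt_integral_of_dominated_of_fderiv_le (𝕜 := ℝ) (s := Metric.ball x 1)
    (F' := fun x y => Real.exp ⟪x, y⟫ • lapK k y)
    (bound := fun y => Real.exp ⟪x, y⟫ * (Real.exp (2 * ‖y‖) * ‖k y‖))
    (Metric.ball_mem_nhds x one_pos) (.of_forall fun z => (hexp z).smul hkm) ?_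
    ((hexp x).smul (lapK_meas hkm)) ?_ (lap_norm_integrable hkm hk x) ?_
  · refine (hk x).mono ((hexp x).smul hkm) (.of_forall fun y => ?_)
    rw [norm_smul, Real.norm_of_nonneg (by positivity), Real.norm_of_nonneg (by positivity)]
  · refine .of_forall fun y z hz => ?_
    rw [norm_smul, Real.norm_of_nonneg (by positivity), lapK_norm]
    have hz' : ‖z - x‖ ≤ 1 := by rw [← dist_eq_norm]; exact (Metric.mem_ball.1 hz).le
    have h1 : ⟪z, y⟫ ≤ ⟪x, y⟫ + ‖y‖ := by
      have e : ⟪z, y⟫ = ⟪x, y⟫ + ⟪z - x, y⟫ := by rw [inner_sub_left]; ring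
      have := real_inner_le_norm (z - x) y
      nlinarith [norm_nonneg y]
    have h2 : ‖y‖ ≤ Real.exp ‖y‖ := by linarith [Real.add_one_le_exp ‖y‖]
    calc Real.exp ⟪z, y⟫ * (‖y‖ * ‖k y‖) ≤ Real.exp (⟪x, y⟫ + ‖y‖) * (Real.exp ‖y‖ * ‖k y‖) := by
          gcongr
      _ = _ := by rw [Real.exp_add, two_mul, Real.exp_add]; ring
  · refine .of_forall fun y z _ => ?_
    have h1 : HasFDerivAt (fun x : EuclideanSpace ℝ (Fin d) => ⟪x, y⟫) (innerSL ℝ y) z := by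
      have := (innerSL ℝ y).hasFDerivAt (x := z)
      refine this.congr_of_eventuallyEq (.of_forall fun w => ?_)
      simp [real_inner_comm]
    have h2 := h1.exp.smul_const (k y)
    refine h2.congr_fderiv ?_
    ext w
    simp [lapK, smul_smul]

lemma entPot_diff {ν : Measure (EuclideanSpace ℝ (Fin d))}
    {f g : EuclideanSpace ℝ (Fin d) → ℝ} {ε : ℝ} (hε : 0 < ε) (hg : Measurable g)
    (h : ∀ x, Integrable (fun y => Real.exp ((g y - ‖x - y‖ ^ 2 / 2) / ε)) ν ∧
      0 < ∫ y, Real.exp ((g y - ‖x - y‖ ^ 2 / 2) / ε) ∂ν ∧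
      f x = -ε * Real.log (∫ y, Real.exp ((g y - ‖x - y‖ ^ 2 / 2) / ε) ∂ν)) :
    Differentiable ℝ (entPot f) ∧ Differentiable ℝ (fun x => gradient (entPot f) x) := by
  set k : EuclideanSpace ℝ (Fin d) → ℝ := fun y => Real.exp (-entPot g y / ε) with hkdef
  have hkm : AEStronglyMeasurable k ν := by
    have : Measurable k := by
      simp only [hkdef, entPot]
      fun_prop
    exact this.aestronglyMeasurable
  have hpt : ∀ x y, Real.exp ⟪ε⁻¹ • x, y⟫ * k y =
      Real.exp (‖x‖ ^ 2 / 2 / ε) * Real.exp ((g y - ‖x - y‖ ^ 2 / 2) / ε) := by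
    intro x y
    rw [hkdef, ← Real.exp_add, ← Real.exp_add, entPot, norm_sub_sq_real, real_inner_smul_left]
    congr 1
    field_simp
    ring
  have hk : ∀ x, Integrable (fun y => Real.exp ⟪x, y⟫ * ‖k y‖) ν := by
    intro x
    have := (h (ε • x)).1.const_mul (Real.exp (‖ε • x‖ ^ 2 / 2 / ε))
    refine this.congr (.of_forall fun y => ?_)
    simp only
    rw [← hpt, smul_smul, inv_mul_cancel₀ hε.ne', one_smul, Real.norm_of_nonneg (Real.exp_pos _).le]
  set F : EuclideanSpace ℝ (Fin d) → ℝ := fun x => ∫ y, Real.exp ⟪x, y⟫ • k y ∂ν with hF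
  set F1 : EuclideanSpace ℝ (Fin d) → (EuclideanSpace ℝ (Fin d) →L[ℝ] ℝ) :=
    fun x => ∫ y, Real.exp ⟪x, y⟫ • lapK k y ∂ν with hF1
  have hd1 : ∀ x, HasFDerivAt F (F1 x) x := lap_hasFDerivAt hkm hk
  have hd2 : Differentiable ℝ F1 := fun x =>
    (lap_hasFDerivAt (lapK_meas hkm) (lapK_integrable hkm hk) x).differentiableAt
  have hFx : ∀ x, F (ε⁻¹ • x) = Real.exp (‖x‖ ^ 2 / 2 / ε) *
      ∫ y, Real.exp ((g y - ‖x - y‖ ^ 2 / 2) / ε) ∂ν := by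
    intro x
    simp only [hF, smul_eq_mul, hpt]
    rw [integral_const_mul]
  have hFpos : ∀ x, 0 < F (ε⁻¹ • x) := fun x => by
    rw [hFx]; exact mul_pos (Real.exp_pos _) (h x).2.1
  have hφ : entPot f = fun x => ε * Real.log (F (ε⁻¹ • x)) := by
    funext x
    rw [hFx, Real.log_mul (Real.exp_pos _).ne' (h x).2.1.ne', Real.log_exp, entPot, (h x).2.2]
    field_simp
    ring
  have hder : ∀ x, HasFDerivAt (entPot f) ((F (ε⁻¹ • x))⁻¹ • F1 (ε⁻¹ • x)) x := by
    intro x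
    rw [hφ]
    have e0 : HasFDerivAt (fun x : EuclideanSpace ℝ (Fin d) => ε⁻¹ • x)
        (ε⁻¹ • ContinuousLinearMap.id ℝ _) x := (hasFDerivAt_id x).const_smul ε⁻¹
    have e1 := (((hd1 (ε⁻¹ • x)).comp x e0).log (hFpos x).ne').const_mul ε
    refine e1.congr_fderiv ?_
    ext w
    simp
    field_simp
  refine ⟨fun x => (hder x).differentiableAt, ?_⟩
  have hgrad : (fun x => gradient (entPot f) x) = fun x =>
      (InnerProductSpace.toDual ℝ (EuclideanSpace ℝ (Fin d))).symm
        ((F (ε⁻¹ • x))⁻¹ • F1 (ε⁻¹ • x)) := by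
    funext x
    rw [gradient, (hder x).fderiv]
  rw [hgrad]
  have hFd : Differentiable ℝ F := fun x => (hd1 x).differentiableAt
  have hs : Differentiable ℝ (fun x : EuclideanSpace ℝ (Fin d) => ε⁻¹ • x) := by fun_prop
  have hin : Differentiable ℝ (fun x => (F (ε⁻¹ • x))⁻¹ • F1 (ε⁻¹ • x)) :=
    ((hFd.comp hs).inv (fun x => (hFpos x).ne')).smul (hd2.comp hs)
  exact (InnerProductSpace.toDual ℝ (EuclideanSpace ℝ (Fin d))).symm.toContinuousLinearEquiv.toContinuousLinearMap.differentiable.comp hin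

end laplace

lemma smooth_grad {d : ℕ} {V : EuclideanSpace ℝ (Fin d) → ℝ} (hV : ContDiff ℝ (⊤ : ℕ∞) V) :
    Differentiable ℝ V ∧ Differentiable ℝ (fun x => gradient V x) := by
  refine ⟨hV.differentiable (by simp), ?_⟩
  have h1 : Differentiable ℝ (fderiv ℝ V) := by
    have h2 : ContDiff ℝ 2 V := contDiff_infty.1 hV 2
    exact (h2.fderiv_right (m := 1) (by norm_num)).differentiable (by norm_num)
  exact (InnerProductSpace.toDual ℝ (EuclideanSpace ℝ (Fin d))).symm.differentiable.comp h1

/-- Chewi–Pooladian bounds: under (A1), for every `ε > 0` the entropic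
potential `φ_ε` is twice differentiable, its gradient is globally Lipschitz, and its
Hessian satisfies `0 ≼ ∇²φ_ε(x) ≼ (1/2)(√(4α/β + ε²α²) − εα) I`; in particular `∇φ_ε` is
`√(α/β)`-Lipschitz uniformly in `ε`. -/
theorem entropic_hessian_bounds {d : ℕ}
    (μ ν : Measure (EuclideanSpace ℝ (Fin d)))
    (V W : EuclideanSpace ℝ (Fin d) → ℝ) (α β : ℝ)
    (hA1 : AssumptionA1 μ ν V W α β)
    (ε : ℝ) (hε : 0 < ε)
    (f g : EuclideanSpace ℝ (Fin d) → ℝ)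
    (hfg : IsSchrodingerPair μ ν ε f g) :
    Differentiable ℝ (entPot f) ∧
    Differentiable ℝ (fun x => gradient (entPot f) x) ∧
    (∀ x v, 0 ≤ ⟪fderiv ℝ (fun z => gradient (entPot f) z) x v, v⟫ ∧
      ⟪fderiv ℝ (fun z => gradient (entPot f) z) x v, v⟫ ≤
        (1 / 2) * (Real.sqrt (4 * α / β + ε ^ 2 * α ^ 2) - ε * α) * ‖v‖ ^ 2) ∧
    LipschitzWith (Real.toNNReal ((1 / 2) * (Real.sqrt (4 * α / β + ε ^ 2 * α ^ 2) - ε * α)))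
      (fun x => gradient (entPot f) x) ∧
    LipschitzWith (Real.toNNReal (Real.sqrt (α / β))) (fun x => gradient (entPot f) x) := by
  obtain ⟨-, -, hμ, hν, hVs, hWs, hα, hβ, hVH, hWH⟩ := hA1
  obtain ⟨hf, hg, h1, h2⟩ := hfg
  have hVm : Measurable V := hVs.continuous.measurable
  have hWm : Measurable W := hWs.continuous.measurable
  have hφm : Measurable (entPot f) := by unfold entPot; fun_prop
  have hψm : Measurable (entPot g) := by unfold entPot; fun_prop
  obtain ⟨hV1, hV2⟩ := smooth_grad hVs
  obtain ⟨hW1, hW2⟩ := smooth_grad hWs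
  have hZ1 := half_lapZ hε hν hWm hg h1
  have hZ2 := half_lapZ hε hμ hVm hf h2
  obtain ⟨d1, d2⟩ := entPot_diff hε hg h1
  have hlow := half_convex hε hWm hψm hZ1
  have hup := second_diff_bound hε hα hβ hVm hWm hφm hψm hZ1 hZ2
    (second_diff_le hV1 hV2 hVH) (second_diff_ge hW1 hW2 hWH)
  have hH : ∀ x v, 0 ≤ ⟪fderiv ℝ (fun z => gradient (entPot f) z) x v, v⟫ ∧
      ⟪fderiv ℝ (fun z => gradient (entPot f) z) x v, v⟫ ≤
        (1 / 2) * (Real.sqrt (4 * α / β + ε ^ 2 * α ^ 2) - ε * α) * ‖v‖ ^ 2 :=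
    fun x v => ⟨hess_ge d1 d2 hlow x v, hess_le d1 d2 hup x v⟩
  have hab : 0 < α / β := div_pos hα hβ
  have hea : 0 < ε * α := mul_pos hε hα
  have hK0 : 0 < (1 / 2) * (Real.sqrt (4 * α / β + ε ^ 2 * α ^ 2) - ε * α) := by
    have : ε * α < Real.sqrt (4 * α / β + ε ^ 2 * α ^ 2) := by
      apply Real.lt_sqrt_of_sq_lt
      rw [mul_div_assoc]
      nlinarith
    linarith
  have hK1 : (1 / 2) * (Real.sqrt (4 * α / β + ε ^ 2 * α ^ 2) - ε * α) ≤ Real.sqrt (α / β) := by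
    have h0 := Real.sqrt_nonneg (α / β)
    have hs := Real.sq_sqrt hab.le
    have : Real.sqrt (4 * α / β + ε ^ 2 * α ^ 2) ≤ 2 * Real.sqrt (α / β) + ε * α := by
      rw [Real.sqrt_le_left (by positivity), mul_div_assoc]
      nlinarith [mul_nonneg h0 hea.le]
    linarith
  have hL := grad_lip d2 (hess_norm_le d1 d2 hK0 hH)
  exact ⟨d1, d2, hH, hL, hL.weaken (Real.toNNReal_le_toNNReal hK1)⟩
end

section
/- Let μ and ν be probability measures on ℝ^d with finite second moments, let φ_0 be a Brenier potential from μ to ν such that the Brenier map ∇φ_0 is globally L-Lipschitz, and set π_0 := the pushforward of μ by x ↦ (x, ∇φ_0(x)). For ε > 0, let (f_ε, g_ε) be a Schrödinger pair for (μ, ν, ε) with differentiable entropic potential φ_ε := |·|²/2 − f_ε, and let π_ε be the associated entropic optimal plan. Then ∫ |∇φ_ε − ∇φ_0|² dμ ≤ 2L ( ∫ (|x−y|²/2) dπ_ε(x,y) − ∫ (|x−y|²/2) dπ_0(x,y) ). -/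
open MeasureTheory Real
open scoped RealInnerProductSpace

/-- The entropic optimal plan `π_ε` associated to a Schrödinger pair `(f, g)`: its density
with respect to `μ ⊗ ν` is `(x,y) ↦ exp((f x + g y - ‖x-y‖²/2)/ε)`. -/
noncomputable def entPlan {d : ℕ} (μ ν : Measure (EuclideanSpace ℝ (Fin d))) (ε : ℝ)
    (f g : EuclideanSpace ℝ (Fin d) → ℝ) :
    Measure (EuclideanSpace ℝ (Fin d) × EuclideanSpace ℝ (Fin d)) :=
  (μ.prod ν).withDensity
    (fun p => ENNReal.ofReal (Real.exp ((f p.1 + g p.2 - ‖p.1 - p.2‖ ^ 2 / 2) / ε)))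

section
variable {E : Type*} [NormedAddCommGroup E] [InnerProductSpace ℝ E] [CompleteSpace E]

lemma line_hasDerivAt {φ : E → ℝ} (hd : Differentiable ℝ φ) (x v : E) (t : ℝ) :
    HasDerivAt (fun s : ℝ => φ (x + s • v)) ⟪gradient φ (x + t • v), v⟫ t := by
  have h1 : HasFDerivAt φ (innerSL ℝ (gradient φ (x + t • v))) (x + t • v) :=
    (hd (x + t • v)).hasGradientAt.hasFDerivAt
  have h2 : HasDerivAt (fun s : ℝ => x + s • v) v t := by
    simpa using ((hasDerivAt_id t).smul_const v).const_add x
  exact h1.comp_hasDerivAt t h2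

lemma tangent_le {φ : E → ℝ} (hc : ConvexOn ℝ Set.univ φ) (hd : Differentiable ℝ φ) (x z : E) :
    φ x + ⟪gradient φ x, z - x⟫ ≤ φ z := by
  have h1 := line_hasDerivAt hd x (z - x) 0
  have hcv : ConvexOn ℝ Set.univ (fun s : ℝ => φ (x + s • (z - x))) := by
    have := hc.comp_affineMap (AffineMap.lineMap x z : ℝ →ᵃ[ℝ] E)
    have e : (fun s : ℝ => φ (x + s • (z - x))) = φ ∘ (AffineMap.lineMap x z : ℝ →ᵃ[ℝ] E) := by
      funext s
      simp [AffineMap.lineMap_apply, add_comm]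
    rw [e]
    exact this
  have := hcv.le_slope_of_hasDerivAt (Set.mem_univ 0) (Set.mem_univ 1) one_pos h1
  rw [slope_def_field] at this
  simp only [zero_smul, add_zero, one_smul, add_sub_cancel, sub_zero, div_one] at this
  linarith

lemma descent {φ : E → ℝ} (hd : Differentiable ℝ φ) {L : NNReal}
    (hL : LipschitzWith L (fun x => gradient φ x)) (x z : E) :
    φ z ≤ φ x + ⟪gradient φ x, z - x⟫ + L / 2 * ‖z - x‖ ^ 2 := by
  set v := z - x with hv
  let h : ℝ → ℝ := fun t => φ (x + t • v) - t * ⟪gradient φ x, v⟫ - L / 2 * ‖v‖ ^ 2 * t ^ 2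
  have hder : ∀ t, HasDerivAt h
      (⟪gradient φ (x + t • v), v⟫ - ⟪gradient φ x, v⟫ - L * ‖v‖ ^ 2 * t) t := by
    intro t
    have h3 := ((line_hasDerivAt hd x v t).sub
      ((hasDerivAt_id t).mul_const ⟪gradient φ x, v⟫)).sub
      (((hasDerivAt_id t).pow 2).const_mul (L / 2 * ‖v‖ ^ 2))
    refine h3.congr_deriv ?_
    simp; ring
  have hanti : AntitoneOn h (Set.Icc 0 1) := by
    refine antitoneOn_of_deriv_nonpos (convex_Icc 0 1)
      (fun t _ => (hder t).continuousAt.continuousWithinAt)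
      (fun t _ => (hder t).differentiableAt.differentiableWithinAt) ?_
    intro t ht
    rw [interior_Icc] at ht
    rw [(hder t).deriv, ← inner_sub_left]
    have h1 := real_inner_le_norm (gradient φ (x + t • v) - gradient φ x) v
    have h2 := hL.norm_sub_le (x + t • v) x
    simp only [add_sub_cancel_left, norm_smul, Real.norm_eq_abs, abs_of_pos ht.1] at h2
    nlinarith [mul_le_mul_of_nonneg_right h2 (norm_nonneg v)]
  have := hanti (by simp) (by simp) (zero_le_one (α := ℝ))
  have e : x + v = z := by rw [hv]; abel
  simp only [h, zero_smul, add_zero, one_smul, zero_mul, one_mul, sub_zero, one_pow, mul_one, e,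
    zero_pow two_ne_zero, mul_zero] at this
  linarith

lemma cocoercive {φ : E → ℝ} (hc : ConvexOn ℝ Set.univ φ) (hd : Differentiable ℝ φ) {L : NNReal}
    (hL : LipschitzWith L (fun x => gradient φ x)) (x x' : E) :
    ‖gradient φ x' - gradient φ x‖ ^ 2 ≤
      2 * L * (φ x - φ x' - ⟪gradient φ x', x - x'⟫) := by
  rcases eq_or_ne L 0 with h0 | h0
  · have := hL.norm_sub_le x' x
    simp [h0] at this
    simp [h0, this]
  have hLp : (0 : ℝ) < L := by positivity
  set w := gradient φ x - gradient φ x' with hw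
  have h1 := descent hd hL x (x - (L : ℝ)⁻¹ • w)
  have h2 := tangent_le hc hd x' (x - (L : ℝ)⁻¹ • w)
  have e1 : x - (L : ℝ)⁻¹ • w - x = - ((L : ℝ)⁻¹ • w) := by abel
  have e2 : x - (L : ℝ)⁻¹ • w - x' = (x - x') - ((L : ℝ)⁻¹ • w) := by abel
  rw [e1, norm_neg, norm_smul, inner_neg_right, inner_smul_right] at h1
  rw [e2, inner_sub_right, inner_smul_right] at h2
  have e3 : ⟪gradient φ x, w⟫ - ⟪gradient φ x', w⟫ = ‖w‖ ^ 2 := by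
    rw [← inner_sub_left, ← hw, real_inner_self_eq_norm_sq]
  rw [norm_sub_rev, ← hw]
  have e4 : (L : ℝ) / 2 * (‖(L : ℝ)⁻¹‖ * ‖w‖) ^ 2 = (L : ℝ)⁻¹ * ‖w‖ ^ 2 / 2 := by
    rw [Real.norm_of_nonneg (by positivity)]; field_simp
  rw [e4] at h1
  have h3 : (L : ℝ)⁻¹ * ‖w‖ ^ 2 / 2 ≤ φ x - φ x' - ⟪gradient φ x', x - x'⟫ := by
    have : (L : ℝ)⁻¹ * ⟪gradient φ x, w⟫ - (L : ℝ)⁻¹ * ⟪gradient φ x', w⟫ = (L : ℝ)⁻¹ * ‖w‖ ^ 2 := by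
      rw [← e3]; ring
    linarith
  calc ‖w‖ ^ 2 = 2 * L * ((L : ℝ)⁻¹ * ‖w‖ ^ 2 / 2) := by field_simp
    _ ≤ _ := by gcongr

lemma gradient_eq_of_subgradient {φ : E → ℝ} {x m : E} (hd : DifferentiableAt ℝ φ x)
    (h : ∀ u, φ x + ⟪m, u⟫ ≤ φ (x + u)) : gradient φ x = m := by
  have h1 : HasFDerivAt φ (innerSL ℝ (gradient φ x)) x := hd.hasGradientAt.hasFDerivAt
  have h2 := h1.sub ((innerSL ℝ m).hasFDerivAt (x := x))
  have h3 : IsLocalMin (φ - ⇑(innerSL ℝ m)) x := by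
    refine Filter.Eventually.of_forall fun z => ?_
    have := h (z - x)
    simp [inner_sub_right] at this ⊢
    linarith
  have h4 := h3.hasFDerivAt_eq_zero h2
  rw [← sub_eq_zero, ← inner_self_eq_zero (𝕜 := ℝ)]
  have := DFunLike.congr_fun h4 (gradient φ x - m)
  rw [inner_sub_left]
  exact this
end

lemma dens_norm {α : Type*} [MeasurableSpace α] (ν : Measure α) (k : α → ℝ) (a ε : ℝ) (hε : 0 < ε)
    (hi : Integrable (fun y => Real.exp (k y / ε)) ν) (hp : 0 < ∫ y, Real.exp (k y / ε) ∂ν)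
    (ha : a = -ε * Real.log (∫ y, Real.exp (k y / ε) ∂ν)) :
    Integrable (fun y => Real.exp ((a + k y) / ε)) ν ∧ ∫ y, Real.exp ((a + k y) / ε) ∂ν = 1 := by
  have e : (fun y => Real.exp ((a + k y) / ε)) = fun y => Real.exp (a / ε) * Real.exp (k y / ε) := by
    funext y
    rw [← Real.exp_add, add_div]
  rw [e]
  refine ⟨hi.const_mul _, ?_⟩
  rw [integral_const_mul, ha]
  have : -ε * Real.log (∫ y, Real.exp (k y / ε) ∂ν) / ε =
      - Real.log (∫ y, Real.exp (k y / ε) ∂ν) := by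
    field_simp
  rw [this, Real.exp_neg, Real.exp_log hp, inv_mul_cancel₀ hp.ne']

lemma lint_one {α : Type*} [MeasurableSpace α] {ν : Measure α} {k : α → ℝ}
    (h : Integrable (fun y => Real.exp (k y)) ν ∧ ∫ y, Real.exp (k y) ∂ν = 1) :
    ∫⁻ y, ENNReal.ofReal (Real.exp (k y)) ∂ν = 1 := by
  rw [← ofReal_integral_eq_lintegral_ofReal h.1
    (Filter.Eventually.of_forall fun y => (Real.exp_pos _).le), h.2]
  simp

set_option linter.unusedSectionVars false

section
variable {d : ℕ} {μ ν : Measure (EuclideanSpace ℝ (Fin d))}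
    [IsProbabilityMeasure μ] [IsProbabilityMeasure ν] {ε : ℝ}
    {f g : EuclideanSpace ℝ (Fin d) → ℝ}

lemma dens_right (hε : 0 < ε) (hfg : IsSchrodingerPair μ ν ε f g) (x : EuclideanSpace ℝ (Fin d)) :
    Integrable (fun y => Real.exp ((f x + g y - ‖x - y‖ ^ 2 / 2) / ε)) ν ∧
      ∫ y, Real.exp ((f x + g y - ‖x - y‖ ^ 2 / 2) / ε) ∂ν = 1 := by
  obtain ⟨h1, h2, h3⟩ := hfg.2.2.1 x
  have := dens_norm ν (fun y => g y - ‖x - y‖ ^ 2 / 2) (f x) ε hε h1 h2 h3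
  simpa only [add_sub_assoc] using this

lemma dens_left (hε : 0 < ε) (hfg : IsSchrodingerPair μ ν ε f g) (y : EuclideanSpace ℝ (Fin d)) :
    Integrable (fun x => Real.exp ((f x + g y - ‖x - y‖ ^ 2 / 2) / ε)) μ ∧
      ∫ x, Real.exp ((f x + g y - ‖x - y‖ ^ 2 / 2) / ε) ∂μ = 1 := by
  obtain ⟨h1, h2, h3⟩ := hfg.2.2.2 y
  have := dens_norm μ (fun x => f x - ‖y - x‖ ^ 2 / 2) (g y) ε hε h1 h2 h3
  have e : ∀ x, f x + g y - ‖x - y‖ ^ 2 / 2 = g y + (f x - ‖y - x‖ ^ 2 / 2) := by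
    intro x
    rw [norm_sub_rev]
    ring
  simpa only [e] using this

lemma dens_meas (hfg : IsSchrodingerPair μ ν ε f g) :
    Measurable (fun p : EuclideanSpace ℝ (Fin d) × EuclideanSpace ℝ (Fin d) =>
      ENNReal.ofReal (Real.exp ((f p.1 + g p.2 - ‖p.1 - p.2‖ ^ 2 / 2) / ε))) := by
  have h1 := hfg.1
  have h2 := hfg.2.1
  fun_prop

lemma entPlan_fst (hε : 0 < ε) (hfg : IsSchrodingerPair μ ν ε f g) :
    (entPlan μ ν ε f g).map Prod.fst = μ := by
  ext s hs
  have hm := dens_meas hfg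
  rw [Measure.map_apply measurable_fst hs, entPlan, withDensity_apply _ (measurable_fst hs),
    ← lintegral_indicator (measurable_fst hs),
    lintegral_prod _ (hm.indicator (measurable_fst hs)).aemeasurable]
  rw [← lintegral_indicator_one hs]
  congr 1
  funext x
  by_cases hx : x ∈ s
  · simpa [Set.indicator, hx] using lint_one (dens_right hε hfg x)
  · simp [Set.indicator, hx]

lemma entPlan_snd (hε : 0 < ε) (hfg : IsSchrodingerPair μ ν ε f g) :
    (entPlan μ ν ε f g).map Prod.snd = ν := by
  ext s hs
  have hm := dens_meas hfg
  rw [Measure.map_apply measurable_snd hs, entPlan, withDensity_apply _ (measurable_snd hs),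
    ← lintegral_indicator (measurable_snd hs),
    lintegral_prod_symm _ (hm.indicator (measurable_snd hs)).aemeasurable]
  rw [← lintegral_indicator_one hs]
  congr 1
  funext x
  by_cases hx : x ∈ s
  · simpa [Set.indicator, hx] using lint_one (dens_left hε hfg x)
  · simp [Set.indicator, hx]

lemma key_jensen (hε : 0 < ε) (hfg : IsSchrodingerPair μ ν ε f g)
    (hdiff : Differentiable ℝ (entPot f)) (x t : EuclideanSpace ℝ (Fin d))
    (hint : Integrable (fun y => Real.exp ((f x + g y - ‖x - y‖ ^ 2 / 2) / ε) * ‖y - t‖ ^ 2) ν) :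
    ‖gradient (entPot f) x - t‖ ^ 2 ≤
      ∫ y, Real.exp ((f x + g y - ‖x - y‖ ^ 2 / 2) / ε) * ‖y - t‖ ^ 2 ∂ν := by
  obtain ⟨hr, hr1⟩ := dens_right hε hfg x
  set ρ : EuclideanSpace ℝ (Fin d) → ℝ := fun y =>
    Real.exp ((f x + g y - ‖x - y‖ ^ 2 / 2) / ε) with hρ
  have hρpos : ∀ y, 0 < ρ y := fun y => Real.exp_pos _
  change Integrable (fun y => ρ y * ‖y - t‖ ^ 2) ν at hint
  change _ ≤ ∫ y, ρ y * ‖y - t‖ ^ 2 ∂ν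
  change ∫ y, ρ y ∂ν = 1 at hr1
  have hy : Integrable (fun y => ρ y • y) ν := by
    refine (hint.add (hr.const_mul (1 + ‖t‖))).mono'
      (hr.aestronglyMeasurable.smul aestronglyMeasurable_id)
      (Filter.Eventually.of_forall fun y => ?_)
    have h1 : ‖y‖ ≤ ‖y - t‖ + ‖t‖ := by simpa using norm_add_le (y - t) t
    have h2 : ‖y‖ ≤ ‖y - t‖ ^ 2 + (1 + ‖t‖) := by
      nlinarith [sq_nonneg (‖y - t‖ - 1), norm_nonneg (y - t)]
    rw [norm_smul, Real.norm_of_nonneg (hρpos y).le]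
    have := mul_le_mul_of_nonneg_left h2 (hρpos y).le
    simp only [Pi.add_apply]
    linarith
  set m := ∫ y, ρ y • y ∂ν with hm
  have hin : ∀ v, Integrable (fun y => ρ y * ⟪v, y⟫) ν ∧ ∫ y, ρ y * ⟪v, y⟫ ∂ν = ⟪v, m⟫ := by
    intro v
    have h1 := hy.const_inner (𝕜 := ℝ) v
    have h2 := integral_inner (𝕜 := ℝ) hy v
    simp only [inner_smul_right] at h1 h2
    exact ⟨h1, h2⟩
  have hgrad : gradient (entPot f) x = m := by
    refine gradient_eq_of_subgradient (hdiff x) fun u => ?_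
    obtain ⟨hs, hs1⟩ := dens_right hε hfg (x + u)
    set κ := f (x + u) - f x - ⟪x, u⟫ - ‖u‖ ^ 2 / 2 with hκ
    have hle : ∫ y, (ρ y * (1 + κ / ε) + ε⁻¹ * (ρ y * ⟪u, y⟫)) ∂ν ≤ 1 := by
      refine le_of_le_of_eq
        (integral_mono ((hr.mul_const _).add ((hin u).1.const_mul _)) hs fun y => ?_) hs1
      have e : Real.exp ((f (x + u) + g y - ‖x + u - y‖ ^ 2 / 2) / ε) =
          ρ y * Real.exp ((κ + ⟪u, y⟫) / ε) := by
        simp only [hρ]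
        rw [← Real.exp_add, ← add_div]
        congr 2
        have : x + u - y = (x - y) + u := by abel
        rw [this, norm_add_sq_real, inner_sub_left, real_inner_comm u y, hκ]
        ring
      simp only [e]
      have h3 := Real.add_one_le_exp ((κ + ⟪u, y⟫) / ε)
      have h4 := mul_le_mul_of_nonneg_left h3 (hρpos y).le
      refine le_trans (le_of_eq ?_) h4
      field_simp
      ring
    rw [integral_add (hr.mul_const _) ((hin u).1.const_mul _), integral_mul_const,
      integral_const_mul, (hin u).2, hr1] at hle
    have h5 : (κ + ⟪u, m⟫) / ε ≤ 0 := by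
      rw [add_div, div_eq_inv_mul ⟪u, m⟫]
      linarith
    have h6 : κ + ⟪u, m⟫ ≤ 0 := by
      by_contra hc
      exact absurd h5 (not_le.mpr (div_pos (not_le.mp hc) hε))
    rw [real_inner_comm]
    simp only [entPot]
    rw [norm_add_sq_real]
    linarith
  rw [hgrad]
  have h7 : ∫ y, (ρ y * (‖m - t‖ ^ 2 - 2 * ⟪m - t, m⟫) + 2 * (ρ y * ⟪m - t, y⟫)) ∂ν ≤
      ∫ y, ρ y * ‖y - t‖ ^ 2 ∂ν := by
    refine integral_mono ((hr.mul_const _).add ((hin _).1.const_mul _)) hint fun y => ?_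
    have e : y - t = (m - t) + (y - m) := by abel
    have h8 : ‖m - t‖ ^ 2 - 2 * ⟪m - t, m⟫ + 2 * ⟪m - t, y⟫ ≤ ‖y - t‖ ^ 2 := by
      rw [e, norm_add_sq_real, inner_sub_right (m - t) y m]
      nlinarith [sq_nonneg ‖y - m‖]
    have := mul_le_mul_of_nonneg_left h8 (hρpos y).le
    simp only
    linarith
  rw [integral_add (hr.mul_const _) ((hin _).1.const_mul _), integral_mul_const,
      integral_const_mul, (hin _).2, hr1] at h7
  linarith
end


section
variable {d : ℕ}

lemma conj_exists {φ : EuclideanSpace ℝ (Fin d) → ℝ} (hc : ConvexOn ℝ Set.univ φ)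
    (hd : Differentiable ℝ φ) :
    ∃ ψ : EuclideanSpace ℝ (Fin d) → ℝ, Measurable ψ ∧
      ∀ x, ψ (gradient φ x) = ⟪x, gradient φ x⟫ - φ x := by
  let u := TopologicalSpace.denseSeq (EuclideanSpace ℝ (Fin d))
  refine ⟨fun y => ⨆ n, (⟪u n, y⟫ - φ (u n)), Measurable.iSup fun n => by fun_prop, fun x => ?_⟩
  have hub : ∀ z, ⟪z, gradient φ x⟫ - φ z ≤ ⟪x, gradient φ x⟫ - φ x := by
    intro z
    have := tangent_le hc hd x z
    rw [real_inner_comm, inner_sub_left] at this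
    linarith
  refine le_antisymm (ciSup_le fun n => hub _) ?_
  have hbdd : BddAbove (Set.range fun n => ⟪u n, gradient φ x⟫ - φ (u n)) :=
    ⟨_, by rintro _ ⟨n, rfl⟩; exact hub _⟩
  have hcl : IsClosed {z | ⟪z, gradient φ x⟫ - φ z ≤ ⨆ n, (⟪u n, gradient φ x⟫ - φ (u n))} :=
    isClosed_le (by have := hd.continuous; fun_prop) continuous_const
  have hall := (TopologicalSpace.denseRange_denseSeq (EuclideanSpace ℝ (Fin d))).closure_range
  have : closure (Set.range u) ⊆ {z | ⟪z, gradient φ x⟫ - φ z ≤ ⨆ n, (⟪u n, gradient φ x⟫ - φ (u n))} := by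
    refine hcl.closure_subset_iff.mpr ?_
    rintro _ ⟨n, rfl⟩
    exact le_ciSup hbdd n
  exact this (by rw [hall]; trivial)
end

set_option maxHeartbeats 1000000

/-- the squared `L²(μ)` distance between the entropic Brenier map and the
Brenier map is bounded by `2L` times the difference of the transport costs of `π_ε`
and `π₀`. -/
theorem gradient_L2_le_cost_difference {d : ℕ}
    (μ ν : Measure (EuclideanSpace ℝ (Fin d)))
    [IsProbabilityMeasure μ] [IsProbabilityMeasure ν]
    (hμ2 : Integrable (fun x => ‖x‖ ^ 2) μ) (hν2 : Integrable (fun y => ‖y‖ ^ 2) ν)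
    (φ₀ : EuclideanSpace ℝ (Fin d) → ℝ) (hφ₀ : IsBrenierPotential μ ν φ₀)
    (L : NNReal) (hLip : LipschitzWith L (fun x => gradient φ₀ x))
    (ε : ℝ) (hε : 0 < ε)
    (f g : EuclideanSpace ℝ (Fin d) → ℝ)
    (hfg : IsSchrodingerPair μ ν ε f g)
    (hdiff : Differentiable ℝ (entPot f)) :
    (∫ x, ‖gradient (entPot f) x - gradient φ₀ x‖ ^ 2 ∂μ) ≤
      2 * (L : ℝ) *
        ((∫ p, ‖p.1 - p.2‖ ^ 2 / 2 ∂(entPlan μ ν ε f g)) -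
          ∫ p, ‖p.1 - p.2‖ ^ 2 / 2
            ∂(Measure.map (fun x => (x, gradient φ₀ x)) μ)) := by
  obtain ⟨hc, hd, hpush⟩ := hφ₀
  have hTc : Continuous (fun x => gradient φ₀ x) := hLip.continuous
  set T : EuclideanSpace ℝ (Fin d) → EuclideanSpace ℝ (Fin d) := fun x => gradient φ₀ x with hT
  have hTm : Measurable T := hTc.measurable
  obtain ⟨ψ, hψm, hψ⟩ := conj_exists hc hd
  set Pl := entPlan μ ν ε f g with hPl
  have hfst : Pl.map Prod.fst = μ := entPlan_fst hε hfg
  have hsnd : Pl.map Prod.snd = ν := entPlan_snd hε hfg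
  have i1 : ∀ {F : EuclideanSpace ℝ (Fin d) → ℝ}, Integrable F μ →
      Integrable (fun p : EuclideanSpace ℝ (Fin d) × EuclideanSpace ℝ (Fin d) => F p.1) Pl ∧
        ∫ p, F p.1 ∂Pl = ∫ x, F x ∂μ := by
    intro F hF
    rw [← hfst] at hF
    refine ⟨hF.comp_measurable measurable_fst, ?_⟩
    conv_rhs => rw [← hfst]
    exact (integral_map measurable_fst.aemeasurable hF.aestronglyMeasurable).symm
  have i2 : ∀ {F : EuclideanSpace ℝ (Fin d) → ℝ}, Integrable F ν →
      Integrable (fun p : EuclideanSpace ℝ (Fin d) × EuclideanSpace ℝ (Fin d) => F p.2) Pl ∧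
        ∫ p, F p.2 ∂Pl = ∫ x, F x ∂ν := by
    intro F hF
    rw [← hsnd] at hF
    refine ⟨hF.comp_measurable measurable_snd, ?_⟩
    conv_rhs => rw [← hsnd]
    exact (integral_map measurable_snd.aemeasurable hF.aestronglyMeasurable).symm
  -- integrability facts
  have hT2 : Integrable (fun x => ‖T x‖ ^ 2) μ := by
    rw [← hpush] at hν2
    exact hν2.comp_measurable hTm
  have hφi : Integrable φ₀ μ := by
    refine (((integrable_const (|φ₀ 0| + ‖T 0‖ ^ 2)).add
      (hμ2.const_mul (1 + (L : ℝ) / 2)))).mono' hd.continuous.aestronglyMeasurable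
      (Filter.Eventually.of_forall fun z => ?_)
    have h1 := descent hd hLip 0 z
    have h2 := tangent_le hc hd 0 z
    have h3 := abs_real_inner_le_norm (gradient φ₀ 0) (z - 0)
    simp only [sub_zero] at h1 h2 h3
    have h4 : ‖gradient φ₀ 0‖ * ‖z‖ ≤ ‖T 0‖ ^ 2 + ‖z‖ ^ 2 := by
      simp only [hT]
      nlinarith [sq_nonneg (‖gradient φ₀ 0‖ - ‖z‖), sq_nonneg ‖gradient φ₀ 0‖, sq_nonneg ‖z‖]
    have h5 := abs_le.mp h3
    have h6 : 0 ≤ (L : ℝ) / 2 * ‖z‖ ^ 2 := by positivity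
    simp only [Pi.add_apply, Real.norm_eq_abs]
    rw [abs_le]
    constructor
    · linarith [neg_abs_le (φ₀ 0), h5.1]
    · linarith [le_abs_self (φ₀ 0), h5.2]
  have hxT : Integrable (fun x => ⟪x, T x⟫) μ := by
    refine (hμ2.add hT2).mono' (by fun_prop) (Filter.Eventually.of_forall fun x => ?_)
    have h3 := abs_real_inner_le_norm x (T x)
    simp only [Pi.add_apply, Real.norm_eq_abs]
    nlinarith [sq_nonneg (‖x‖ - ‖T x‖), sq_nonneg ‖x‖, sq_nonneg ‖T x‖]
  have hψT : Integrable (fun x => ψ (T x)) μ := by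
    simp only [hT, hψ]
    exact hxT.sub hφi
  have hψi : Integrable ψ ν := by
    rw [← hpush]
    exact (integrable_map_measure hψm.aestronglyMeasurable hTm.aemeasurable).mpr hψT
  have hψe : ∫ y, ψ y ∂ν = ∫ x, ⟪x, T x⟫ ∂μ - ∫ x, φ₀ x ∂μ := by
    rw [← integral_sub hxT hφi, ← hpush, integral_map hTm.aemeasurable hψm.aestronglyMeasurable]
    simp only [hT, hψ]
  have hν2e : ∫ y, ‖y‖ ^ 2 ∂ν = ∫ x, ‖T x‖ ^ 2 ∂μ := by
    rw [← hpush, integral_map hTm.aemeasurable (by fun_prop)]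
  have hcost : Integrable (fun p : EuclideanSpace ℝ (Fin d) × EuclideanSpace ℝ (Fin d) =>
      ‖p.1 - p.2‖ ^ 2 / 2) Pl := by
    refine ((i1 hμ2).1.add (i2 hν2).1).mono' (by fun_prop) (Filter.Eventually.of_forall fun p => ?_)
    have h1 := norm_sub_le p.1 p.2
    rw [Real.norm_of_nonneg (by positivity)]
    simp only [Pi.add_apply]
    nlinarith [sq_nonneg (‖p.1‖ - ‖p.2‖), norm_nonneg (p.1 - p.2)]
  -- the duality gap
  have hA := i1 (F := fun x => φ₀ x - ‖x‖ ^ 2 / 2) (hφi.sub (hμ2.div_const 2))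
  have hB := i2 (F := fun y => ψ y - ‖y‖ ^ 2 / 2) (hψi.sub (hν2.div_const 2))
  have hCA : Integrable (fun p : EuclideanSpace ℝ (Fin d) × EuclideanSpace ℝ (Fin d) =>
      ‖p.1 - p.2‖ ^ 2 / 2 + (φ₀ p.1 - ‖p.1‖ ^ 2 / 2)) Pl := hcost.add hA.1
  have hDi : Integrable (fun p : EuclideanSpace ℝ (Fin d) × EuclideanSpace ℝ (Fin d) =>
      ‖p.1 - p.2‖ ^ 2 / 2 + (φ₀ p.1 - ‖p.1‖ ^ 2 / 2) + (ψ p.2 - ‖p.2‖ ^ 2 / 2)) Pl := hCA.add hB.1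
  have hD : ∫ p, (‖p.1 - p.2‖ ^ 2 / 2 + (φ₀ p.1 - ‖p.1‖ ^ 2 / 2) +
      (ψ p.2 - ‖p.2‖ ^ 2 / 2)) ∂Pl = (∫ p, ‖p.1 - p.2‖ ^ 2 / 2 ∂Pl) -
        ∫ p, ‖p.1 - p.2‖ ^ 2 / 2 ∂(Measure.map (fun x => (x, T x)) μ) := by
    have e3 : ∫ p, ‖p.1 - p.2‖ ^ 2 / 2 ∂(Measure.map (fun x => (x, T x)) μ) =
        ((∫ x, ‖x‖ ^ 2 ∂μ) / 2 + (∫ x, ‖T x‖ ^ 2 ∂μ) / 2) - ∫ x, ⟪x, T x⟫ ∂μ := by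
      have hs : Integrable (fun x => ‖x‖ ^ 2 / 2 + ‖T x‖ ^ 2 / 2) μ :=
        (hμ2.div_const 2).add (hT2.div_const 2)
      rw [integral_map (by fun_prop) (by fun_prop), ← integral_div, ← integral_div,
        ← integral_add (hμ2.div_const 2) (hT2.div_const 2), ← integral_sub hs hxT]
      congr 1
      funext x
      rw [norm_sub_sq_real]
      ring
    have e4 : ∫ x, (φ₀ x - ‖x‖ ^ 2 / 2) ∂μ = ∫ x, φ₀ x ∂μ - (∫ x, ‖x‖ ^ 2 ∂μ) / 2 := by
      rw [← integral_div]
      exact integral_sub hφi (hμ2.div_const 2)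
    have e5 : ∫ x, (ψ x - ‖x‖ ^ 2 / 2) ∂ν = ∫ x, ψ x ∂ν - (∫ x, ‖x‖ ^ 2 ∂ν) / 2 := by
      rw [← integral_div]
      exact integral_sub hψi (hν2.div_const 2)
    rw [integral_add hCA hB.1, integral_add hcost hA.1, hA.2, hB.2, e3, e4, e5, hν2e, hψe]
    ring
  rw [← hD]
  -- the pointwise bound
  have hrange : ∀ᵐ p ∂Pl, p.2 ∈ Set.range T := by
    have hms : MeasurableSet (Set.range T) := by
      obtain ⟨K, hK, hKe⟩ := isSigmaCompact_range hTc
      rw [← hKe]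
      exact MeasurableSet.iUnion fun n => (hK n).measurableSet
    have h1 := ae_map_mem_range T hms μ
    rw [hpush, ← hsnd] at h1
    exact ae_of_ae_map measurable_snd.aemeasurable h1
  have hpt : ∀ᵐ p ∂Pl, ‖p.2 - T p.1‖ ^ 2 ≤ 2 * (L : ℝ) * (‖p.1 - p.2‖ ^ 2 / 2 +
      (φ₀ p.1 - ‖p.1‖ ^ 2 / 2) + (ψ p.2 - ‖p.2‖ ^ 2 / 2)) := by
    filter_upwards [hrange] with p hp
    obtain ⟨x', hx'⟩ := hp
    have h1 := cocoercive hc hd hLip p.1 x'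
    have h2 := hψ x'
    change T x' = p.2 at hx'
    change ‖T x' - T p.1‖ ^ 2 ≤ 2 * L * (φ₀ p.1 - φ₀ x' - ⟪T x', p.1 - x'⟫) at h1
    change ψ (T x') = ⟪x', T x'⟫ - φ₀ x' at h2
    rw [hx'] at h1 h2
    refine h1.trans (le_of_eq ?_)
    rw [h2, norm_sub_sq_real, inner_sub_right, real_inner_comm p.1, real_inner_comm x']
    ring
  have hGi : Integrable (fun p : EuclideanSpace ℝ (Fin d) × EuclideanSpace ℝ (Fin d) =>
      ‖p.2 - T p.1‖ ^ 2) Pl := by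
    refine (hDi.const_mul (2 * (L : ℝ))).mono' (by fun_prop) ?_
    filter_upwards [hpt] with p hp
    rw [Real.norm_of_nonneg (by positivity)]
    exact hp
  rw [← integral_const_mul]
  refine le_trans ?_ (integral_mono_ae hGi (hDi.const_mul (2 * (L : ℝ))) hpt)
  have hm := dens_meas hfg
  rw [hPl, entPlan] at hGi ⊢
  rw [integrable_withDensity_iff_integrable_smul' hm (by simp)] at hGi
  rw [integral_withDensity_eq_integral_toReal_smul hm (by simp)]
  simp only [ENNReal.toReal_ofReal (Real.exp_pos _).le, smul_eq_mul] at hGi ⊢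
  rw [integral_prod _ hGi]
  refine integral_mono_of_nonneg (Filter.Eventually.of_forall fun x => by positivity)
    hGi.integral_prod_left ?_
  filter_upwards [hGi.prod_right_ae] with x hx
  exact key_jensen hε hfg hdiff x (T x) hx
end
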